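/- arXiv:1309.7734 — 6 statements merged into one kernel-verified Lean document; each statement's English description precedes it below -/
import Mathlib

section
/- Let r ≥ 2 be an even integer with gcd(r,3)=1, n = 3r, and let d = 3^r + 2 or d = 3^{2r} + 2. As z ranges over GF(3^n), the Weil sum S_d(z) takes the value 0 exactly (3^{3r}+3^{2r})/2 - 3^r times, the value 3^{2r} exactly 3^r times, the value 3^{3r/2} exactly (3^{3r-1}-3^{2r-1})/2 times, the value -3^{3r/2} exactly (3^{3r-1}-3^{2r-1})/2 times, the value 2·3^{3r/2} exactly (3^{3r-1}-3^{2r-1})/4 times, and the value -2·3^{3r/2} exactly (3^{3r-1}-3^{2r-1})/4 times. -/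
noncomputable instance (p n : ℕ) [Fact p.Prime] : Fintype (GaloisField p n) :=
  Fintype.ofFinite _

/-- The Weil sum `S_d(z) = ∑_{x ∈ GF(3^n)} ω^{Tr(zx - x^d)}`, where `ω = e^{2πi/3}`
and `Tr` is the absolute trace from `GF(3^n)` to `GF(3)`. -/
noncomputable def ternaryWeilSum (n d : ℕ) (z : GaloisField 3 n) : ℂ :=
  ∑ x : GaloisField 3 n,
    Complex.exp (2 * Real.pi * Complex.I / 3) ^
      (Algebra.trace (ZMod 3) (GaloisField 3 n) (z * x - x ^ d)).val


noncomputable section TCC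

open Finset

/-- The primitive cube root of unity. -/
def tcOm : ℂ := Complex.exp (2 * Real.pi * Complex.I / 3)

lemma tcOm_prim : IsPrimitiveRoot tcOm 3 := by
  have := Complex.isPrimitiveRoot_exp 3 (by norm_num)
  simpa [tcOm] using this

def tcE : AddChar (ZMod 3) ℂ := AddChar.zmodChar 3 tcOm_prim.pow_eq_one

lemma tcE_apply (t : ZMod 3) : tcE t = tcOm ^ t.val := rfl

lemma tcOm_sum : 1 + tcOm + tcOm ^ 2 = 0 := by
  have := tcOm_prim.geom_sum_eq_zero (by norm_num)
  simpa [Finset.sum_range_succ] using this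

lemma tcE_add_neg (t : ZMod 3) : tcE t + tcE (-t) = if t = 0 then 2 else -1 := by
  have h := tcOm_sum
  fin_cases t
  · change tcOm ^ 0 + tcOm ^ 0 = 2
    norm_num
  · change tcOm ^ 1 + tcOm ^ 2 = -1
    linear_combination h
  · change tcOm ^ 2 + tcOm ^ 1 = -1
    linear_combination h

section
variable (L : Type*) [Field L] [Fintype L] [DecidableEq L] [Algebra (ZMod 3) L]

def tcPsi : AddChar L ℂ := tcE.compAddMonoidHom (Algebra.trace (ZMod 3) L).toAddMonoidHom

variable {L}

omit [Fintype L] [DecidableEq L] in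
lemma tcPsi_apply (x : L) : tcPsi L x = tcE (Algebra.trace (ZMod 3) L x) := rfl

omit [DecidableEq L] in
lemma tc_trace_surj : Function.Surjective (Algebra.trace (ZMod 3) L) :=
  Algebra.trace_surjective (ZMod 3) L

omit [DecidableEq L] in
lemma tcPsi_ne_one : tcPsi L ≠ 1 := by
  intro h
  obtain ⟨x, hx⟩ := tc_trace_surj (L := L) 1
  have h1 : tcPsi L x = 1 := by rw [h]; rfl
  rw [tcPsi_apply, hx] at h1
  have h2 : tcOm ^ 1 = 1 := h1
  exact tcOm_prim.ne_one (by norm_num) (by simpa using h2)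

omit [DecidableEq L] in
lemma tcPsi_prim : (tcPsi L).IsPrimitive := AddChar.IsPrimitive.of_ne_one tcPsi_ne_one

lemma tcPsi_sum (u : L) : ∑ a : L, tcPsi L (a * u) = if u = 0 then (Fintype.card L : ℂ) else 0 := by
  have := AddChar.sum_mulShift u (tcPsi_prim (L := L))
  simpa using this

omit [DecidableEq L] in
lemma tcPsi_cube (x : L) : tcPsi L (x ^ 3) = tcPsi L x := by
  have : CharP L 3 := (Algebra.charP_iff (ZMod 3) L 3).mp inferInstance
  rw [tcPsi_apply, tcPsi_apply]
  have := Algebra.trace_eq_of_algEquiv (FiniteField.frobeniusAlgEquiv (ZMod 3) L 3) x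
  rw [← this]
  simp [frobenius]

omit [Fintype L] [DecidableEq L] in
lemma tc_three : (3 : L) = 0 := by
  have : CharP L 3 := (Algebra.charP_iff (ZMod 3) L 3).mp inferInstance
  exact_mod_cast CharP.cast_eq_zero L 3

omit [Fintype L] [DecidableEq L] in
lemma tc_ringChar : ringChar L ≠ 2 := by
  have : CharP L 3 := (Algebra.charP_iff (ZMod 3) L 3).mp inferInstance
  rw [ringChar.eq L 3]; norm_num

variable (L) in
def tcChi : MulChar L ℂ := (quadraticChar L).ringHomComp (Int.castRingHom ℂ)

lemma tcChi_apply (c : L) : tcChi L c = (quadraticChar L c : ℂ) := rfl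

variable (L) in
def tcG : ℂ := gaussSum (tcChi L) (tcPsi L)

lemma tcChi_ne_one : tcChi L ≠ 1 := by
  intro h
  obtain ⟨a, ha⟩ := quadraticChar_exists_neg_one' (F := L) tc_ringChar
  have : tcChi L a = 1 := by rw [h]; simp
  rw [tcChi_apply, ha] at this
  norm_num at this

lemma tcG_sq (h4 : Fintype.card L % 4 = 1) : tcG L ^ 2 = Fintype.card L := by
  have h := gaussSum_sq (tcChi_ne_one (L := L))
    ((quadraticChar_isQuadratic L).comp _) (tcPsi_prim (L := L))
  have h1 : tcChi L (-1) = 1 := by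
    have : IsSquare (-1 : L) := by
      rw [FiniteField.isSquare_neg_one_iff]; omega
    rw [tcChi_apply, (quadraticChar_one_iff_isSquare (by simp)).mpr this]; simp
  rw [h1, one_mul] at h
  exact h

lemma tc_quad (c : L) (hc : c ≠ 0) : ∑ b : L, tcPsi L (c * b ^ 2) = tcChi L c * tcG L := by
  have h1 : ∑ b : L, tcPsi L (c * b ^ 2)
      = ∑ y : L, ((quadraticChar L y : ℂ) + 1) * tcPsi L (c * y) := by
    rw [← Finset.sum_fiberwise (s := univ) (g := fun b : L => b ^ 2)]
    refine Finset.sum_congr rfl fun y _ => ?_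
    have hcard := quadraticChar_card_sqrts (F := L) tc_ringChar y
    have hs : ∀ b ∈ (univ.filter fun b : L => b ^ 2 = y), tcPsi L (c * b ^ 2) = tcPsi L (c * y) := by
      intro b hb
      rw [(Finset.mem_filter.mp hb).2]
    rw [Finset.sum_congr rfl hs, Finset.sum_const, nsmul_eq_mul]
    congr 1
    have h2 : ({x : L | x ^ 2 = y} : Set L).toFinset = univ.filter fun b : L => b ^ 2 = y := by
      ext; simp
    rw [h2] at hcard
    exact_mod_cast hcard
  rw [h1]
  simp_rw [add_mul, one_mul, Finset.sum_add_distrib]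
  have h2 : ∑ y : L, tcPsi L (c * y) = 0 := by
    have := tcPsi_sum c
    simp_rw [mul_comm c]
    rw [this, if_neg hc]
  rw [h2, add_zero]
  have h3 := gaussSum_mulShift (tcChi L) (tcPsi L) (Units.mk0 c hc)
  have h4 : tcChi L c * tcChi L c = 1 := by
    rw [tcChi_apply]
    have := quadraticChar_sq_one hc
    rw [← sq]
    exact_mod_cast this
  unfold tcG
  rw [← h3, Units.val_mk0, ← mul_assoc, h4, one_mul]
  rfl

lemma tc_quad' (c v w : L) (hc : c ≠ 0) :
    ∑ b : L, tcPsi L (c * b ^ 2 + v * b + w * c)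
      = tcChi L c * tcG L * tcPsi L (w * c - v ^ 2 / c) := by
  rw [← tc_quad c hc, Finset.sum_mul, ← Equiv.sum_comp (Equiv.subRight (v / c))
    (fun b => tcPsi L (c * b ^ 2) * tcPsi L (w * c - v ^ 2 / c))]
  refine Finset.sum_congr rfl fun b _ => ?_
  rw [← AddChar.map_add_eq_mul]
  congr 1
  simp only [Equiv.subRight_apply]
  field_simp
  linear_combination (b * v * c) * tc_three (L := L)

/-- The cubic exponential sum over `L`. -/
def tcF (ε u v w : L) : ℂ :=
  ∑ c : L, ∑ b : L, ∑ a : L, tcPsi L (u * a + v * b + w * c -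
    (-ε * b ^ 3 + ε * b * c ^ 2 - b ^ 2 * c + a * c ^ 2 + (1 + ε) * c ^ 3))

lemma tcF_eq (ε u v w : L) (hε : ε ^ 3 = ε) : tcF ε u v w =
    ∑ c : L, if u = c ^ 2 then (Fintype.card L : ℂ) *
      ∑ b : L, tcPsi L (c * b ^ 2 + (v + ε - ε * c ^ 2) * b + (w - 1 - ε) * c) else 0 := by
  have h3 := tc_three (L := L)
  unfold tcF
  refine Finset.sum_congr rfl fun c _ => ?_
  have key : ∀ b a : L, tcPsi L (u * a + v * b + w * c -
      (-ε * b ^ 3 + ε * b * c ^ 2 - b ^ 2 * c + a * c ^ 2 + (1 + ε) * c ^ 3))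
      = tcPsi L (c * b ^ 2 + (v + ε - ε * c ^ 2) * b + (w - 1 - ε) * c) *
        tcPsi L (a * (u - c ^ 2)) := by
    intro b a
    have e1 : u * a + v * b + w * c -
      (-ε * b ^ 3 + ε * b * c ^ 2 - b ^ 2 * c + a * c ^ 2 + (1 + ε) * c ^ 3)
      = (c * b ^ 2 + (v - ε * c ^ 2) * b + w * c + a * (u - c ^ 2)) +
        (ε * b - (1 + ε) * c) ^ 3 := by
      linear_combination (-(b ^ 3 - c ^ 3)) * hε
        + (c * ε ^ 2 * b ^ 2 * (1 + ε) - c ^ 2 * ε * b * (1 + ε) ^ 2 + c ^ 3 * (ε + ε ^ 2)) * h3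
    rw [e1, AddChar.map_add_eq_mul, tcPsi_cube, ← AddChar.map_add_eq_mul,
      ← AddChar.map_add_eq_mul]
    congr 1
    ring
  simp_rw [key, ← Finset.mul_sum, tcPsi_sum, sub_eq_zero]
  split_ifs with h
  · rw [Finset.mul_sum]
    exact Finset.sum_congr rfl fun b _ => by ring
  · simp

lemma tcF_zero (ε v w : L) (hε : ε ^ 3 = ε) :
    tcF ε 0 v w = if v = -ε then (Fintype.card L : ℂ) ^ 2 else 0 := by
  rw [tcF_eq _ _ _ _ hε, Finset.sum_eq_single 0]
  · have : ∀ b : L, (0 : L) * b ^ 2 + (v + ε - ε * 0 ^ 2) * b + (w - 1 - ε) * 0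
      = b * (v + ε) := fun b => by ring
    simp_rw [this, tcPsi_sum]
    have h0 : (0 : L) = 0 ^ 2 := by ring
    rw [if_pos h0]
    by_cases h : v = -ε
    · rw [if_pos h, if_pos (by rw [h]; ring)]; ring
    · rw [if_neg h, if_neg (fun h' => h (eq_neg_of_add_eq_zero_left h'))]; ring
  · intro c _ hc
    rw [if_neg]
    intro h
    exact hc (by simpa using h.symm)
  · simp

lemma tcF_nonsq (ε u v w : L) (hε : ε ^ 3 = ε) (hu : ¬ IsSquare u) : tcF ε u v w = 0 := by
  rw [tcF_eq _ _ _ _ hε]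
  refine Finset.sum_eq_zero fun c _ => if_neg fun h => hu ⟨c, by rw [h]; ring⟩

/-- The phase. -/
def tcY (ε c v w : L) : L := (w - 1 - ε) * c - (v + ε - ε * c ^ 2) ^ 2 / c

lemma tcF_sq (h4 : Fintype.card L % 4 = 1) (ε c v w : L) (hε : ε ^ 3 = ε) (hc : c ≠ 0) :
    tcF ε (c ^ 2) v w = Fintype.card L * (tcChi L c * tcG L) *
      (if Algebra.trace (ZMod 3) L (tcY ε c v w) = 0 then 2 else -1) := by
  have hm1 : tcChi L (-c) = tcChi L c := by
    have : IsSquare (-1 : L) := by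
      rw [FiniteField.isSquare_neg_one_iff]; omega
    rw [neg_eq_neg_one_mul, map_mul, tcChi_apply (-1),
      (quadraticChar_one_iff_isSquare (by simp)).mpr this]; simp
  have hne : c ≠ -c := by
    intro h
    apply hc
    linear_combination c * tc_three (L := L) - h
  rw [tcF_eq _ _ _ _ hε, ← Finset.sum_filter]
  have hfil : (univ.filter fun x : L => c ^ 2 = x ^ 2) = {c, -c} := by
    ext x
    simp only [mem_filter, mem_univ, true_and, mem_insert, mem_singleton]
    rw [eq_comm, sq_eq_sq_iff_eq_or_eq_neg]
  rw [hfil, Finset.sum_pair hne, tc_quad' _ _ _ hc, tc_quad' _ _ _ (neg_ne_zero.mpr hc), hm1,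
    ← tcE_add_neg, ← map_neg, ← tcPsi_apply, ← tcPsi_apply]
  have e2 : (w - 1 - ε) * -c - (v + ε - ε * (-c) ^ 2) ^ 2 / -c = - tcY ε c v w := by
    unfold tcY; rw [neg_sq, div_neg]; ring
  rw [e2]
  unfold tcY
  ring

lemma tc_card_chi (e : ℤ) (he : e = 1 ∨ e = -1) :
    2 * (univ.filter fun c : L => quadraticChar L c = e).card + 1 = Fintype.card L := by
  have h0 := quadraticChar_sum_zero (F := L) tc_ringChar
  have hpt : ∀ c : L, quadraticChar L c = (if quadraticChar L c = 1 then 1 else 0)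
      - (if quadraticChar L c = -1 then 1 else 0) := by
    intro c
    by_cases hc : c = 0
    · subst hc; simp
    · rcases quadraticChar_dichotomy hc with h | h <;> rw [h] <;> norm_num
  have hpt2 : ∀ c : L, (1 : ℤ) = (if quadraticChar L c = 1 then 1 else 0)
      + (if quadraticChar L c = -1 then 1 else 0) + (if c = 0 then 1 else 0) := by
    intro c
    by_cases hc : c = 0
    · subst hc; simp
    · rcases quadraticChar_dichotomy hc with h | h <;> rw [h] <;> norm_num [hc]
  rw [Finset.sum_congr rfl fun c _ => hpt c, Finset.sum_sub_distrib, ← Finset.natCast_card_filter,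
    ← Finset.natCast_card_filter] at h0
  have h1 : (Fintype.card L : ℤ) = ∑ c : L, (1 : ℤ) := by simp
  rw [Finset.sum_congr rfl fun c _ => hpt2 c, Finset.sum_add_distrib, Finset.sum_add_distrib,
    ← Finset.natCast_card_filter, ← Finset.natCast_card_filter] at h1
  simp only [Finset.sum_ite_eq', mem_univ, if_true] at h1
  rcases he with rfl | rfl <;> omega

lemma tc_card_tr : 3 * (univ.filter fun y : L => Algebra.trace (ZMod 3) L y = 0).card
      = Fintype.card L ∧
    3 * (univ.filter fun y : L => ¬ Algebra.trace (ZMod 3) L y = 0).card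
      = 2 * Fintype.card L := by
  have hf : ∀ t : ZMod 3, (univ.filter fun y : L => Algebra.trace (ZMod 3) L y = t).card
      = (univ.filter fun y : L => Algebra.trace (ZMod 3) L y = 0).card := by
    intro t
    obtain ⟨x, hx⟩ := tc_trace_surj (L := L) t
    refine Finset.card_nbij' (fun y => y - x) (fun y => y + x) ?_ ?_ ?_ ?_
    · intro y hy; simp at hy ⊢; rw [hy, hx, sub_self]
    · intro y hy; simp at hy ⊢; rw [hy, hx, zero_add]
    · intro y _; simp
    · intro y _; simp
  have h1 : Fintype.card L = 3 * (univ.filter fun y : L => Algebra.trace (ZMod 3) L y = 0).card := by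
    rw [← Finset.card_univ, Finset.card_eq_sum_card_fiberwise
      (f := fun y : L => Algebra.trace (ZMod 3) L y) (t := univ) (by simp),
      Finset.sum_congr rfl fun t _ => hf t]
    simp
  have h2 := Finset.card_filter_add_card_filter_not (s := (univ : Finset L))
    (fun y : L => Algebra.trace (ZMod 3) L y = 0)
  rw [Finset.card_univ] at h2
  omega

lemma tc_cardB (ε : L) (e : ℤ) (he : e = 1 ∨ e = -1) (P : L → Prop) [DecidablePred P] :
    (univ.filter fun p : L × L × L => quadraticChar L p.1 = e ∧ P (tcY ε p.1 p.2.1 p.2.2)).card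
      = (univ.filter fun c : L => quadraticChar L c = e).card *
        (Fintype.card L * (univ.filter fun y : L => P y).card) := by
  rw [← Finset.card_univ, ← Finset.card_product, ← Finset.card_product]
  have hne : ∀ c : L, quadraticChar L c = e → c ≠ 0 := by
    rintro c h rfl
    rw [quadraticChar_zero] at h
    omega
  refine Finset.card_nbij' (fun p => (p.1, p.2.1, tcY ε p.1 p.2.1 p.2.2))
    (fun p => (p.1, p.2.1, (p.2.2 + (p.2.1 + ε - ε * p.1 ^ 2) ^ 2 / p.1) / p.1 + 1 + ε)) ?_ ?_ ?_ ?_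
  · rintro ⟨c, v, w⟩ h
    simpa using h
  · rintro ⟨c, v, y⟩ h
    have h' : quadraticChar L c = e ∧ P y := by simpa using h
    have hc := hne c h'.1
    have : tcY ε c v ((y + (v + ε - ε * c ^ 2) ^ 2 / c) / c + 1 + ε) = y := by
      unfold tcY; field_simp; ring
    simp only [coe_filter, mem_univ, true_and, Set.mem_ofPred_eq]
    rw [this]; exact h'
  · rintro ⟨c, v, w⟩ h
    have h' : quadraticChar L c = e ∧ P (tcY ε c v w) := by simpa using h
    have hc := hne c h'.1
    simp only [Prod.mk.injEq, true_and]
    unfold tcY; field_simp; ring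
  · rintro ⟨c, v, y⟩ h
    have h' : quadraticChar L c = e ∧ P y := by simpa using h
    have hc := hne c h'.1
    simp only [Prod.mk.injEq, true_and]
    unfold tcY; field_simp; ring

lemma tc_count (ε : L) (hε : ε ^ 3 = ε) (val : ℂ) (hval : val ≠ 0)
    (hval2 : val ≠ (Fintype.card L : ℂ) ^ 2)
    (e : ℤ) (he : e = 1 ∨ e = -1) (P : L → Prop) [DecidablePred P]
    (h : ∀ c v w : L, c ≠ 0 → (tcF ε (c ^ 2) v w = val ↔
      quadraticChar L c = e ∧ P (tcY ε c v w))) :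
    2 * Set.ncard {p : L × L × L | tcF ε p.1 p.2.1 p.2.2 = val}
      = (univ.filter fun c : L => quadraticChar L c = e).card *
        (Fintype.card L * (univ.filter fun y : L => P y).card) := by
  classical
  rw [← tc_cardB ε e he P, Set.ncard_eq_toFinset_card', Set.toFinset_setOf]
  have hne : ∀ c : L, quadraticChar L c = e → c ≠ 0 := by
    rintro c h rfl
    rw [quadraticChar_zero] at h
    omega
  refine Eq.trans ?_ (Finset.card_eq_sum_card_fiberwise
    (f := fun p : L × L × L => (p.1 ^ 2, p.2.1, p.2.2))
    (t := univ.filter fun p : L × L × L => tcF ε p.1 p.2.1 p.2.2 = val) ?_).symm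
  · rw [Finset.sum_congr rfl (g := fun _ => 2), Finset.sum_const, smul_eq_mul, mul_comm]
    rintro ⟨u, v, w⟩ hu
    have hu' : tcF ε u v w = val := by simpa using hu
    have hsq : IsSquare u := by
      by_contra hns
      rw [tcF_nonsq _ _ _ _ hε hns] at hu'
      exact hval hu'.symm
    obtain ⟨c, hc⟩ := hsq
    have hc0 : c ≠ 0 := by
      rintro rfl
      rw [mul_zero] at hc
      subst hc
      rw [tcF_zero _ _ _ hε] at hu'
      split_ifs at hu'
      · exact hval2 hu'.symm
      · exact hval hu'.symm
    rw [← sq] at hc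
    subst hc
    have hne' : c ≠ -c := by
      intro h
      apply hc0
      linear_combination c * tc_three (L := L) - h
    have hP := (h c v w hc0).mp hu'
    have hP' := (h (-c) v w (neg_ne_zero.mpr hc0)).mp (by rw [neg_sq]; exact hu')
    refine Eq.trans (b := ({(c, v, w), (-c, v, w)} : Finset (L × L × L)).card) ?_
      (by rw [Finset.card_pair]; simpa using hne')
    congr 1
    ext ⟨x, v', w'⟩
    simp only [mem_filter, mem_univ, true_and, mem_insert, mem_singleton, Prod.mk.injEq]
    rw [sq_eq_sq_iff_eq_or_eq_neg]
    constructor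
    · rintro ⟨-, h1 | h1, h2, h3⟩
      · exact Or.inl ⟨h1, h2, h3⟩
      · exact Or.inr ⟨h1, h2, h3⟩
    · rintro (⟨rfl, rfl, rfl⟩ | ⟨rfl, rfl, rfl⟩)
      · exact ⟨hP, Or.inl rfl, rfl, rfl⟩
      · exact ⟨hP', Or.inr rfl, rfl, rfl⟩
  · rintro ⟨c, v, w⟩ hc
    have h' : quadraticChar L c = e ∧ P (tcY ε c v w) := by simpa using hc
    simpa using (h c v w (hne c h'.1)).mpr h'

lemma tc_count_zero (h4 : Fintype.card L % 4 = 1) (ε : L) (hε : ε ^ 3 = ε) :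
    Set.ncard {p : L × L × L | tcF ε p.1 p.2.1 p.2.2 = 0}
      = (univ.filter fun c : L => quadraticChar L c = -1).card *
        (Fintype.card L * Fintype.card L) + (Fintype.card L - 1) * Fintype.card L := by
  classical
  have hq0 : (Fintype.card L : ℂ) ≠ 0 := by simp
  have hG : tcG L ≠ 0 := by
    intro h
    have := tcG_sq (L := L) h4
    rw [h] at this
    apply hq0
    rw [← this]; ring
  have hset : {p : L × L × L | tcF ε p.1 p.2.1 p.2.2 = 0}
      = (((univ.filter fun c : L => quadraticChar L c = -1) ×ˢ ((univ : Finset L) ×ˢ (univ : Finset L))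
        ∪ ({0} : Finset L) ×ˢ (({-ε} : Finset L)ᶜ ×ˢ (univ : Finset L)) : Finset (L × L × L)) :
          Set (L × L × L)) := by
    ext ⟨u, v, w⟩
    simp only [Set.mem_ofPred_eq, coe_union, Set.mem_union, mem_coe, mem_product, mem_filter,
      mem_univ, true_and, and_true, mem_singleton, mem_compl]
    by_cases hu : u = 0
    · subst hu
      rw [tcF_zero _ _ _ hε]
      simp
    · by_cases hs : IsSquare u
      · have h1 : quadraticChar L u = 1 := (quadraticChar_one_iff_isSquare hu).mpr hs
        obtain ⟨c, hc⟩ := hs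
        rw [← sq] at hc
        subst hc
        have hc0 : c ≠ 0 := by
          rintro rfl
          simp at hu
        rw [tcF_sq h4 _ _ _ _ hε hc0, h1]
        have hchi : tcChi L c ≠ 0 := by
          rw [tcChi_apply]
          exact_mod_cast fun h => hc0 (quadraticChar_eq_zero_iff.mp h)
        constructor
        · intro h
          exfalso
          revert h
          refine mul_ne_zero (mul_ne_zero hq0 (mul_ne_zero hchi hG)) ?_
          split_ifs <;> norm_num
        · rintro (h | h)
          · norm_num at h
          · exact absurd h.1 hu
      · rw [tcF_nonsq _ _ _ _ hε hs]
        simp only [true_iff]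
        exact Or.inl (quadraticChar_neg_one_iff_not_isSquare.mpr hs)
  rw [hset, Set.ncard_coe_finset, Finset.card_union_of_disjoint]
  · simp [Finset.card_product, Finset.card_compl]
  · rw [Finset.disjoint_left]
    rintro ⟨u, v, w⟩ h1 h2
    simp only [mem_product, mem_filter, mem_univ, true_and, mem_singleton] at h1 h2
    rw [h2.1, quadraticChar_zero] at h1
    norm_num at h1

lemma tc_count_big (ε : L) (hε : ε ^ 3 = ε)
    (h : ∀ c v w : L, c ≠ 0 → tcF ε (c ^ 2) v w ≠ (Fintype.card L : ℂ) ^ 2) :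
    Set.ncard {p : L × L × L | tcF ε p.1 p.2.1 p.2.2 = (Fintype.card L : ℂ) ^ 2}
      = Fintype.card L := by
  classical
  have hq0 : (0 : ℂ) ≠ (Fintype.card L : ℂ) ^ 2 := by
    have : (Fintype.card L : ℂ) ≠ 0 := by simp
    exact (pow_ne_zero 2 this).symm
  have hset : {p : L × L × L | tcF ε p.1 p.2.1 p.2.2 = (Fintype.card L : ℂ) ^ 2}
      = ((({0} : Finset L) ×ˢ (({-ε} : Finset L) ×ˢ (univ : Finset L)) : Finset (L × L × L)) :
          Set (L × L × L)) := by
    ext ⟨u, v, w⟩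
    simp only [Set.mem_ofPred_eq, mem_coe, mem_product,
      mem_univ, and_true, mem_singleton]
    by_cases hu : u = 0
    · subst hu
      rw [tcF_zero _ _ _ hε]
      by_cases hv : v = -ε
      · simp [hv]
      · simp [hv, hq0]
    · simp only [hu, false_and, iff_false]
      by_cases hs : IsSquare u
      · obtain ⟨c, hc⟩ := hs
        rw [← sq] at hc
        subst hc
        refine h c v w ?_
        rintro rfl
        simp at hu
      · rw [tcF_nonsq _ _ _ _ hε hs]
        exact hq0
  rw [hset, Set.ncard_coe_finset]
  simp [Finset.card_product]

lemma tc_counts (r : ℕ) (hr : 2 ≤ r) (hre : Even r) (hq : Fintype.card L = 3 ^ r)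
    (ε : L) (hε : ε ^ 3 = ε) :
    Set.ncard {p : L × L × L | tcF ε p.1 p.2.1 p.2.2 = 0}
        = (3 ^ (3 * r) + 3 ^ (2 * r)) / 2 - 3 ^ r ∧
    Set.ncard {p : L × L × L | tcF ε p.1 p.2.1 p.2.2 = 3 ^ (2 * r)} = 3 ^ r ∧
    Set.ncard {p : L × L × L | tcF ε p.1 p.2.1 p.2.2 = 3 ^ (3 * r / 2)}
        = (3 ^ (3 * r - 1) - 3 ^ (2 * r - 1)) / 2 ∧
    Set.ncard {p : L × L × L | tcF ε p.1 p.2.1 p.2.2 = -3 ^ (3 * r / 2)}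
        = (3 ^ (3 * r - 1) - 3 ^ (2 * r - 1)) / 2 ∧
    Set.ncard {p : L × L × L | tcF ε p.1 p.2.1 p.2.2 = 2 * 3 ^ (3 * r / 2)}
        = (3 ^ (3 * r - 1) - 3 ^ (2 * r - 1)) / 4 ∧
    Set.ncard {p : L × L × L | tcF ε p.1 p.2.1 p.2.2 = -(2 * 3 ^ (3 * r / 2))}
        = (3 ^ (3 * r - 1) - 3 ^ (2 * r - 1)) / 4 := by
  classical
  obtain ⟨k, hk⟩ := hre
  have hrk : r = 2 * k := by omega
  have hk1 : 1 ≤ k := by omega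
  have h4 : Fintype.card L % 4 = 1 := by
    rw [hq, hrk, pow_mul, Nat.pow_mod]; simp
  -- the Gauss sum is plus or minus `3 ^ k`
  obtain ⟨g, hg, hG⟩ : ∃ g : ℤ, (g = 1 ∨ g = -1) ∧ tcG L = g * 3 ^ k := by
    have h := tcG_sq (L := L) h4
    have h' : tcG L ^ 2 = (3 ^ k) ^ 2 := by
      rw [h, hq, hrk]; push_cast; ring
    rcases sq_eq_sq_iff_eq_or_eq_neg.mp h' with h | h
    · exact ⟨1, Or.inl rfl, by rw [h]; simp⟩
    · exact ⟨-1, Or.inr rfl, by rw [h]; simp⟩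
  have hm : 3 * r / 2 = r + k := by omega
  rw [hm]
  have hF : ∀ c v w : L, c ≠ 0 → tcF ε (c ^ 2) v w = 3 ^ (r + k) *
      ((g * quadraticChar L c * (if Algebra.trace (ZMod 3) L (tcY ε c v w) = 0 then 2 else -1) : ℤ)
        : ℂ) := by
    intro c v w hc
    rw [tcF_sq h4 _ _ _ _ hε hc, hG, hq, tcChi_apply]
    push_cast
    split_ifs <;> ring
  have hm0 : (3 : ℂ) ^ (r + k) ≠ 0 := pow_ne_zero _ (by norm_num)
  have hmul : ∀ x y : ℤ, (3 : ℂ) ^ (r + k) * (x : ℂ) = 3 ^ (r + k) * (y : ℂ) ↔ x = y := by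
    intro x y
    rw [mul_right_inj' hm0]
    norm_cast
  have hqq : (Fintype.card L : ℂ) ^ 2 = 3 ^ (r + k) * ((3 ^ k : ℤ) : ℂ) := by
    rw [hq, hrk]; push_cast; ring
  have h3k : (3 : ℤ) ≤ 3 ^ k := by
    calc (3 : ℤ) = 3 ^ 1 := by norm_num
      _ ≤ 3 ^ k := pow_le_pow_right₀ (by norm_num) hk1
  have hchi : ∀ c : L, c ≠ 0 → quadraticChar L c = 1 ∨ quadraticChar L c = -1 :=
    fun c hc => quadraticChar_dichotomy hc
  obtain ⟨hT0, hT1⟩ := tc_card_tr (L := L)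
  obtain ⟨p, hp⟩ : ∃ p, p = 3 ^ (r - 1) := ⟨_, rfl⟩
  have hq3 : 3 ^ r = 3 * p := by
    rw [hp, ← pow_succ']; congr 1; omega
  have hp1 : 1 ≤ p := by rw [hp]; exact Nat.one_le_pow _ _ (by norm_num)
  have e1 : 3 ^ (3 * r) = (3 * p) ^ 3 := by rw [← hq3]; ring
  have e2 : 3 ^ (2 * r) = (3 * p) ^ 2 := by rw [← hq3]; ring
  have e3 : 3 ^ (3 * r - 1) = (3 * p) ^ 2 * p := by
    rw [← hq3, hp, ← pow_mul, ← pow_add]; congr 1; omega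
  have e4 : 3 ^ (2 * r - 1) = (3 * p) * p := by
    rw [← hq3, hp, ← pow_add]; congr 1; omega
  have general : ∀ (κ e : ℤ) (P : L → Prop) [DecidablePred P], κ ≠ 0 → κ < 3 →
      (e = 1 ∨ e = -1) →
      (∀ c v w : L, c ≠ 0 → (g * quadraticChar L c *
        (if Algebra.trace (ZMod 3) L (tcY ε c v w) = 0 then 2 else -1) = κ ↔
        quadraticChar L c = e ∧ P (tcY ε c v w))) →
      2 * Set.ncard {p : L × L × L | tcF ε p.1 p.2.1 p.2.2 = 3 ^ (r + k) * (κ : ℂ)}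
      = (univ.filter fun c : L => quadraticChar L c = e).card *
        (Fintype.card L * (univ.filter fun y : L => P y).card) := by
    intro κ e P _ hκ0 hκ3 he hP
    refine tc_count ε hε _ ?_ ?_ e he P ?_
    · exact mul_ne_zero hm0 (by exact_mod_cast hκ0)
    · rw [hqq, Ne, hmul]; omega
    · intro c v w hc
      rw [hF c v w hc, hmul]
      exact hP c v w hc
  have hg' : -g = 1 ∨ -g = -1 := by omega
  have fin1 : ∀ (N e : ℕ) (ee : ℤ), (ee = 1 ∨ ee = -1) →
      2 * N = (univ.filter fun c : L => quadraticChar L c = ee).card *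
        (Fintype.card L * (univ.filter fun y : L => ¬ Algebra.trace (ZMod 3) L y = 0).card) →
      N = (3 ^ (3 * r - 1) - 3 ^ (2 * r - 1)) / 2 := by
    intro N _ ee hee hN
    have hc := tc_card_chi (L := L) ee hee
    rw [hq, hq3] at hT1 hN hc
    set M := (univ.filter fun c : L => quadraticChar L c = ee).card
    have hT : (univ.filter fun y : L => ¬ Algebra.trace (ZMod 3) L y = 0).card = 2 * p := by omega
    rw [hT] at hN
    rw [e3, e4]
    symm
    apply Nat.div_eq_of_eq_mul_left (by norm_num)
    apply Nat.sub_eq_of_eq_add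
    zify at *
    linear_combination -hN - (3 * p * p : ℤ) * hc
  have fin2 : ∀ (N e : ℕ) (ee : ℤ), (ee = 1 ∨ ee = -1) →
      2 * N = (univ.filter fun c : L => quadraticChar L c = ee).card *
        (Fintype.card L * (univ.filter fun y : L => Algebra.trace (ZMod 3) L y = 0).card) →
      N = (3 ^ (3 * r - 1) - 3 ^ (2 * r - 1)) / 4 := by
    intro N _ ee hee hN
    have hc := tc_card_chi (L := L) ee hee
    rw [hq, hq3] at hT0 hN hc
    set M := (univ.filter fun c : L => quadraticChar L c = ee).card
    have hT : (univ.filter fun y : L => Algebra.trace (ZMod 3) L y = 0).card = p := by omega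
    rw [hT] at hN
    rw [e3, e4]
    symm
    apply Nat.div_eq_of_eq_mul_left (by norm_num)
    apply Nat.sub_eq_of_eq_add
    zify at *
    linear_combination -2 * hN - (3 * p * p : ℤ) * hc
  refine ⟨?_, ?_, ?_, ?_, ?_, ?_⟩
  · rw [tc_count_zero h4 ε hε]
    have hc := tc_card_chi (L := L) (-1) (Or.inr rfl)
    rw [e1, e2, hq3]
    rw [hq, hq3] at hc ⊢
    set M := (univ.filter fun c : L => quadraticChar L c = -1).card
    have : ((3 * p) ^ 3 + (3 * p) ^ 2) / 2 = M * (3 * p * (3 * p)) + (3 * p) * (3 * p) := by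
      apply Nat.div_eq_of_eq_mul_left (by norm_num)
      zify at *
      linear_combination -(9 * p * p : ℤ) * hc
    rw [this, Nat.sub_mul, one_mul, Nat.add_sub_assoc]
    nlinarith
  · have := tc_count_big ε hε (by
      intro c v w hc
      rw [hF c v w hc, hqq, Ne, hmul]
      rcases hg with rfl | rfl <;> rcases hchi c hc with h | h <;> rw [h] <;> split_ifs <;> omega)
    rw [hq] at this
    rw [← this]
    congr 1
    ext x
    simp only [Set.mem_ofPred_eq]
    rw [show (3 : ℂ) ^ (2 * r) = ((3 ^ r : ℕ) : ℂ) ^ 2 by push_cast; ring]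
  · have h := general 1 (-g) (fun y => ¬ Algebra.trace (ZMod 3) L y = 0) (by norm_num) (by norm_num)
      hg' (by
        intro c v w hc
        rcases hg with rfl | rfl <;> rcases hchi c hc with h | h <;> rw [h] <;> split_ifs <;> simp [*])
    have h := fin1 _ 0 _ hg' h
    simpa using h
  · have h := general (-1) g (fun y => ¬ Algebra.trace (ZMod 3) L y = 0) (by norm_num) (by norm_num)
      hg (by
        intro c v w hc
        rcases hg with rfl | rfl <;> rcases hchi c hc with h | h <;> rw [h] <;> split_ifs <;> simp [*])
    have h := fin1 _ 0 _ hg h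
    simpa using h
  · have h := general 2 g (fun y => Algebra.trace (ZMod 3) L y = 0) (by norm_num) (by norm_num)
      hg (by
        intro c v w hc
        rcases hg with rfl | rfl <;> rcases hchi c hc with h | h <;> rw [h] <;> split_ifs <;> simp [*])
    have h := fin2 _ 0 _ hg h
    rw [← h]
    congr 1
    ext x
    simp [mul_comm]
  · have h := general (-2) (-g) (fun y => Algebra.trace (ZMod 3) L y = 0) (by norm_num) (by norm_num)
      hg' (by
        intro c v w hc
        rcases hg with rfl | rfl <;> rcases hchi c hc with h | h <;> rw [h] <;> split_ifs <;> simp [*])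
    have h := fin2 _ 0 _ hg' h
    rw [← h]
    congr 1
    ext x
    simp [mul_comm]

end

section
variable {L K : Type*} [Field L] [Fintype L] [DecidableEq L] [Algebra (ZMod 3) L]
  [Field K] [Finite K] [Algebra L K]

/-- Coordinates. -/
def tcPhi (θ : K) (p : L × L × L) : K :=
  algebraMap L K p.2.2 + algebraMap L K p.2.1 * θ + algebraMap L K p.1 * θ ^ 2

lemma tcPhi_mul (θ : K) (hθ : θ ^ 3 = θ + 1) (a b c a' b' c' : L) :
    tcPhi θ (c, b, a) * tcPhi θ (c', b', a') =
    tcPhi θ (a * c' + b * b' + c * a' + c * c',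
      a * b' + b * a' + b * c' + c * b' + c * c', a * a' + b * c' + c * b') := by
  simp only [tcPhi, map_add, map_mul]
  linear_combination (algebraMap L K b * algebraMap L K c' + algebraMap L K c * algebraMap L K b' +
    algebraMap L K c * algebraMap L K c' * θ) * hθ

lemma tcPhi_sub (θ : K) (a b c a' b' c' : L) :
    tcPhi θ (c, b, a) - tcPhi θ (c', b', a') = tcPhi θ (c - c', b - b', a - a') := by
  simp only [tcPhi, map_sub]
  ring

lemma tc_theta_pow [CharP K 3] (θ : K) (hθ : θ ^ 3 = θ + 1) (s : ℕ) :
    θ ^ (3 ^ s) = θ + s := by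
  induction s with
  | zero => simp
  | succ s ih =>
    rw [pow_succ, pow_mul, ih, add_pow_char, hθ]
    have : (s : K) ^ 3 = s := by
      have h := ZMod.pow_card (s : ZMod 3)
      have h' := congrArg (ZMod.castHom (dvd_refl 3) K) h
      rwa [map_pow, map_natCast] at h'
    rw [this]; push_cast; ring

lemma tcPhi_pow [CharP K 3] (r : ℕ) (hq : Fintype.card L = 3 ^ r) (θ : K) (hθ : θ ^ 3 = θ + 1)
    (i : ℕ) (a b c : L) :
    tcPhi θ (c, b, a) ^ (3 ^ (r * i)) =
      tcPhi θ (c, b + 2 * (r * i : ℕ) * c, a + b * (r * i : ℕ) + c * (r * i : ℕ) ^ 2) := by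
  have hL : ∀ x : L, (algebraMap L K x) ^ (3 ^ (r * i)) = algebraMap L K x := by
    intro x
    rw [← map_pow, pow_mul, ← hq, FiniteField.pow_card_pow]
  simp only [tcPhi]
  rw [add_pow_char_pow, add_pow_char_pow, mul_pow, mul_pow, hL, hL, hL, pow_right_comm θ 2,
    tc_theta_pow θ hθ]
  simp only [map_add, map_mul, map_pow, map_natCast, map_ofNat]
  ring

lemma tcPhi_trace [CharP K 3] (r : ℕ) (hq : Fintype.card L = 3 ^ r) (hfr : Module.finrank L K = 3)
    (h3 : Nat.gcd r 3 = 1) (θ : K) (hθ : θ ^ 3 = θ + 1) (a b c : L) :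
    Algebra.trace L K (tcPhi θ (c, b, a)) = -c := by
  apply FaithfulSMul.algebraMap_injective L K
  have hr2 : (r : K) ^ 2 = 1 := by
    have h : ((r : ZMod 3)) ^ 2 = 1 := by
      have h1 : r % 3 = 1 ∨ r % 3 = 2 := by
        have : ¬ 3 ∣ r := fun h => by
          have := Nat.gcd_eq_right h
          omega
        omega
      rw [← ZMod.natCast_mod r 3]
      rcases h1 with h1 | h1 <;> rw [h1] <;> decide
    have := congrArg (ZMod.castHom (dvd_refl 3) K) h
    simpa using this
  have h30 : (3 : K) = 0 := by exact_mod_cast CharP.cast_eq_zero K 3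
  rw [FiniteField.algebraMap_trace_eq_sum_pow, hfr, Nat.card_eq_fintype_card, hq]
  simp only [Finset.sum_range_succ, Finset.sum_range_zero, ← pow_mul]
  rw [tcPhi_pow r hq θ hθ, tcPhi_pow r hq θ hθ, tcPhi_pow r hq θ hθ]
  simp only [tcPhi, map_add, map_mul, map_pow, map_natCast, map_ofNat, map_neg]
  push_cast
  linear_combination (algebraMap L K a + algebraMap L K b * (θ + r) + algebraMap L K c * (θ ^ 2 + 2 * r * θ + 2)) * h30 + 5 * algebraMap L K c * hr2

lemma tc_cubic [CharP K 3] (r : ℕ) (hq : Fintype.card L = 3 ^ r) (hfr : Module.finrank L K = 3)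
    (h3 : Nat.gcd r 3 = 1) (θ : K) (hθ : θ ^ 3 = θ + 1) (i : ℕ) (hi : i = 1 ∨ i = 2)
    (a b c u v w : L) :
    Algebra.trace L K (tcPhi θ (-u, -v, u - w) * tcPhi θ (c, b, a) -
      tcPhi θ (c, b, a) ^ (3 ^ (r * i) + 2)) =
    u * a + v * b + w * c - (-((r * i : ℕ) : L) * b ^ 3 + ((r * i : ℕ) : L) * b * c ^ 2
      - b ^ 2 * c + a * c ^ 2 + (1 + ((r * i : ℕ) : L)) * c ^ 3) := by
  have h30 := tc_three (L := L)
  have hch : CharP L 3 := (Algebra.charP_iff (ZMod 3) L 3).mp inferInstance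
  have he : ((r * i : ℕ) : L) ^ 2 = 1 := by
    have h : (((r * i : ℕ) : ZMod 3)) ^ 2 = 1 := by
      have h1 : r % 3 = 1 ∨ r % 3 = 2 := by
        have : ¬ 3 ∣ r := fun h => by
          have := Nat.gcd_eq_right h
          omega
        omega
      rw [Nat.cast_mul, ← ZMod.natCast_mod r 3]
      rcases h1 with h1 | h1 <;> rcases hi with rfl | rfl <;> rw [h1] <;> decide
    have h' := congrArg (ZMod.castHom (dvd_refl 3) L) h
    rwa [map_pow, map_natCast, map_one] at h'
  rw [pow_add, sq, tcPhi_pow r hq θ hθ]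
  generalize ((r * i : ℕ) : L) = ε at *
  rw [tcPhi_mul θ hθ, tcPhi_mul θ hθ, tcPhi_mul θ hθ, tcPhi_sub,
    tcPhi_trace r hq hfr h3 θ hθ]
  grind

end

section
universe uu
variable (L : Type uu) [Field L] [Fintype L] [DecidableEq L] [Algebra (ZMod 3) L]
open Polynomial

lemma tc_irr (r : ℕ) (hq : Fintype.card L = 3 ^ r) (h3 : Nat.gcd r 3 = 1) :
    Irreducible (X ^ 3 - X - 1 : L[X]) := by
  have hdeg : (X ^ 3 - X - 1 : L[X]).natDegree = 3 := by compute_degree!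
  rw [irreducible_iff_roots_eq_zero_of_degree_le_three (by omega) (by omega)]
  rw [Multiset.eq_zero_iff_forall_notMem]
  intro θ hθ
  have : CharP L 3 := (Algebra.charP_iff (ZMod 3) L 3).mp inferInstance
  have h1 := (mem_roots'.mp hθ).2
  simp only [IsRoot.def, eval_sub, eval_pow, eval_X, eval_one] at h1
  have h2 := tc_theta_pow θ (by linear_combination h1) r
  rw [← hq, FiniteField.pow_card] at h2
  have h4 : (r : L) = 0 := by linear_combination -h2
  rw [CharP.cast_eq_zero_iff L 3] at h4
  have := Nat.gcd_eq_right h4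
  omega

/-- the cubic extension -/
lemma tc_ext (r : ℕ) (hq : Fintype.card L = 3 ^ r) (h3 : Nat.gcd r 3 = 1) :
    ∃ (K : Type uu) (_ : Field K) (_ : Fintype K) (_ : Algebra L K) (_ : Algebra (ZMod 3) K)
      (_ : IsScalarTower (ZMod 3) L K) (θ : K), θ ^ 3 = θ + 1 ∧ Module.finrank L K = 3 ∧
      Function.Bijective (tcPhi (L := L) θ) := by
  have hirr := tc_irr L r hq h3
  have : Fact (Irreducible (X ^ 3 - X - 1 : L[X])) := ⟨hirr⟩
  have hdeg : (X ^ 3 - X - 1 : L[X]).natDegree = 3 := by compute_degree!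
  have hm : (X ^ 3 - X - 1 : L[X]).Monic := by monicity!
  let pb := AdjoinRoot.powerBasis hirr.ne_zero
  have : Module.Finite L (AdjoinRoot (X ^ 3 - X - 1 : L[X])) := pb.finite
  have hfin : Finite (AdjoinRoot (X ^ 3 - X - 1 : L[X])) := Module.finite_of_finite L
  have hfr : Module.finrank L (AdjoinRoot (X ^ 3 - X - 1 : L[X])) = 3 := by
    rw [pb.finrank, AdjoinRoot.powerBasis_dim, hdeg]
  refine ⟨AdjoinRoot (X ^ 3 - X - 1 : L[X]), inferInstance, Fintype.ofFinite _, inferInstance,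
    inferInstance, inferInstance, AdjoinRoot.root (X ^ 3 - X - 1 : L[X]), ?_, hfr, ?_⟩
  · have := AdjoinRoot.eval₂_root (X ^ 3 - X - 1 : L[X])
    simp only [eval₂_sub, eval₂_pow, eval₂_X, eval₂_one] at this
    linear_combination this
  · have hcard : Nat.card (L × L × L) = Nat.card (AdjoinRoot (X ^ 3 - X - 1 : L[X])) := by
      rw [Module.natCard_eq_pow_finrank (K := L) (V := AdjoinRoot (X ^ 3 - X - 1 : L[X])), hfr]
      simp only [Nat.card_prod]; ring
    rw [Nat.bijective_iff_surjective_and_card]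
    refine ⟨?_, hcard⟩
    intro x
    obtain ⟨p, hp, hdp⟩ : ∃ p : L[X], AdjoinRoot.mk (X ^ 3 - X - 1 : L[X]) p = x ∧
        p.natDegree < 3 := by
      refine ⟨AdjoinRoot.modByMonicHom hm x, AdjoinRoot.mk_leftInverse hm x, ?_⟩
      obtain ⟨f, rfl⟩ := AdjoinRoot.mk_surjective x
      rw [AdjoinRoot.modByMonicHom_mk]
      have := natDegree_modByMonic_lt f hm (by
        intro h
        rw [h] at hdeg
        simp at hdeg)
      omega
    refine ⟨(p.coeff 2, p.coeff 1, p.coeff 0), ?_⟩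
    rw [← hp]
    conv_rhs => rw [as_sum_range' p 3 hdp]
    simp only [Finset.sum_range_succ, Finset.sum_range_zero, tcPhi, ← C_mul_X_pow_eq_monomial,
      map_add, map_mul, map_pow, AdjoinRoot.mk_X, AdjoinRoot.mk_C, AdjoinRoot.algebraMap_eq,
      map_zero]
    ring
end

lemma tc_ncard {α β : Type*} (f : α → β) (hf : Function.Bijective f) (W : β → ℂ) (V : α → ℂ)
    (h : ∀ a, W (f a) = V a) (val : ℂ) :
    Set.ncard {z : β | W z = val} = Set.ncard {p : α | V p = val} := by
  rw [← Set.ncard_image_of_injective {p : α | V p = val} hf.1]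
  congr 1
  ext z
  constructor
  · intro hz
    obtain ⟨a, rfl⟩ := hf.2 z
    exact ⟨a, (h a).symm.trans hz, rfl⟩
  · rintro ⟨a, ha, rfl⟩
    exact (h a).trans ha

end TCC

/-- For even `r ≥ 2` with `gcd(r,3) = 1`, `n = 3r` and `d = 3^r + 2` or
`d = 3^(2r) + 2`, the value distribution of the Weil sum `S_d(z)`,
`z` ranging over `GF(3^n)`. -/
theorem ternary_cross_correlation_distribution_even (r : ℕ) (hr : 2 ≤ r) (hre : Even r)
    (h3 : Nat.gcd r 3 = 1) (n d : ℕ) (hn : n = 3 * r)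
    (hd : d = 3 ^ r + 2 ∨ d = 3 ^ (2 * r) + 2) :
    Set.ncard {z : GaloisField 3 n | ternaryWeilSum n d z = 0}
        = (3 ^ (3 * r) + 3 ^ (2 * r)) / 2 - 3 ^ r ∧
    Set.ncard {z : GaloisField 3 n | ternaryWeilSum n d z = 3 ^ (2 * r)} = 3 ^ r ∧
    Set.ncard {z : GaloisField 3 n | ternaryWeilSum n d z = 3 ^ (3 * r / 2)}
        = (3 ^ (3 * r - 1) - 3 ^ (2 * r - 1)) / 2 ∧
    Set.ncard {z : GaloisField 3 n | ternaryWeilSum n d z = -3 ^ (3 * r / 2)}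
        = (3 ^ (3 * r - 1) - 3 ^ (2 * r - 1)) / 2 ∧
    Set.ncard {z : GaloisField 3 n | ternaryWeilSum n d z = 2 * 3 ^ (3 * r / 2)}
        = (3 ^ (3 * r - 1) - 3 ^ (2 * r - 1)) / 4 ∧
    Set.ncard {z : GaloisField 3 n | ternaryWeilSum n d z = -(2 * 3 ^ (3 * r / 2))}
        = (3 ^ (3 * r - 1) - 3 ^ (2 * r - 1)) / 4 := by
  classical
  obtain ⟨i, hi, hdi⟩ : ∃ i, (i = 1 ∨ i = 2) ∧ d = 3 ^ (r * i) + 2 := by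
    rcases hd with h | h
    · exact ⟨1, Or.inl rfl, by rw [h, mul_one]⟩
    · exact ⟨2, Or.inr rfl, by rw [h, mul_comm]⟩
  have hq : Fintype.card (GaloisField 3 r) = 3 ^ r := by
    rw [← Nat.card_eq_fintype_card, GaloisField.card 3 r (by omega)]
  obtain ⟨K, _, _, _, _, _, θ, hθ, hfr, hbij⟩ := tc_ext (GaloisField 3 r) r hq h3
  have hchK : CharP K 3 := (Algebra.charP_iff (ZMod 3) K 3).mp inferInstance
  have hcardK : Nat.card K = 3 ^ n := by
    rw [Module.natCard_eq_pow_finrank (K := GaloisField 3 r) (V := K), hfr,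
      Nat.card_eq_fintype_card, hq, hn, ← pow_mul, mul_comm]
  let φ : K ≃ₐ[ZMod 3] GaloisField 3 n := GaloisField.algEquivGaloisField 3 n hcardK
  let f : GaloisField 3 r × GaloisField 3 r × GaloisField 3 r → GaloisField 3 n := fun p => φ (tcPhi θ (-p.1, -p.2.1, p.1 - p.2.2))
  have hf : Function.Bijective f := by
    refine φ.bijective.comp (hbij.comp (f := fun p : GaloisField 3 r × GaloisField 3 r × GaloisField 3 r => (-p.1, -p.2.1, p.1 - p.2.2)) ?_)
    refine Function.bijective_iff_has_inverse.mpr ⟨fun p => (-p.1, -p.2.1, -p.1 - p.2.2), ?_, ?_⟩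
    · rintro ⟨u, v, w⟩; simp
    · rintro ⟨u, v, w⟩; simp
  have hW : ∀ p : GaloisField 3 r × GaloisField 3 r × GaloisField 3 r, ternaryWeilSum n d (f p)
      = tcF ((r * i : ℕ) : GaloisField 3 r) p.1 p.2.1 p.2.2 := by
    rintro ⟨u, v, w⟩
    have hsum : ternaryWeilSum n d (f (u, v, w)) = ∑ x : GaloisField 3 n,
        tcE (Algebra.trace (ZMod 3) (GaloisField 3 n) (f (u, v, w) * x - x ^ d)) := rfl
    rw [hsum, ← Equiv.sum_comp φ.toEquiv, ← Equiv.sum_comp (Equiv.ofBijective _ hbij),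
      Fintype.sum_prod_type]
    unfold tcF
    refine Finset.sum_congr rfl fun c _ => ?_
    rw [Fintype.sum_prod_type]
    refine Finset.sum_congr rfl fun b _ => Finset.sum_congr rfl fun a _ => ?_
    rw [tcPsi_apply, ← tc_cubic (K := K) r hq hfr h3 θ hθ i hi, Algebra.trace_trace,
      ← Algebra.trace_eq_of_algEquiv φ, map_sub φ, map_mul φ, map_pow φ, ← hdi]
    rfl
  have hε : (((r * i : ℕ) : GaloisField 3 r)) ^ 3 = ((r * i : ℕ) : GaloisField 3 r) := by
    have h := ZMod.pow_card ((r * i : ℕ) : ZMod 3)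
    have h' := congrArg (algebraMap (ZMod 3) (GaloisField 3 r)) h
    rwa [map_pow, map_natCast] at h'
  have key := fun val => tc_ncard f hf (ternaryWeilSum n d) _ hW val
  simp only [key]
  exact tc_counts r hr hre hq _ hε
end

section
/- Let r ≥ 3 be an odd integer with gcd(r,3)=1, n = 3r, and let d = 3^r + 2 or d = 3^{2r} + 2. As z ranges over GF(3^n), the Weil sum S_d(z) takes the value 0 exactly 2·3^{3r-1} + 3^{2r-1} - 3^r times, the value 3^{2r} exactly 3^r times, the value 3^{(3r+1)/2} exactly (3^{3r-1}-3^{2r-1})/2 times, and the value -3^{(3r+1)/2} exactly (3^{3r-1}-3^{2r-1})/2 times. -/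
section Aux
open Finset
set_option linter.unusedSectionVars false

theorem coefId {K : Type*} [Field K] [CharP K 3] (k u v w z0 z1 z2 : K) :
   -((z0*w+z1*v+z2*u) + z2*w - ((u^2*w+2*u*v*(v+2*w)+(v^2+2*u*w)*(u+v+w)) + ((v^2+2*u*w)*w+2*v*w*(v+2*w)+w^2*(u+v+w))
     + k*(2*v*w^2+w^2*(v+2*w)) + w^3)) = u * (-(z2+w^2)) + (v^3 + (w*v^2 - (w^2+z1)*v - (z0+z2)*w - (1+k)*w^3)) := by
  have h3 : (3:K) = 0 := by exact_mod_cast CharP.cast_eq_zero K 3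
  grind

theorem normalForm {F : Type*} [Field F] (t k u v w z0 z1 z2 : F) (ht : t^3 = t+k) :
   (z0+z1*t+z2*t^2)*(u+v*t+w*t^2) - (u+v*t+w*t^2)^2*(u+v*(t+1)+w*(t+1)^2) =
   (z0*u + k*(z1*w+z2*v) - (u^2*(u+v+w) + k*(2*u*v*w+(v^2+2*u*w)*(v+2*w)+2*v*w*(u+v+w)) + k*(2*v*w^2+w^2*(v+2*w)) + k^2*w^3))
   + (z0*v+z1*u + (z1*w+z2*v) + k*(z2*w) - (u^2*(v+2*w)+2*u*v*(u+v+w) + (2*u*v*w+(v^2+2*u*w)*(v+2*w)+2*v*w*(u+v+w)) + k*((v^2+2*u*w)*w+2*v*w*(v+2*w)+w^2*(u+v+w)) + (2*v*w^2+w^2*(v+2*w)) + 2*k*w^3)) * t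
   + ((z0*w+z1*v+z2*u) + z2*w - ((u^2*w+2*u*v*(v+2*w)+(v^2+2*u*w)*(u+v+w)) + ((v^2+2*u*w)*w+2*v*w*(v+2*w)+w^2*(u+v+w))
     + k*(2*v*w^2+w^2*(v+2*w)) + w^3)) * t^2 := by
  have h4 : t^4 = t^2+k*t := by linear_combination t*ht
  have h5 : t^5 = t+k+k*t^2 := by linear_combination t^2*ht+ht
  have h6 : t^6 = t^2+2*k*t+k^2 := by linear_combination (t^3+t+k)*ht
  linear_combination ((z1*w+z2*v) - (2*u*v*w+(v^2+2*u*w)*(v+2*w)+2*v*w*(u+v+w))) * ht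
    + (z2*w - ((v^2+2*u*w)*w+2*v*w*(v+2*w)+w^2*(u+v+w))) * h4 - (2*v*w^2+w^2*(v+2*w)) * h5 - w^3*h6

theorem compSq {K : Type*} [Field K] (s b v : K) (hs : s ≠ 0) :
    s*(v-b/s)^2 - b^2/s = s*v^2 - 2*b*v := by
  field_simp
  ring

section K
variable {K : Type*} [Field K] [Fintype K] [DecidableEq K] [CharP K 3] (χ : AddChar K ℂ)

theorem gaussProd (hχ : χ.IsPrimitive) (s : K) (hs : s ≠ 0) :
    (∑ v, χ (s*v^2)) * (∑ v, χ (-s*v^2)) = Fintype.card K := by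
  have h3 : (3:K) = 0 := by exact_mod_cast CharP.cast_eq_zero K 3
  have h2 : (2:K) ≠ 0 := by
    intro h; apply one_ne_zero (α := K); linear_combination h3 - h
  rw [Finset.sum_mul_sum]
  -- w = v + a
  calc ∑ v, ∑ w, χ (s*v^2) * χ (-s*w^2) = ∑ v, ∑ a, χ (s*v^2) * χ (-s*(a+v)^2) := by
        refine sum_congr rfl fun v _ => ?_
        exact (Equiv.sum_comp (Equiv.addRight v) (fun w => χ (s*v^2) * χ (-s*w^2))).symm
    _ = ∑ a, ∑ v, χ (v * (-2*s*a)) * χ (-s*a^2) := by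
        rw [sum_comm]
        refine sum_congr rfl fun a _ => sum_congr rfl fun v _ => ?_
        rw [← AddChar.map_add_eq_mul, ← AddChar.map_add_eq_mul]
        congr 1; ring
    _ = ∑ a : K, (if a = 0 then (Fintype.card K : ℂ) else 0) := by
        refine sum_congr rfl fun a _ => ?_
        rw [← sum_mul, AddChar.sum_mulShift _ hχ]
        by_cases ha : a = 0
        · simp [ha]
        · simp [ha, hs, h2]
    _ = _ := by simp

theorem gaussNeg (hχ : χ.IsPrimitive) (hq : Fintype.card K % 4 = 3) (s : K) (hs : s ≠ 0) :
    (∑ v, χ (-s*v^2)) = - (∑ v, χ (s*v^2)) := by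
  have h3 : (3:K) = 0 := by exact_mod_cast CharP.cast_eq_zero K 3
  have hc : ringChar K ≠ 2 := by
    rw [ringChar.eq K 3]; norm_num
  have key : ∀ s : K, ∑ v, χ (s*v^2) = ∑ y, (quadraticChar K y + 1 : ℂ) * χ (y*s) := by
    intro s
    rw [← sum_fiberwise (s := univ) (g := fun v : K => v^2)]
    refine sum_congr rfl fun y _ => ?_
    have := quadraticChar_card_sqrts hc y
    have h' : (quadraticChar K y + 1 : ℂ) = ((univ.filter (fun v : K => v^2 = y)).card : ℂ) := by
      have h2 : (({x : K | x ^ 2 = y}.toFinset.card : ℤ) : ℂ) = ((quadraticChar K y + 1 : ℤ) : ℂ) := by rw [this]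
      push_cast at h2
      rw [← h2]; congr 2; ext; simp
    rw [h', ← nsmul_eq_mul, ← sum_const]
    refine sum_congr rfl fun v hv => ?_
    rw [(mem_filter.1 hv).2.symm]; congr 1; ring
  have hm1 : quadraticChar K (-1) = -1 := by
    rw [quadraticChar_neg_one_iff_not_isSquare, FiniteField.isSquare_neg_one_iff]; simp [hq]
  rw [eq_neg_iff_add_eq_zero, key, key, ← Equiv.sum_comp (Equiv.neg K), ← sum_add_distrib]
  have : ∀ y : K, ((quadraticChar K ((Equiv.neg K) y) + 1 : ℂ) * χ ((Equiv.neg K) y * -s) + (quadraticChar K y + 1 : ℂ) * χ (y*s)) = 2 * χ (y * s) := by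
    intro y
    have : quadraticChar K (-y) = - quadraticChar K y := by
      rw [← neg_one_mul, map_mul, hm1]; ring
    simp only [Equiv.neg_apply, this, neg_mul_neg]; push_cast; ring
  rw [sum_congr rfl fun y _ => this y, ← mul_sum, AddChar.sum_mulShift _ hχ]
  simp [hs]

/-- the sum in coordinates -/
noncomputable def Rsum (χ : AddChar K ℂ) (k z0 z1 z2 : K) : ℂ :=
  ∑ w, ∑ v, ∑ u, χ (u * (-(z2+w^2)) + (v^3 + (w*v^2 - (w^2+z1)*v - (z0+z2)*w - (1+k)*w^3)))

theorem Rsum_eq (hχ : χ.IsPrimitive) (hcube : ∀ v, χ (v^3) = χ v) (k z0 z1 z2 : K) :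
    Rsum χ k z0 z1 z2 = Fintype.card K * ∑ w, if z2 + w^2 = 0 then
      ∑ v, χ (w*v^2 + (1-w^2-z1)*v - (z0+z2)*w - (1+k)*w^3) else 0 := by
  unfold Rsum
  rw [mul_sum]
  refine sum_congr rfl fun w _ => ?_
  have : ∀ v, ∑ u, χ (u * (-(z2+w^2)) + (v^3 + (w*v^2 - (w^2+z1)*v - (z0+z2)*w - (1+k)*w^3)))
     = (if z2 + w^2 = 0 then (Fintype.card K : ℂ) else 0) * χ (w*v^2 + (1-w^2-z1)*v - (z0+z2)*w - (1+k)*w^3) := by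
    intro v
    simp_rw [AddChar.map_add_eq_mul χ (_ * (-(z2+w^2)))]
    rw [← sum_mul, AddChar.sum_mulShift _ hχ, AddChar.map_add_eq_mul, hcube, ← AddChar.map_add_eq_mul]
    congr 1
    · simp only [neg_eq_zero]; split_ifs <;> simp
    · congr 1; ring
  rw [sum_congr rfl fun v _ => this v, ← mul_sum]
  split_ifs <;> simp

theorem Rsum_zero_one (hχ : χ.IsPrimitive) (hcube : ∀ v, χ (v^3) = χ v) (k z0 z1 : K) :
    Rsum χ k z0 z1 0 = if z1 = 1 then (Fintype.card K : ℂ)^2 else 0 := by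
  rw [Rsum_eq χ hχ hcube, sum_eq_single 0]
  · have := AddChar.sum_mulShift (1-z1) hχ
    simp only [mul_comm _ (1-z1)] at this
    simp [this, sub_eq_zero, eq_comm (a := (1:K))]
    split_ifs <;> ring
  · intro b _ hb; simp [hb]
  · simp

theorem Rsum_nonzero (hχ : χ.IsPrimitive) (hcube : ∀ v, χ (v^3) = χ v) (hq : Fintype.card K % 4 = 3) (k z0 z1 z2 : K) (hz : z2 ≠ 0) :
    Rsum χ k z0 z1 z2 = 0 ∨ Rsum χ k z0 z1 z2 ^ 2 = 3 * (Fintype.card K : ℂ)^3 := by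
  have h3 : (3:K) = 0 := by exact_mod_cast CharP.cast_eq_zero K 3
  rw [Rsum_eq χ hχ hcube]
  by_cases hsq : ∃ s, z2 + s^2 = 0
  swap
  · left
    push Not at hsq
    simp [hsq]
  obtain ⟨s, hs⟩ := hsq
  have hs0 : s ≠ 0 := by rintro rfl; simp at hs; exact hz hs
  have hne : s ≠ -s := by
    intro h; apply hs0; linear_combination s*h3 - h
  set b := 1 - s^2 - z1 with hb
  set c := - (z0+z2)*s - (1+k)*s^3 with hc
  set G := ∑ v, χ (s*v^2) with hG
  set e := c - b^2/s with he
  have hP : ∑ v, χ (s*v^2 + (1-s^2-z1)*v - (z0+z2)*s - (1+k)*s^3) = χ e * G := by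
    rw [hG, ← Equiv.sum_comp (Equiv.subRight (b/s)) (fun v => χ (s*v^2)), mul_sum]
    refine sum_congr rfl fun v _ => ?_
    rw [← AddChar.map_add_eq_mul]
    congr 1
    simp only [Equiv.subRight_apply, he, hc]
    linear_combination v*b*h3 - compSq s b v hs0 + v * hb
  have hM : ∑ v, χ ((-s)*v^2 + (1-(-s)^2-z1)*v - (z0+z2)*(-s) - (1+k)*(-s)^3) = χ (-e) * (-G) := by
    rw [← gaussNeg χ hχ hq s hs0, ← Equiv.sum_comp (Equiv.addRight (b/s)) (fun v => χ (-s*v^2)), mul_sum]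
    refine sum_congr rfl fun v _ => ?_
    rw [← AddChar.map_add_eq_mul]
    congr 1
    simp only [Equiv.coe_addRight, he, hc]
    have := compSq s b (-v) hs0
    linear_combination v*b*h3 + this + v * hb
  have hsum : (∑ w, if z2 + w^2 = 0 then
      ∑ v, χ (w*v^2 + (1-w^2-z1)*v - (z0+z2)*w - (1+k)*w^3) else 0) = χ e * G + χ (-e) * (-G) := by
    rw [← sum_filter]
    have : univ.filter (fun w => z2 + w^2 = 0) = {s, -s} := by
      ext w
      simp only [mem_filter, mem_univ, true_and, mem_insert, mem_singleton]
      rw [← sq_eq_sq_iff_eq_or_eq_neg]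
      constructor
      · intro h; linear_combination h - hs
      · intro h; linear_combination h + hs
    rw [this, sum_pair hne, hP, hM]
  rw [hsum]
  have hζ : χ e ^ 3 = 1 := by
    rw [← AddChar.map_nsmul_eq_pow]
    simp [h3]
  have hζ' : χ (-e) = χ e ^ 2 := by
    rw [← AddChar.map_nsmul_eq_pow]
    congr 1; simp; linear_combination -e*h3
  have hGG : G^2 = - (Fintype.card K : ℂ) := by
    rw [← gaussProd χ hχ s hs0, gaussNeg χ hχ hq s hs0]; ring
  rw [hζ']
  generalize χ e = ζ at *
  have hf : (ζ - 1) * (ζ^2+ζ+1) = 0 := by linear_combination hζ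
  rcases mul_eq_zero.1 hf with h | h
  · left; rw [sub_eq_zero.1 h]; ring
  · right
    have h2 : (ζ - ζ^2)^2 = -3 := by linear_combination (ζ-2)*hζ + h
    linear_combination (Fintype.card K : ℂ)^2 * G^2 * h2 - 3 * (Fintype.card K : ℂ)^2 * hGG
end K

theorem exists_theta {F : Type*} [Field F] [CharP F 3] (σ : F →+* F) (hσ3 : ∀ x, σ (σ (σ x)) = x)
    (hσ : ∃ y, σ y ≠ y) : ∃ t, σ t = t + 1 := by
  have h3 : (3:F) = 0 := by exact_mod_cast CharP.cast_eq_zero F 3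
  have step : ∀ y, y + σ y + σ (σ y) ≠ 0 → ∃ t, σ t = t + 1 := by
    intro y hy
    refine ⟨(σ y - y) / (y + σ y + σ (σ y)), ?_⟩
    have hT : σ (y + σ y + σ (σ y)) = y + σ y + σ (σ y) := by
      simp only [map_add, hσ3]; ring
    rw [map_div₀, hT, map_sub, div_add_one hy]
    congr 1
    linear_combination (-σ y) * h3
  obtain ⟨y, hy⟩ := hσ
  by_cases h : y + σ y + σ (σ y) = 0
  · apply step (y^2)
    intro h'
    apply hy
    simp only [map_pow] at h'
    have h1 : σ (σ y) = - y - σ y := by linear_combination h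
    rw [h1] at h'
    have : (σ y - y)^2 * 2 = 0 := by linear_combination h' - 2 * y * σ y * h3
    have h2 : (2:F) ≠ 0 := by
      intro h; apply one_ne_zero (α := F); linear_combination h3 - h
    simpa [h2, sub_eq_zero] using this
  · exact step y h

theorem mainF {F : Type*} [Field F] [Fintype F] [CharP F 3] (σ : F →+* F)
    (hσ3 : ∀ x, σ (σ (σ x)) = x)
    (hσ : ∃ y, σ y ≠ y) (ψ : AddChar F ℂ) (hψ : ψ ≠ 1) (hψσ : ∀ x, ψ (σ x) = ψ x)
    (hψ3 : ∀ x, ψ (x^3) = ψ x) (q : ℕ) (hcard : Fintype.card F = q^3) (hq : q % 4 = 3) (hq3 : 3 < q)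
    (S : F → ℂ) (hS : ∀ z, S z = ∑ x, ψ (z * x - x^2 * σ x)) :
    {z | S z = (q:ℂ)^2}.ncard = q ∧ ∀ z, S z = 0 ∨ S z = (q:ℂ)^2 ∨ S z ^ 2 = 3 * (q:ℂ)^3 := by
  classical
  have h3 : (3:F) = 0 := by exact_mod_cast CharP.cast_eq_zero F 3
  obtain ⟨t, ht⟩ := exists_theta σ hσ3 hσ
  let K : Subfield F := RingHom.eqLocusField σ (RingHom.id F)
  have hK : ∀ x : K, σ x = x := fun x => x.2
  have cK : CharP K 3 := (algebraMap K F).charP Subtype.val_injective 3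
  -- coordinates
  let f : K × K × K → F := fun p => p.1 + p.2.1 * t + p.2.2 * t^2
  have hf : Function.Bijective f := by
    constructor
    · have inj0 : ∀ a b c : K, (a : F) + b * t + c * t^2 = 0 → a = 0 ∧ b = 0 ∧ c = 0 := by
        intro a b c h
        have e1 : (a : F) + b * (t+1) + c * (t+1)^2 = 0 := by
          have := congrArg σ h
          simpa [hK, ht] using this
        have e2 : (a : F) + b * (t+1+1) + c * (t+1+1)^2 = 0 := by
          have := congrArg σ e1
          simpa [hK, ht] using this
        have hc : (c : F) = 0 := by
          linear_combination (-1) * (h + e1 + e2) + (a + b*(t+1) + c * (t^2+2*t+2)) * h3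
        have hb : (b : F) = 0 := by
          rw [hc] at h e1; linear_combination e1 - h
        have ha : (a : F) = 0 := by
          rw [hc, hb] at h; linear_combination h
        exact ⟨by exact_mod_cast ha, by exact_mod_cast hb, by exact_mod_cast hc⟩
      rintro ⟨a, b, c⟩ ⟨a', b', c'⟩ h
      have := inj0 (a - a') (b - b') (c - c') (by
        push_cast
        simp only [f] at h
        linear_combination h)
      simp only [sub_eq_zero] at this
      simp [this]
    · intro x
      have hT : σ (x + σ x + σ (σ x)) = x + σ x + σ (σ x) := by
        simp only [map_add, hσ3]; ring
      let c : K := ⟨-(x + σ x + σ (σ x)), by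
        change σ _ = _
        rw [map_neg, hT]; rfl⟩
      have hc : (c : F) = -(x + σ x + σ (σ x)) := rfl
      have hb' : σ (σ (x - c * t^2) - (x - c * t^2)) = σ (x - c * t^2) - (x - c * t^2) := by
        simp only [map_sub, map_mul, map_pow, hK, ht, map_add, map_one]
        linear_combination hc + (-σ x - c) * h3
      let b : K := ⟨σ (x - c * t^2) - (x - c * t^2), hb'⟩
      have hb : (b : F) = σ (x - c * t^2) - (x - c * t^2) := rfl
      let a : K := ⟨x - c * t^2 - b * t, by
        change σ _ = _
        rw [map_sub, map_mul, hK, ht]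
        change _ = x - c * t^2 - b * t
        linear_combination -hb⟩
      refine ⟨(a, b, c), ?_⟩
      change (x - c * t^2 - b * t) + b * t + c * t^2 = x
      ring
  let E := Equiv.ofBijective f hf
  have hcK : Fintype.card K = q := by
    have h1 := Fintype.card_congr E
    rw [Fintype.card_prod, Fintype.card_prod, hcard] at h1
    have : Fintype.card K ^ 3 = q ^ 3 := by rw [← h1]; ring
    exact Nat.pow_left_injective (n := 3) (by norm_num) this
  -- the additive character on K
  let χ : AddChar K ℂ := 
    { toFun := fun w => ψ (-w * t^2)
      map_zero_eq_one' := by simp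
      map_add_eq_mul' := fun a b => by
        rw [← AddChar.map_add_eq_mul]; congr 1; push_cast; ring }
  have hχdef : ∀ w : K, χ w = ψ (-w * t^2) := fun w => rfl
  have hne0 : ∀ x, ψ x ≠ 0 := by
    intro x h
    have := AddChar.map_add_eq_mul ψ x (-x)
    simp [h] at this
  have hk0 : ∀ u : K, ψ u = 1 := by
    intro u
    have : (u : F) = σ (u * t) - u * t := by rw [map_mul, hK, ht]; ring
    rw [this, AddChar.map_sub_eq_div, hψσ, div_self]
    exact hne0 _
  have hk1 : ∀ u : K, ψ (u * t) = 1 := by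
    intro u
    have : (u : F) * t = (σ ((-u) * t^2) - (-u) * t^2) + u := by
      rw [map_mul, map_neg, map_pow, hK, ht]; linear_combination u * t * h3
    rw [this, AddChar.map_add_eq_mul, AddChar.map_sub_eq_div, hψσ, div_self, hk0, mul_one]
    exact hne0 _
  have hψχ : ∀ a b c : K, ψ (a + b * t + c * t^2) = χ (-c) := by
    intro a b c
    rw [AddChar.map_add_eq_mul, AddChar.map_add_eq_mul, hk0, hk1, hχdef]; simp
  have hχ1 : χ ≠ 1 := by
    intro h
    apply hψ
    ext x
    obtain ⟨⟨a, b, c⟩, rfl⟩ := hf.2 x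
    simp only [f]
    rw [hψχ, h]; simp
  have hχ := AddChar.IsPrimitive.of_ne_one hχ1
  -- κ
  let k : K := ⟨t^3 - t, by
    change σ _ = _
    rw [map_sub, map_pow, ht]; change _ = t^3 - t
    linear_combination (t^2 + t) * h3⟩
  have hk : t^3 = t + k := by change t^3 = t + (t^3 - t); ring
  have hcube : ∀ v : K, χ (v^3) = χ v := by
    intro v
    rw [hχdef v, ← hψ3]
    have : (-(v:F) * t^2)^3 = ((-v^3 * k^2 : K) : F) + ((-v^3 * (k + k) : K) : F) * t + ((-v^3 : K) : F) * t^2 := by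
      push_cast
      linear_combination (-(v:F)^3) * (t^3 + t + k) * hk
    rw [this, hψχ]; simp
  have hSE : ∀ z0 z1 z2 : K, S (f (z0, z1, z2)) = Rsum χ k z0 z1 z2 := by
    intro z0 z1 z2
    rw [hS, ← E.sum_comp, Rsum, Fintype.sum_prod_type_right, Fintype.sum_prod_type_right]
    refine sum_congr rfl fun w _ => sum_congr rfl fun v _ => sum_congr rfl fun u _ => ?_
    have hE : E (u, v, w) = u + v * t + w * t^2 := rfl
    have hσE : σ (u + v * t + w * t^2) = u + v * (t+1) + w * (t+1)^2 := by
      simp [hK, ht]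
    rw [hE, hσE, ← coefId k u v w z0 z1 z2, ← hψχ (z0*u + k*(z1*w+z2*v) - (u^2*(u+v+w) + k*(2*u*v*w+(v^2+2*u*w)*(v+2*w)+2*v*w*(u+v+w)) + k*(2*v*w^2+w^2*(v+2*w)) + k^2*w^3)) (z0*v+z1*u + (z1*w+z2*v) + k*(z2*w) - (u^2*(v+2*w)+2*u*v*(u+v+w) + (2*u*v*w+(v^2+2*u*w)*(v+2*w)+2*v*w*(u+v+w)) + k*((v^2+2*u*w)*w+2*v*w*(v+2*w)+w^2*(u+v+w)) + (2*v*w^2+w^2*(v+2*w)) + 2*k*w^3))]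
    congr 1
    simp only [f]
    push_cast
    exact normalForm t k u v w z0 z1 z2 hk
  have hq0 : (q:ℂ) ≠ 0 := by
    have : q ≠ 0 := by omega
    exact_mod_cast this
  have hne : ((q:ℂ)^2)^2 ≠ 3 * (q:ℂ)^3 := by
    intro h
    have h1 : (q:ℂ)^3 * (q - 3) = 0 := by linear_combination h
    have h2 : (q:ℂ) = 3 := by simpa [hq0, sub_eq_zero] using h1
    have : q = 3 := by exact_mod_cast h2
    omega
  have cls : ∀ z0 z1 z2 : K, (z1 = 1 ∧ z2 = 0 ∧ S (f (z0,z1,z2)) = (q:ℂ)^2) ∨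
      (¬ (z1 = 1 ∧ z2 = 0) ∧ (S (f (z0,z1,z2)) = 0 ∨ S (f (z0,z1,z2)) ^ 2 = 3 * (q:ℂ)^3)) := by
    intro z0 z1 z2
    rw [hSE]
    by_cases h2 : z2 = 0
    · subst h2
      rw [Rsum_zero_one χ hχ hcube, hcK]
      by_cases h1 : z1 = 1 <;> simp [h1]
    · right
      have := Rsum_nonzero χ hχ hcube (by rw [hcK]; exact hq) k z0 z1 z2 h2
      rw [hcK] at this
      exact ⟨by simp [h2], this⟩
  constructor
  · have : {z | S z = (q:ℂ)^2} = Set.range (fun a : K => f (a, 1, 0)) := by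
      ext z
      obtain ⟨⟨a, b, c⟩, rfl⟩ := hf.2 z
      simp only [Set.mem_ofPred_eq, Set.mem_range]
      constructor
      · intro h
        rcases cls a b c with ⟨h1, h2, _⟩ | ⟨_, h1 | h1⟩
        · exact ⟨a, by rw [h1, h2]⟩
        · rw [h1] at h; exact absurd h.symm (pow_ne_zero 2 hq0)
        · rw [h] at h1; exact absurd h1 hne
      · rintro ⟨a', h⟩
        rw [← h]
        rcases cls a' 1 0 with ⟨_, _, h'⟩ | ⟨h', _⟩
        · exact h'
        · simp at h'
    rw [this, ← Set.image_univ, Set.ncard_image_of_injective, Set.ncard_univ, Nat.card_eq_fintype_card, hcK]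
    intro a b h
    have := hf.1 h
    simpa using this
  · intro z
    obtain ⟨⟨a, b, c⟩, rfl⟩ := hf.2 z
    rcases cls a b c with ⟨h1, h2, h⟩ | ⟨_, h1 | h1⟩
    · exact Or.inr (Or.inl h)
    · exact Or.inl h1
    · exact Or.inr (Or.inr h1)

theorem moments {F : Type*} [Field F] [Fintype F] [CharP F 3] (g : F → F) (h0 : g 0 = 0)
    (hodd : ∀ x, g (-x) = - g x) (ψ : AddChar F ℂ) (hψ : ψ ≠ 1)
    (S : F → ℂ) (hS : ∀ z, S z = ∑ x, ψ (z * x - g x)) :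
    ∑ z, S z = Fintype.card F ∧ ∑ z, S z ^ 2 = (Fintype.card F : ℂ)^2 := by
  classical
  have hp := AddChar.IsPrimitive.of_ne_one hψ
  constructor
  · simp_rw [hS, sub_eq_add_neg, AddChar.map_add_eq_mul]
    rw [sum_comm]
    simp_rw [← sum_mul, AddChar.sum_mulShift _ hp]
    simp [h0]
  · have : ∀ z, S z ^ 2 = ∑ x, ∑ y, ψ (z * (x + y)) * ψ (- g x - g y) := by
      intro z
      rw [hS, sq, sum_mul_sum]
      refine sum_congr rfl fun x _ => sum_congr rfl fun y _ => ?_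
      rw [← AddChar.map_add_eq_mul, ← AddChar.map_add_eq_mul]
      congr 1; ring
    simp_rw [this]
    rw [sum_comm]
    have h2 : ∀ x : F, ∑ z, ∑ y, ψ (z * (x + y)) * ψ (- g x - g y) = Fintype.card F := by
      intro x
      rw [sum_comm]
      simp_rw [← sum_mul, AddChar.sum_mulShift _ hp]
      rw [sum_eq_single (-x)]
      · simp [hodd]
      · intro b _ hb
        have : x + b ≠ 0 := by
          intro h; apply hb; linear_combination h
        simp [this]
      · simp
    simp_rw [h2]
    simp [sq]

theorem countF {F : Type*} [Fintype F] (S : F → ℂ) (B A : ℂ) (hB : B ≠ 0) (hA : A ≠ 0)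
    (hBA : B ≠ A) (hBA' : B ≠ -A)
    (cls : ∀ z, S z = 0 ∨ S z = B ∨ S z = A ∨ S z = -A) :
    ({z | S z = 0}.ncard + {z | S z = B}.ncard + {z | S z = A}.ncard + {z | S z = -A}.ncard
      = Fintype.card F) ∧
    (∑ z, S z = B * {z | S z = B}.ncard + A * {z | S z = A}.ncard - A * {z | S z = -A}.ncard) ∧
    (∑ z, S z ^ 2 = B^2 * {z | S z = B}.ncard + A^2 * {z | S z = A}.ncard + A^2 * {z | S z = -A}.ncard) := by
  classical
  have hAA : A ≠ -A := by
    intro h; apply hA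
    have : (2:ℂ) * A = 0 := by linear_combination h
    simpa using this
  have nc : ∀ c : ℂ, ({z | S z = c}.ncard : ℕ) = ∑ z, if S z = c then 1 else 0 := by
    intro c
    rw [sum_boole, Set.ncard_eq_toFinset_card']
    simp
  have hn : ¬ (-A = 0) := by simpa using hA
  have hB' := hB.symm
  have hA' := hA.symm
  have q1 := hBA.symm
  have q2 := hBA'.symm
  have q3 := hAA.symm
  have hn' : ¬ (0 = -A) := fun h => hn h.symm
  refine ⟨?_, ?_, ?_⟩
  · simp only [nc, ← sum_add_distrib]
    rw [Fintype.card_eq_sum_ones]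
    refine sum_congr rfl fun z _ => ?_
    rcases cls z with h | h | h | h <;> rw [h] <;> simp [*]
  · simp only [nc]
    push_cast
    simp only [mul_sum, ← sum_add_distrib, ← sum_sub_distrib]
    refine sum_congr rfl fun z _ => ?_
    rcases cls z with h | h | h | h <;> rw [h] <;> simp [*]
  · simp only [nc]
    push_cast
    simp only [mul_sum, ← sum_add_distrib, ← sum_sub_distrib]
    refine sum_congr rfl fun z _ => ?_
    rcases cls z with h | h | h | h <;> rw [h] <;> simp [*]

end Aux

/-- For odd `r ≥ 3` with `gcd(r,3) = 1`, `n = 3r` and `d = 3^r + 2` or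
`d = 3^(2r) + 2`, the value distribution of the Weil sum `S_d(z)`,
`z` ranging over `GF(3^n)`. -/
theorem ternary_cross_correlation_distribution_odd (r : ℕ) (hr : 3 ≤ r) (hro : Odd r)
    (h3 : Nat.gcd r 3 = 1) (n d : ℕ) (hn : n = 3 * r)
    (hd : d = 3 ^ r + 2 ∨ d = 3 ^ (2 * r) + 2) :
    Set.ncard {z : GaloisField 3 n | ternaryWeilSum n d z = 0}
        = 2 * 3 ^ (3 * r - 1) + 3 ^ (2 * r - 1) - 3 ^ r ∧
    Set.ncard {z : GaloisField 3 n | ternaryWeilSum n d z = 3 ^ (2 * r)} = 3 ^ r ∧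
    Set.ncard {z : GaloisField 3 n | ternaryWeilSum n d z = 3 ^ ((3 * r + 1) / 2)}
        = (3 ^ (3 * r - 1) - 3 ^ (2 * r - 1)) / 2 ∧
    Set.ncard {z : GaloisField 3 n | ternaryWeilSum n d z = -3 ^ ((3 * r + 1) / 2)}
        = (3 ^ (3 * r - 1) - 3 ^ (2 * r - 1)) / 2 := by
  have hr0 : 3 * r ≠ 0 := by omega
  subst hn
  have hF : Fintype.card (GaloisField 3 (3*r)) = (3^r)^3 := by
    rw [← Nat.card_eq_fintype_card, GaloisField.card 3 _ hr0, ← pow_mul]; congr 1; ring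
  have hfr : Module.finrank (ZMod 3) (GaloisField 3 (3*r)) = 3 * r := GaloisField.finrank 3 hr0
  have fd : Module.Finite (ZMod 3) (GaloisField 3 (3*r)) := Module.finite_of_finrank_pos (by omega)
  have ia : Algebra.IsAlgebraic (ZMod 3) (GaloisField 3 (3*r)) := Algebra.IsAlgebraic.of_finite _ _
  set φ := FiniteField.frobeniusAlgEquivOfAlgebraic (ZMod 3) (GaloisField 3 (3*r)) with hφ
  have hord : orderOf φ = 3 * r := by
    rw [hφ, FiniteField.orderOf_frobeniusAlgEquivOfAlgebraic, hfr]
  have hφpow : ∀ (m : ℕ) (x : GaloisField 3 (3*r)), (φ ^ m) x = x ^ (3 ^ m) := by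
    intro m x
    rw [AlgEquiv.coe_pow, hφ, FiniteField.coe_frobeniusAlgEquivOfAlgebraic_iterate, ZMod.card]
  obtain ⟨m, hm, hdm⟩ : ∃ m, (m = r ∨ m = 2 * r) ∧ d = 3 ^ m + 2 := by
    rcases hd with h | h
    · exact ⟨r, Or.inl rfl, h⟩
    · exact ⟨2 * r, Or.inr rfl, h⟩
  set σ := φ ^ m with hσdef
  have hσ3 : ∀ x, σ (σ (σ x)) = x := by
    have : σ ^ 3 = 1 := by
      rw [hσdef, ← pow_mul, ← orderOf_dvd_iff_pow_eq_one, hord]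
      rcases hm with h | h
      · exact ⟨1, by rw [h]; ring⟩
      · exact ⟨2, by rw [h]; ring⟩
    intro x
    exact DFunLike.congr_fun this x
  have hσ : ∃ y, σ y ≠ y := by
    by_contra! h
    have h1 : φ ^ m = 1 := AlgEquiv.ext h
    rw [← orderOf_dvd_iff_pow_eq_one, hord] at h1
    have := Nat.le_of_dvd (by omega) h1
    omega
  have hprim : IsPrimitiveRoot (Complex.exp (2 * Real.pi * Complex.I / 3)) 3 := by
    have := Complex.isPrimitiveRoot_exp 3 (by norm_num)
    exact_mod_cast this
  have hω : Complex.exp (2 * Real.pi * Complex.I / 3) ^ 3 = 1 := hprim.pow_eq_one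
  let ψ : AddChar (GaloisField 3 (3*r)) ℂ := (AddChar.zmodChar 3 hω).compAddMonoidHom
    (Algebra.trace (ZMod 3) (GaloisField 3 (3*r))).toAddMonoidHom
  have hψdef : ∀ x, ψ x = Complex.exp (2 * Real.pi * Complex.I / 3) ^
      (Algebra.trace (ZMod 3) (GaloisField 3 (3*r)) x).val := fun x => rfl
  have hψ : ψ ≠ 1 := by
    intro h
    obtain ⟨x, hx⟩ := Algebra.trace_surjective (ZMod 3) (GaloisField 3 (3*r)) 1
    have h1 := hψdef x
    rw [h, hx] at h1
    have h2 : (1 : ZMod 3).val = 1 := rfl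
    rw [h2, pow_one] at h1
    exact hprim.ne_one (by norm_num) h1.symm
  have hψσ : ∀ x, ψ (σ x) = ψ x := by
    intro x
    rw [hψdef, hψdef, Algebra.trace_eq_of_algEquiv]
  have hψ3 : ∀ x, ψ (x^3) = ψ x := by
    intro x
    have : x ^ 3 = φ x := by simpa using (hφpow 1 x).symm
    rw [this, hψdef, hψdef, Algebra.trace_eq_of_algEquiv]
  have hxd : ∀ x : GaloisField 3 (3*r), x ^ d = x^2 * σ x := by
    intro x
    rw [hσdef, hφpow, hdm]; ring
  have hS : ∀ z, ternaryWeilSum (3*r) d z = ∑ x, ψ (z * x - x^2 * σ x) := by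
    intro z
    unfold ternaryWeilSum
    refine Finset.sum_congr rfl fun x _ => ?_
    rw [hψdef, hxd]
  have hq4 : 3 ^ r % 4 = 3 := by
    obtain ⟨k, rfl⟩ := hro
    rw [pow_succ, pow_mul, Nat.mul_mod, Nat.pow_mod]
    norm_num
  have hq3 : 3 < 3 ^ r := by
    calc 3 < 3 ^ 3 := by norm_num
      _ ≤ 3 ^ r := Nat.pow_le_pow_right (by norm_num) hr
  obtain ⟨hN1, hcls⟩ := mainF (σ : GaloisField 3 (3*r) →+* GaloisField 3 (3*r)) hσ3 hσ ψ hψ hψσ hψ3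
    (3^r) hF hq4 hq3 (ternaryWeilSum (3*r) d) hS
  obtain ⟨hM1, hM2⟩ := moments (fun x => x^2 * σ x) (by simp) (by intro x; simp) ψ hψ
    (ternaryWeilSum (3*r) d) hS
  obtain ⟨j, hj⟩ := hro
  have hexp : (3 * r + 1) / 2 = 3 * j + 2 := by omega
  have e1 : 3 * r - 1 = 6 * j + 2 := by omega
  have e2 : 2 * r - 1 = 4 * j + 1 := by omega
  rw [hexp, e1, e2]
  generalize hT : (3 : ℕ) ^ j = T at *
  have hTr : (3:ℕ) ^ r = 3 * T^2 := by rw [hj, ← hT]; ring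
  have hT2 : 2 ≤ T := by
    have : 3 ^ 1 ≤ 3 ^ j := Nat.pow_le_pow_right (by norm_num) (by omega)
    omega
  have hTc : (3:ℂ)^j = T := by rw [← hT]; push_cast; rfl
  have cA : (3:ℂ) ^ (3 * j + 2) = 9 * T^3 := by rw [← hTc]; ring
  have cB : (3:ℂ) ^ (2 * r) = 9 * T^4 := by rw [← hTc, hj]; ring
  have f1 : 3 ^ (6 * j + 2) = 9 * T^6 := by rw [← hT]; ring
  have f2 : 3 ^ (4 * j + 1) = 3 * T^4 := by rw [← hT]; ring
  rw [hF] at hM1 hM2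
  simp only [hTr] at hN1 hcls hM1 hM2 hF ⊢
  push_cast at hN1 hcls hM1 hM2
  rw [cA, cB, f1, f2]
  have hB' : ((3:ℂ) * T^2)^2 = 9 * T^4 := by ring
  rw [hB'] at hN1
  have hT0 : (T:ℂ) ≠ 0 := by
    have : T ≠ 0 := by omega
    exact_mod_cast this
  have hcls' : ∀ z, ternaryWeilSum (3*r) d z = 0 ∨ ternaryWeilSum (3*r) d z = 9 * T^4 ∨
      ternaryWeilSum (3*r) d z = 9 * T^3 ∨ ternaryWeilSum (3*r) d z = -(9 * T^3) := by
    intro z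
    rcases hcls z with h | h | h
    · exact Or.inl h
    · exact Or.inr (Or.inl (by rw [h]; ring))
    · right; right
      rw [← sq_eq_sq_iff_eq_or_eq_neg, h]; ring
  obtain ⟨c1, c2, c3⟩ := countF (ternaryWeilSum (3*r) d) (9 * T^4) (9 * T^3) (by simp [hT0])
    (by simp [hT0])
    (by
      norm_cast
      intro h
      have : T^3 * T = T^3 * 1 := by ring_nf at h ⊢; omega
      have := Nat.eq_of_mul_eq_mul_left (by positivity) this
      omega)
    (by
      intro h
      have h' : (9 * (T:ℂ)^4 + 9 * T^3) = 0 := by linear_combination h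
      norm_cast at h'
      have : 0 < 9 * T^3 := by positivity
      omega) hcls'
  rw [hM1] at c2
  rw [hM2] at c3
  rw [hF] at c1
  rw [hN1] at c1 c2 c3
  push_cast at c2 c3
  set N0 := Set.ncard {z | ternaryWeilSum (3*r) d z = 0}
  set NA := Set.ncard {z | ternaryWeilSum (3*r) d z = 9 * (T:ℂ)^3}
  set NM := Set.ncard {z | ternaryWeilSum (3*r) d z = -(9 * (T:ℂ)^3)}
  have hAM : (NA : ℂ) = NM := by
    have : (9 * (T:ℂ)^3) * (NA - NM) = 0 := by linear_combination -c2
    have h' : (NA : ℂ) - NM = 0 := by simpa [hT0] using this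
    linear_combination h'
  have hAM' : NA = NM := by exact_mod_cast hAM
  have h2 : (2 : ℂ) * NA + 3 * T^4 = 9 * T^6 := by
    have : (81 * (T:ℂ)^6) * (2 * NA + 3 * T^4 - 9 * T^6) = 0 := by
      rw [← hAM] at c3
      linear_combination -c3
    have h' : (2 * (NA : ℂ) + 3 * T^4 - 9 * T^6) = 0 := by simpa [hT0] using this
    linear_combination h'
  have h2' : 2 * NA + 3 * T^4 = 9 * T^6 := by exact_mod_cast h2
  have c1' : N0 + 3 * T^2 + NA + NM = 27 * T^6 := by rw [c1]; ring
  refine ⟨?_, hN1, ?_, ?_⟩ <;> omega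
end

section
/- Let m ≥ 1 and let l ≥ 2 be an even integer, and set q = 2^{2lm}. For a in GF(q), the character sum Σ_{x ∈ GF(q)} (-1)^{Tr(a·x^{2^m+1})} equals 2^{2lm} if a = 0; equals -2^{(l+1)m} if a is a nonzero (2^m+1)-th power in GF(q) (i.e., a = y^{2^m+1} for some nonzero y in GF(q)); and equals 2^{lm} if a is not a (2^m+1)-th power in GF(q). -/
namespace CharSum

set_option linter.unusedSectionVars false

open Finset

variable {F : Type*} [Field F] [Fintype F] [Algebra (ZMod 2) F]

noncomputable def chi (F : Type*) [Field F] [Fintype F] [Algebra (ZMod 2) F] : AddChar F ℤ where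
  toFun x := (-1 : ℤ) ^ (Algebra.trace (ZMod 2) F x).val
  map_zero_eq_one' := by simp
  map_add_eq_mul' x y := by
    rw [map_add]
    generalize Algebra.trace (ZMod 2) F x = u
    generalize Algebra.trace (ZMod 2) F y = v
    revert u v
    decide

theorem chi_apply (x : F) : chi F x = (-1 : ℤ) ^ (Algebra.trace (ZMod 2) F x).val := rfl

theorem chi_primitive : (chi F).IsPrimitive := by
  apply AddChar.IsPrimitive.of_ne_one
  intro h
  obtain ⟨x, hx⟩ := Algebra.trace_surjective (ZMod 2) F 1
  have := chi_apply x
  rw [h, hx] at this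
  revert this
  simp [ZMod.val_one]

theorem trace_frob (x : F) (k : ℕ) :
    Algebra.trace (ZMod 2) F (x ^ 2 ^ k) = Algebra.trace (ZMod 2) F x := by
  induction k with
  | zero => simp
  | succ k ih =>
    rw [pow_succ, pow_mul, ← ih]
    have : CharP F 2 := charP_of_injective_algebraMap (algebraMap (ZMod 2) F).injective 2
    have := Algebra.trace_eq_of_algEquiv (FiniteField.frobeniusAlgEquiv (ZMod 2) F 2) (x ^ 2 ^ k)
    simpa using this

theorem chi_frob (x : F) (k : ℕ) : chi F (x ^ 2 ^ k) = chi F x := by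
  rw [chi_apply, chi_apply, trace_frob]

variable [DecidableEq F]

theorem sum_units (f : F → ℤ) : ∑ x, f x = f 0 + ∑ u : Fˣ, f u := by
  rw [← Finset.add_sum_erase _ _ (Finset.mem_univ (0 : F))]
  congr 1
  symm
  refine Finset.sum_bij (fun u _ => (u : F)) ?_ ?_ ?_ ?_
  · intro u _; simp
  · intro u _ v _ h; exact Units.ext h
  · intro b hb
    exact ⟨Units.mk0 b (by simpa using hb), by simp, rfl⟩
  · intro _ _; rfl

theorem card_fiber (d : ℕ) (hd : d ∣ Fintype.card Fˣ) :
    #{u : Fˣ | u ^ d = 1} = d := by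
  have := IsCyclic.card_powMonoidHom_ker Fˣ d
  rw [Nat.card_eq_fintype_card (α := Fˣ), Nat.gcd_eq_right hd] at this
  refine Eq.trans ?_ this
  rw [Nat.card_eq_fintype_card, ← Fintype.card_subtype]
  apply Fintype.card_congr
  exact Equiv.subtypeEquivRight (fun u => by simp [MonoidHom.mem_ker])

theorem sum_mod (d : ℕ) (hd0 : d ≠ 0) (hd : d ∣ Fintype.card Fˣ) (f : F → ℤ) :
    (d : ℤ) ∣ (∑ x, f (x ^ d)) - f 0 := by
  rw [sum_units]
  simp only [zero_pow hd0, add_sub_cancel_left]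
  have := Finset.sum_comp (s := univ) (fun u : Fˣ => f u) (fun u : Fˣ => u ^ d)
  simp only [Units.val_pow_eq_pow_val] at this
  rw [this]
  apply Finset.dvd_sum
  intro b hb
  have h1 := MonoidHom.card_fiber_eq_of_mem_range (powMonoidHom d : Fˣ →* Fˣ) (x := b) (y := 1)
    (by simpa using hb) ⟨1, by simp⟩
  simp only [powMonoidHom_apply] at h1
  rw [h1, card_fiber d hd, nsmul_eq_mul]
  exact dvd_mul_right _ _

theorem add_pow_Q (m : ℕ) (x y : F) : (x + y) ^ 2 ^ m = x ^ 2 ^ m + y ^ 2 ^ m := by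
  have : CharP F 2 := charP_of_injective_algebraMap (algebraMap (ZMod 2) F).injective 2
  exact add_pow_char_pow x y 2 m

theorem inner_sum (m : ℕ) (a y : F) :
    ∑ x, chi F (a * (x ^ 2 ^ m * y + x * y ^ 2 ^ m)) =
      if a * y + a ^ 2 ^ m * (y ^ 2 ^ m) ^ 2 ^ m = 0 then (Fintype.card F : ℤ) else 0 := by
  have : CharP F 2 := charP_of_injective_algebraMap (algebraMap (ZMod 2) F).injective 2
  have h1 := AddChar.sum_mulShift (a * y + a ^ 2 ^ m * (y ^ 2 ^ m) ^ 2 ^ m) (chi_primitive (F := F))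
  have h2 := (iterateFrobeniusEquiv F 2 m).bijective.sum_comp
    (fun x => chi F (x * (a * y + a ^ 2 ^ m * (y ^ 2 ^ m) ^ 2 ^ m)))
  rw [h1] at h2
  push_cast at h2
  rw [← h2]
  apply Finset.sum_congr rfl
  intro x _
  rw [iterateFrobeniusEquiv_def]
  rw [mul_add, AddChar.map_add_eq_mul, ← chi_frob (a * (x * y ^ 2 ^ m)) m,
    ← AddChar.map_add_eq_mul]
  congr 1
  rw [mul_pow, mul_pow]
  ring

theorem sq_sum (m : ℕ) (a : F) :
    (∑ x, chi F (a * x ^ (2 ^ m + 1))) ^ 2 =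
      Fintype.card F * ∑ y, if a * y + a ^ 2 ^ m * (y ^ 2 ^ m) ^ 2 ^ m = 0 then
        chi F (a * y ^ (2 ^ m + 1)) else 0 := by
  have : CharP F 2 := charP_of_injective_algebraMap (algebraMap (ZMod 2) F).injective 2
  have h2 : (2 : F) = 0 := CharTwo.two_eq_zero
  have : ∀ x : F, ∑ y, chi F (a * x ^ (2 ^ m + 1)) * chi F (a * y ^ (2 ^ m + 1)) =
      ∑ y, chi F (a * y ^ (2 ^ m + 1)) * chi F (a * (x ^ 2 ^ m * y + x * y ^ 2 ^ m)) := by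
    intro x
    rw [← Fintype.sum_equiv (Equiv.addLeft x) _ _ (fun _ => rfl)]
    apply Finset.sum_congr rfl
    intro y _
    rw [← AddChar.map_add_eq_mul, ← AddChar.map_add_eq_mul]
    congr 1
    simp only [Equiv.coe_addLeft, pow_succ, add_pow_Q]
    linear_combination (a * x ^ 2 ^ m * x) * h2
  rw [sq, Finset.sum_mul_sum, Finset.sum_congr rfl (fun x _ => this x), Finset.sum_comm,
    Finset.mul_sum]
  apply Finset.sum_congr rfl
  intro y _
  rw [← Finset.mul_sum, inner_sum]
  split_ifs <;> ring

theorem dvd_card (m l : ℕ) (hF : Fintype.card F = 2 ^ (2 * l * m)) :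
    (2 ^ m - 1) * (2 ^ m + 1) ∣ Fintype.card Fˣ := by
  rw [Fintype.card_units, hF, show 2 * l * m = 2 * m * l by ring, pow_mul]
  have : (2 ^ m - 1) * (2 ^ m + 1) = 2 ^ (2 * m) - 1 := by
    rw [mul_comm, ← Nat.sq_sub_sq, one_pow, ← pow_mul, mul_comm 2 m]
  rw [this]
  simpa using Nat.sub_dvd_pow_sub_pow (2 ^ (2 * m)) 1 l

theorem isPow_of (m l : ℕ) (hm : 1 ≤ m) (hF : Fintype.card F = 2 ^ (2 * l * m)) (c : F)
    (hc0 : c ≠ 0) (hc : c ^ 2 ^ m = c) : ∃ y : F, c = y ^ (2 ^ m + 1) := by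
  obtain ⟨g, hg⟩ := IsCyclic.exists_generator (α := Fˣ)
  have hQ : 2 ≤ 2 ^ m := by simpa using Nat.pow_le_pow_right (n := 2) (by norm_num) hm
  obtain ⟨k, hk⟩ := (mem_powers_iff_mem_zpowers (y := Units.mk0 c hc0)).2 (hg _)
  simp only at hk
  have h1 : (Units.mk0 c hc0) ^ (2 ^ m - 1) = 1 := by
    apply Units.ext
    simp only [Units.val_pow_eq_pow_val, Units.val_mk0, Units.val_one]
    apply mul_right_cancel₀ hc0
    rw [← pow_succ, Nat.sub_add_cancel (by omega), hc, one_mul]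
  rw [← hk, ← pow_mul] at h1
  have h2 := orderOf_dvd_of_pow_eq_one h1
  rw [orderOf_eq_card_of_forall_mem_zpowers hg, Nat.card_eq_fintype_card] at h2
  have h3 := (dvd_card m l hF).trans h2
  rw [mul_comm k] at h3
  obtain ⟨j, rfl⟩ := Nat.dvd_of_mul_dvd_mul_left (by omega) h3
  refine ⟨((g ^ j : Fˣ) : F), ?_⟩
  have := congrArg Units.val hk
  simp only [Units.val_mk0] at this
  rw [← this, ← Units.val_pow_eq_pow_val, ← pow_mul, mul_comm j]

theorem pow_pow_fix (Q : ℕ) (z : F) (hz : z ^ Q = z) (l : ℕ) : z ^ Q ^ l = z := by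
  induction l with
  | zero => simp
  | succ l ih => rw [pow_succ, pow_mul, ih, hz]

theorem chi_fix (m l : ℕ) (hF : Fintype.card F = 2 ^ (2 * l * m)) (z : F)
    (hz : z ^ 2 ^ m = z) : chi F z = 1 := by
  have : CharP F 2 := charP_of_injective_algebraMap (algebraMap (ZMod 2) F).injective 2
  have hr : Module.finrank (ZMod 2) F = m * l + m * l := by
    have := Module.card_eq_pow_finrank (K := ZMod 2) (V := F)
    rw [hF, ZMod.card] at this
    have := Nat.pow_right_injective (le_refl 2) this
    rw [← this]; ring
  have h := FiniteField.algebraMap_trace_eq_sum_pow (ZMod 2) F z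
  rw [hr, Finset.sum_range_add, Nat.card_zmod] at h
  have h2 : ∀ i, z ^ 2 ^ (m * l + i) = z ^ 2 ^ i := by
    intro i
    rw [pow_add, pow_mul, pow_mul, pow_pow_fix _ z hz]
  simp only [h2, CharTwo.add_self_eq_zero] at h
  rw [map_eq_zero] at h
  rw [chi_apply, h]; simp

theorem fix_sum (m l : ℕ) (hm : 1 ≤ m) (hF : Fintype.card F = 2 ^ (2 * l * m)) :
    (∑ y : F, if 1 * y + 1 ^ 2 ^ m * (y ^ 2 ^ m) ^ 2 ^ m = 0 then
        chi F (1 * y ^ (2 ^ m + 1)) else 0) = (2 ^ m) ^ 2 := by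
  have : CharP F 2 := charP_of_injective_algebraMap (algebraMap (ZMod 2) F).injective 2
  have hQ : 2 ≤ 2 ^ m := by simpa using Nat.pow_le_pow_right (n := 2) (by norm_num) hm
  have h1 : ∀ y : F, (if 1 * y + 1 ^ 2 ^ m * (y ^ 2 ^ m) ^ 2 ^ m = 0 then
        chi F (1 * y ^ (2 ^ m + 1)) else 0) = if (y ^ 2 ^ m) ^ 2 ^ m = y then 1 else 0 := by
    intro y
    simp only [one_mul, one_pow, CharTwo.add_eq_zero]
    by_cases h : (y ^ 2 ^ m) ^ 2 ^ m = y
    · rw [if_pos h.symm, if_pos h]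
      apply chi_fix m l hF
      rw [← pow_mul, mul_comm, pow_mul, pow_succ, h, mul_comm, ← pow_succ]
    · rw [if_neg (fun h' => h h'.symm), if_neg h]
  rw [Finset.sum_congr rfl (fun y _ => h1 y), sum_units]
  have h2 : ∀ u : Fˣ, ((u : F) ^ 2 ^ m) ^ 2 ^ m = u ↔ u ^ ((2 ^ m - 1) * (2 ^ m + 1)) = 1 := by
    intro u
    have : 2 ^ m * 2 ^ m = (2 ^ m - 1) * (2 ^ m + 1) + 1 := by
      obtain ⟨k, hk⟩ := Nat.exists_eq_add_of_le hQ
      rw [hk, show 2 + k - 1 = k + 1 by omega]; ring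
    rw [← Units.val_pow_eq_pow_val, ← Units.val_pow_eq_pow_val, Units.val_inj, ← pow_mul, this,
      pow_succ]
    simp
  simp only [h2]
  rw [Finset.sum_boole, card_fiber _ (dvd_card m l hF)]
  have h0 : ((0 : F) ^ 2 ^ m) ^ 2 ^ m = 0 := by simp
  rw [if_pos h0]
  push_cast [Nat.cast_sub (show 1 ≤ 2 ^ m by omega)]
  ring

theorem dvd_one (m l : ℕ) (hF : Fintype.card F = 2 ^ (2 * l * m)) (a : F) :
    (2 ^ m + 1 : ℤ) ∣ (∑ x, chi F (a * x ^ (2 ^ m + 1))) - 1 := by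
  have := sum_mod (2 ^ m + 1) (Nat.succ_ne_zero _) ((dvd_mul_left _ _).trans (dvd_card m l hF))
    (fun x => chi F (a * x))
  simpa using this

theorem dvd_pow_sub (m l : ℕ) (hle : Even l) : (2 ^ m + 1 : ℤ) ∣ 2 ^ (l * m) - 1 := by
  have := sub_dvd_pow_sub_pow (2 ^ m : ℤ) (-1) l
  rw [hle.neg_one_pow, sub_neg_eq_add, ← pow_mul, mul_comm m] at this
  exact this

theorem not_dvd_two (m : ℕ) (hm : 1 ≤ m) : ¬ (2 ^ m + 1 : ℤ) ∣ 2 := by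
  intro h
  have h1 := Int.le_of_dvd (by norm_num) h
  have hQ : (2 : ℤ) ≤ 2 ^ m := by
    exact_mod_cast (by simpa using Nat.pow_le_pow_right (n := 2) (by norm_num) hm : 2 ≤ 2 ^ m)
  omega

theorem nonpow (m l : ℕ) (hm : 1 ≤ m) (hle : Even l)
    (hF : Fintype.card F = 2 ^ (2 * l * m)) (a : F) (ha : ¬ ∃ y : F, a = y ^ (2 ^ m + 1)) :
    ∑ x, chi F (a * x ^ (2 ^ m + 1)) = 2 ^ (l * m) := by
  have : CharP F 2 := charP_of_injective_algebraMap (algebraMap (ZMod 2) F).injective 2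
  have ha0 : a ≠ 0 := by
    rintro rfl
    exact ha ⟨0, by simp⟩
  have hsq := sq_sum m a
  rw [Finset.sum_eq_single (f := fun y => if a * y + a ^ 2 ^ m * (y ^ 2 ^ m) ^ 2 ^ m = 0 then
        chi F (a * y ^ (2 ^ m + 1)) else 0) 0] at hsq
  · rw [if_pos (by simp), hF] at hsq
    have h1 : (∑ x, chi F (a * x ^ (2 ^ m + 1))) ^ 2 = (2 ^ (l * m)) ^ 2 := by
      rw [hsq]
      simp only [zero_pow (Nat.succ_ne_zero (2 ^ m)), mul_zero, AddChar.map_zero_eq_one, mul_one]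
      push_cast
      rw [← pow_mul]; congr 1; ring
    rcases sq_eq_sq_iff_eq_or_eq_neg.1 h1 with h | h
    · exact h
    · exfalso
      have h2 := dvd_one m l hF a
      rw [h] at h2
      apply not_dvd_two m hm
      have := dvd_add h2 (dvd_pow_sub m l hle)
      rw [← dvd_neg]
      convert this using 1
      ring
  · intro y _ hy
    rw [if_neg]
    intro h
    apply ha
    have hc : (a * y ^ (2 ^ m + 1)) ^ 2 ^ m = a * y ^ (2 ^ m + 1) := by
      rw [CharTwo.add_eq_zero] at h
      have : a * y ^ (2 ^ m + 1) = (a * y) * y ^ 2 ^ m := by ring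
      rw [this, h, mul_pow, ← h, mul_pow]
      rw [mul_right_comm, ← h]
    obtain ⟨w, hw⟩ := isPow_of m l hm hF _ (mul_ne_zero ha0 (pow_ne_zero _ hy)) hc
    refine ⟨w / y, ?_⟩
    rw [div_pow, ← hw, mul_div_cancel_right₀ _ (pow_ne_zero _ hy)]
  · intro h; exact absurd (Finset.mem_univ _) h

theorem one_case (m l : ℕ) (hm : 1 ≤ m) (hle : Even l)
    (hF : Fintype.card F = 2 ^ (2 * l * m)) :
    ∑ x, chi F (1 * x ^ (2 ^ m + 1)) = - 2 ^ ((l + 1) * m) := by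
  have hsq := sq_sum m (1 : F)
  rw [fix_sum m l hm hF, hF] at hsq
  have h1 : (∑ x, chi F (1 * x ^ (2 ^ m + 1))) ^ 2 = (2 ^ ((l + 1) * m)) ^ 2 := by
    rw [hsq]
    push_cast
    ring
  rcases sq_eq_sq_iff_eq_or_eq_neg.1 h1 with h | h
  · exfalso
    have h2 := dvd_one m l hF 1
    rw [h] at h2
    apply not_dvd_two m hm
    have h3 := dvd_mul_of_dvd_right (dvd_pow_sub m l hle) (2 ^ m : ℤ)
    have h4 := dvd_sub (dvd_sub h2 h3) (dvd_refl (2 ^ m + 1 : ℤ))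
    rw [← dvd_neg]
    convert h4 using 1
    ring
  · exact h

theorem pow_case (m l : ℕ) (hm : 1 ≤ m) (hle : Even l)
    (hF : Fintype.card F = 2 ^ (2 * l * m)) (y : F) (hy : y ≠ 0) :
    ∑ x, chi F (y ^ (2 ^ m + 1) * x ^ (2 ^ m + 1)) = - 2 ^ ((l + 1) * m) := by
  rw [← one_case m l hm hle hF]
  exact Fintype.sum_equiv (Equiv.mulLeft₀ y hy) _ _ (fun x => by simp [mul_pow])

end CharSum

/-- For `q = 2^(2lm)` with `m ≥ 1` and `l ≥ 2` even, the character sum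
`∑_{x ∈ GF(q)} (-1)^{Tr(a x^(2^m+1))}` equals `2^(2lm)` if `a = 0`,
`-2^((l+1)m)` if `a` is a nonzero `(2^m+1)`-th power, and `2^(lm)` if `a` is
not a `(2^m+1)`-th power. -/
theorem character_sum_values (m l : ℕ) (hm : 1 ≤ m) (hl : 2 ≤ l) (hle : Even l)
    (a : GaloisField 2 (2 * l * m)) :
    (a = 0 →
      (∑ x : GaloisField 2 (2 * l * m),
        (-1 : ℤ) ^ (Algebra.trace (ZMod 2) (GaloisField 2 (2 * l * m))
          (a * x ^ (2 ^ m + 1))).val) = 2 ^ (2 * l * m)) ∧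
    ((∃ y : GaloisField 2 (2 * l * m), y ≠ 0 ∧ a = y ^ (2 ^ m + 1)) →
      (∑ x : GaloisField 2 (2 * l * m),
        (-1 : ℤ) ^ (Algebra.trace (ZMod 2) (GaloisField 2 (2 * l * m))
          (a * x ^ (2 ^ m + 1))).val) = -2 ^ ((l + 1) * m)) ∧
    ((¬ ∃ y : GaloisField 2 (2 * l * m), a = y ^ (2 ^ m + 1)) →
      (∑ x : GaloisField 2 (2 * l * m),
        (-1 : ℤ) ^ (Algebra.trace (ZMod 2) (GaloisField 2 (2 * l * m))
          (a * x ^ (2 ^ m + 1))).val) = 2 ^ (l * m)) := by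
  classical
  have hn : 2 * l * m ≠ 0 := by positivity
  have hF : Fintype.card (GaloisField 2 (2 * l * m)) = 2 ^ (2 * l * m) := by
    rw [← Nat.card_eq_fintype_card, GaloisField.card 2 _ hn]
  refine ⟨?_, ?_, ?_⟩
  · rintro rfl
    simp [hF]
  · rintro ⟨y, hy, rfl⟩
    exact CharSum.pow_case m l hm hle hF y hy
  · intro h
    exact CharSum.nonpow m l hm hle hF a h
end

section
/- Let m ≥ 1, let l ≥ 2 be an even integer, let 0 ≤ s ≤ 2m-1, and set d = (2^{2lm}-1)/(2^m+1) + 2^s; assume gcd(d, 2^{2lm}-1) = 1. Then for every z in GF(2^{2lm}), the integer S_d(z) is divisible by 2^{lm}. -/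
/-- The Weil sum `S_d(z) = ∑_{x ∈ GF(2^n)} (-1)^{Tr(zx + x^d)}`, where `Tr` is
the absolute trace from `GF(2^n)` to `GF(2)`. -/
noncomputable def binaryWeilSum (n d : ℕ) (z : GaloisField 2 n) : ℤ :=
  ∑ x : GaloisField 2 n,
    (-1 : ℤ) ^ (Algebra.trace (ZMod 2) (GaloisField 2 n) (z * x + x ^ d)).val

theorem ws_e_add (a b : ZMod 2) : (-1 : ℤ) ^ (a + b).val = (-1) ^ a.val * (-1) ^ b.val := by
  revert a b; decide

theorem ws_linear {F : Type*} [AddCommGroup F] [Fintype F] (L : F →+ ZMod 2) :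
    (Fintype.card F : ℤ) ∣ ∑ y : F, (-1 : ℤ) ^ (L y).val := by
  by_cases h : ∀ y, L y = 0
  · simp [h]
  · push Not at h
    obtain ⟨a, ha⟩ := h
    have h1 : L a = 1 := by
      revert ha; generalize L a = t; revert t; decide
    have h2 : ∑ y : F, (-1 : ℤ) ^ (L y).val = - ∑ y : F, (-1 : ℤ) ^ (L y).val := by
      calc ∑ y : F, (-1 : ℤ) ^ (L y).val = ∑ y : F, (-1 : ℤ) ^ (L (y + a)).val :=
            (Equiv.sum_comp (Equiv.addRight a) (fun y => (-1 : ℤ) ^ (L y).val)).symm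
        _ = _ := by
            rw [← Finset.sum_neg_distrib]
            refine Finset.sum_congr rfl fun y _ => ?_
            rw [map_add, ws_e_add, h1]
            simp [ZMod.val_one]
    have h3 : ∑ y : F, (-1 : ℤ) ^ (L y).val = 0 := by linarith
    rw [h3]; exact dvd_zero _

/-- Exponential sums of quadratic forms: the square is divisible by the field size. -/
theorem ws_quad {F : Type*} [AddCommGroup F] [Fintype F] (Q : F → ZMod 2)
    (h : ∀ w, ∃ L : F →+ ZMod 2, ∀ y, Q (y + w) = Q y + L y + Q w) :
    (Fintype.card F : ℤ) ∣ (∑ y : F, (-1 : ℤ) ^ (Q y).val) ^ 2 := by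
  choose L hL using h
  have key : (∑ y : F, (-1 : ℤ) ^ (Q y).val) ^ 2
      = ∑ w : F, (-1 : ℤ) ^ (Q w).val * ∑ y : F, (-1 : ℤ) ^ (L w y).val := by
    calc (∑ y : F, (-1 : ℤ) ^ (Q y).val) ^ 2
        = ∑ y : F, ∑ w : F, (-1 : ℤ) ^ (Q y).val * (-1 : ℤ) ^ (Q w).val := by
          rw [sq, Finset.sum_mul_sum]
      _ = ∑ y : F, ∑ w : F, (-1 : ℤ) ^ (Q y).val * (-1 : ℤ) ^ (Q (y + w)).val := by
          refine Finset.sum_congr rfl fun y _ => ?_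
          exact (Equiv.sum_comp (Equiv.addLeft y)
            (fun w => (-1 : ℤ) ^ (Q y).val * (-1 : ℤ) ^ (Q w).val)).symm
      _ = ∑ y : F, ∑ w : F, (-1 : ℤ) ^ (Q w).val * (-1 : ℤ) ^ (L w y).val := by
          refine Finset.sum_congr rfl fun y _ => Finset.sum_congr rfl fun w _ => ?_
          rw [hL, ← ws_e_add, ← ws_e_add]
          generalize Q y = a
          generalize Q w = b
          generalize L w y = c
          revert a b c; decide
      _ = _ := by
          rw [Finset.sum_comm]
          refine Finset.sum_congr rfl fun w _ => ?_
          rw [Finset.mul_sum]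
  rw [key]
  exact Finset.dvd_sum fun w _ => Dvd.dvd.mul_left (ws_linear _) _

theorem ws_form {F : Type*} [Field F] [Fintype F] [Algebra (ZMod 2) F] [CharP F 2]
    (m s : ℕ) (a c : F) :
    (Fintype.card F : ℤ) ∣ (∑ y : F, (-1 : ℤ) ^ (Algebra.trace (ZMod 2) F
      (a * y ^ (2 ^ m + 1) + c * (y ^ (2 ^ m + 1)) ^ 2 ^ s)).val) ^ 2 := by
  have : ExpChar F 2 := ExpChar.prime Nat.prime_two
  refine ws_quad (fun y => Algebra.trace (ZMod 2) F
      (a * y ^ (2 ^ m + 1) + c * (y ^ (2 ^ m + 1)) ^ 2 ^ s)) fun w => ?_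
  refine ⟨AddMonoidHom.mk' (fun y => Algebra.trace (ZMod 2) F
    (a * (y ^ 2 ^ m * w + w ^ 2 ^ m * y) + c * (y ^ 2 ^ m * w + w ^ 2 ^ m * y) ^ 2 ^ s)) ?_, ?_⟩
  · intro x y
    rw [← map_add]
    congr 1
    have h1 : (x + y) ^ 2 ^ m * w + w ^ 2 ^ m * (x + y)
      = (x ^ 2 ^ m * w + w ^ 2 ^ m * x) + (y ^ 2 ^ m * w + w ^ 2 ^ m * y) := by
      rw [add_pow_expChar_pow]; ring
    rw [h1, add_pow_expChar_pow]; ring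
  · intro y
    simp only [AddMonoidHom.mk'_apply]
    rw [← map_add, ← map_add]
    congr 1
    have h1 : (y + w) ^ (2 ^ m + 1)
      = y ^ (2 ^ m + 1) + (y ^ 2 ^ m * w + w ^ 2 ^ m * y) + w ^ (2 ^ m + 1) := by
      rw [pow_succ, add_pow_expChar_pow]; ring
    rw [h1, add_pow_expChar_pow, add_pow_expChar_pow]; ring

theorem ws_avg {F : Type*} [Field F] [Fintype F] [DecidableEq F] (φ : F → ℤ) (k : ℕ) (hk : k ≠ 0) :
    ((Fintype.card F : ℤ) - 1) * ∑ x, φ x = ∑ g : Fˣ, ∑ y : F, φ ((g : F) * y ^ k) := by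
  have hc : (Fintype.card Fˣ : ℤ) = (Fintype.card F : ℤ) - 1 := by
    rw [Fintype.card_units, Nat.cast_sub Fintype.card_pos]; simp
  have hsplit : ∀ ψ : F → ℤ, ∑ x, ψ x = ψ 0 + ∑ u : Fˣ, ψ u := by
    intro ψ
    rw [← Finset.add_sum_erase _ _ (Finset.mem_univ (0 : F))]
    congr 1
    symm
    refine Finset.sum_bij (fun u _ => (u : F)) (by simp) (fun a _ b _ h => Units.ext h) ?_
      (fun _ _ => rfl)
    intro b hb
    exact ⟨Units.mk0 b (Finset.ne_of_mem_erase hb), Finset.mem_univ _, rfl⟩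
  have hin : ∀ v : Fˣ, ∑ g : Fˣ, φ ((g : F) * (v : F) ^ k) = ∑ g : Fˣ, φ g := by
    intro v
    rw [← Equiv.sum_comp (Equiv.mulRight (v ^ k)) (fun g : Fˣ => φ g)]
    simp
  rw [Finset.sum_comm, hsplit (fun y => ∑ g : Fˣ, φ ((g : F) * y ^ k))]
  simp only [hin]
  rw [hsplit φ]
  simp [hk, ← hc]
  ring

/-- For `d = (2^(2lm)-1)/(2^m+1) + 2^s` with `l ≥ 2` even and
`gcd(d, 2^(2lm)-1) = 1`, every Weil sum value `S_d(z)` is divisible by `2^(lm)`. -/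
theorem weil_sum_divisible (m l s d : ℕ) (hm : 1 ≤ m) (hl : 2 ≤ l) (hle : Even l)
    (hs : s ≤ 2 * m - 1) (hd : d = (2 ^ (2 * l * m) - 1) / (2 ^ m + 1) + 2 ^ s)
    (hgcd : Nat.gcd d (2 ^ (2 * l * m) - 1) = 1) :
    ∀ z : GaloisField 2 (2 * l * m), (2 ^ (l * m) : ℤ) ∣ binaryWeilSum (2 * l * m) d z := by
  classical
  intro z
  have hn : 2 * l * m ≠ 0 := by positivity
  have hcard : Fintype.card (GaloisField 2 (2 * l * m)) = 2 ^ (2 * l * m) := by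
    rw [← Nat.card_eq_fintype_card]; exact GaloisField.card 2 _ hn
  have hdvd : 2 ^ m + 1 ∣ 2 ^ (2 * l * m) - 1 := by
    have h1 : 2 ^ m + 1 ∣ 2 ^ (2 * m) - 1 := by
      refine ⟨2 ^ m - 1, ?_⟩
      have := Nat.sq_sub_sq (2 ^ m) 1
      rw [← this, mul_comm 2 m, pow_mul, one_pow]
    refine h1.trans ?_
    have := Nat.sub_dvd_pow_sub_pow (2 ^ (2 * m)) 1 l
    rwa [one_pow, ← pow_mul, show 2 * m * l = 2 * l * m by ring] at this
  have hpow : ∀ g y : GaloisField 2 (2 * l * m),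
      (g * y ^ (2 ^ m + 1)) ^ d = g ^ d * (y ^ (2 ^ m + 1)) ^ 2 ^ s := by
    intro g y
    rw [mul_pow]
    congr 1
    rw [hd]
    by_cases hy : y = 0
    · subst hy; simp
    · rw [pow_add, ← pow_mul y, Nat.mul_div_cancel' hdvd, ← hcard,
        FiniteField.pow_card_sub_one_eq_one y hy, one_mul]
  have havg := ws_avg (fun x : GaloisField 2 (2 * l * m) =>
    (-1 : ℤ) ^ (Algebra.trace (ZMod 2) (GaloisField 2 (2 * l * m)) (z * x + x ^ d)).val)
    (2 ^ m + 1) (Nat.succ_ne_zero _)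
  have hG : (2 ^ (l * m) : ℤ) ∣ ((Fintype.card (GaloisField 2 (2 * l * m)) : ℤ) - 1) *
      binaryWeilSum (2 * l * m) d z := by
    unfold binaryWeilSum
    rw [havg]
    refine Finset.dvd_sum fun g _ => ?_
    have := ws_form m s (z * (g : GaloisField 2 (2 * l * m))) ((g : GaloisField 2 (2 * l * m)) ^ d)
    rw [hcard] at this
    push_cast at this
    have hsq : (2 : ℤ) ^ (2 * l * m) = (2 ^ (l * m)) ^ 2 := by
      rw [← pow_mul]; congr 1; ring
    rw [hsq, Int.pow_dvd_pow_iff two_ne_zero] at this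
    simpa only [hpow, ← mul_assoc] using this
  refine IsCoprime.dvd_of_dvd_mul_left ?_ hG
  apply IsCoprime.pow_left
  rw [hcard]
  refine ⟨2 ^ (2 * l * m - 1), -1, ?_⟩
  push_cast
  rw [← pow_succ, Nat.sub_add_cancel (Nat.one_le_iff_ne_zero.mpr hn)]
  ring
end

section
/- Let m ≥ 1, let l ≥ 2 be an even integer, let 0 ≤ s ≤ 2m-1, and set d = (2^{2lm}-1)/(2^m+1) + 2^s; assume gcd(d, 2^{2lm}-1) = 1. Then there exists a nonzero z in GF(2^{2lm}) such that S_d(z) = 0 (equivalently, the cross correlation between a binary m-sequence of period 2^{2lm}-1 and its d-decimation attains the value -1, confirming Helleseth's conjecture for this decimation). -/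
section aux

variable {F : Type*} [Field F] [Fintype F] [Algebra (ZMod 2) F]

/-- The sign character of `ZMod 2`. -/
noncomputable def sgnChar : AddChar (ZMod 2) ℤ where
  toFun a := (-1 : ℤ) ^ a.val
  map_zero_eq_one' := by simp
  map_add_eq_mul' := by decide

/-- The canonical additive character of `F`. -/
noncomputable def psi (F : Type*) [Field F] [Algebra (ZMod 2) F] : AddChar F ℤ :=
  sgnChar.compAddMonoidHom (Algebra.trace (ZMod 2) F).toAddMonoidHom

lemma psi_apply (x : F) : psi F x = (-1 : ℤ) ^ (Algebra.trace (ZMod 2) F x).val := rfl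

lemma psi_frob (x : F) : psi F (x ^ 2) = psi F x := by
  rw [psi_apply, psi_apply]
  have h := Algebra.trace_eq_of_algEquiv (FiniteField.frobeniusAlgEquivOfAlgebraic (ZMod 2) F) x
  simp only [FiniteField.frobeniusAlgEquivOfAlgebraic_apply, ZMod.card] at h
  rw [h]

lemma psi_frob_pow (s : ℕ) (x : F) : psi F (x ^ 2 ^ s) = psi F x := by
  induction s with
  | zero => simp
  | succ k ih => rw [pow_succ, pow_mul, psi_frob, ih]

lemma psi_mul_self (x : F) : psi F x * psi F x = 1 := by
  rw [psi_apply, ← pow_add, ← two_mul, pow_mul]; simp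

lemma psi_ne_one : psi F ≠ 1 := by
  intro h
  obtain ⟨x, hx⟩ := Algebra.trace_surjective (ZMod 2) F 1
  have h1 : psi F x = 1 := by rw [h]; rfl
  rw [psi_apply, hx] at h1
  revert h1
  decide

lemma psi_sum : ∑ x : F, psi F x = 0 := AddChar.sum_eq_zero_of_ne_one psi_ne_one

lemma psi_sum_mul [DecidableEq F] (b : F) :
    ∑ x : F, psi F (x * b) = if b = 0 then (Fintype.card F : ℤ) else 0 := by
  split_ifs with h
  · simp [h]
  · rw [← psi_sum (F := F)]
    exact Fintype.sum_equiv (Equiv.mulRight₀ b h) _ _ (fun x => rfl)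

lemma card_dvd_sum (B : AddChar F ℤ) : (Fintype.card F : ℤ) ∣ ∑ x : F, B x := by
  classical
  rw [AddChar.sum_eq_ite]
  split_ifs <;> simp

/-- `T(a)²` is divisible by the field size. -/
lemma card_dvd_sq (m : ℕ) (a : F) :
    (Fintype.card F : ℤ) ∣ (∑ y : F, psi F (a * y ^ (2 ^ m + 1))) ^ 2 := by
  have : CharP F 2 := charP_of_injective_algebraMap (algebraMap (ZMod 2) F).injective 2
  have key : (∑ y : F, psi F (a * y ^ (2 ^ m + 1))) ^ 2 =
      ∑ h : F, psi F (a * h ^ (2 ^ m + 1)) *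
        ∑ y : F, psi F (a * (y ^ 2 ^ m * h + y * h ^ 2 ^ m)) := by
    rw [sq, Finset.sum_mul_sum]
    have e : ∀ y : F, ∑ x : F, psi F (a * y ^ (2 ^ m + 1)) * psi F (a * x ^ (2 ^ m + 1)) =
        ∑ h : F, psi F (a * h ^ (2 ^ m + 1)) *
          psi F (a * (y ^ 2 ^ m * h + y * h ^ 2 ^ m)) := by
      intro y
      symm
      refine Fintype.sum_equiv (Equiv.addRight y) _ _ (fun h => ?_)
      rw [← AddChar.map_add_eq_mul, ← AddChar.map_add_eq_mul]
      congr 1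
      simp only [Equiv.coe_addRight]
      rw [pow_succ (h + y), add_pow_char_pow]
      have := CharTwo.add_self_eq_zero (a * y ^ (2 ^ m + 1))
      linear_combination -this
    rw [Finset.sum_congr rfl (fun y _ => e y), Finset.sum_comm]
    simp_rw [Finset.mul_sum]
  rw [key]
  refine Finset.dvd_sum (fun h _ => Dvd.dvd.mul_left ?_ _)
  let L : F →+ F :=
    { toFun := fun y => a * (y ^ 2 ^ m * h + y * h ^ 2 ^ m)
      map_zero' := by simp
      map_add' := by
        intro x y
        rw [add_pow_char_pow]; ring }
  exact card_dvd_sum ((psi F).compAddMonoidHom L)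

lemma parseval (f : F → F) :
    ∑ z : F, (∑ x : F, psi F (z * x + f x)) ^ 2 = (Fintype.card F : ℤ) ^ 2 := by
  classical
  have : CharP F 2 := charP_of_injective_algebraMap (algebraMap (ZMod 2) F).injective 2
  have h1 : ∀ z : F, (∑ x : F, psi F (z * x + f x)) ^ 2 =
      ∑ x : F, ∑ y : F, psi F (f x) * psi F (f y) * psi F (z * (x + y)) := by
    intro z
    rw [sq, Finset.sum_mul_sum]
    refine Finset.sum_congr rfl (fun x _ => Finset.sum_congr rfl (fun y _ => ?_))
    simp only [← AddChar.map_add_eq_mul]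
    congr 1; ring
  simp_rw [h1]
  rw [Finset.sum_comm]
  have h2 : ∀ x : F, ∑ z : F, ∑ y : F, psi F (f x) * psi F (f y) * psi F (z * (x + y)) =
      (Fintype.card F : ℤ) := by
    intro x
    rw [Finset.sum_comm]
    simp_rw [← Finset.mul_sum, psi_sum_mul, CharTwo.add_eq_zero]
    simp [psi_mul_self]
  simp_rw [h2]
  simp [sq]

lemma sum_units [DecidableEq F] (g : F → ℤ) : ∑ x : F, g x = g 0 + ∑ u : Fˣ, g u := by
  classical
  rw [← Finset.add_sum_erase _ _ (Finset.mem_univ (0 : F))]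
  congr 1
  symm
  refine Finset.sum_bij (fun u _ => (u : F)) ?_ ?_ ?_ ?_
  · intro u _; simp
  · intro u _ v _ h; exact Units.ext h
  · intro b hb
    exact ⟨Units.mk0 b (by simpa using hb), by simp, by simp⟩
  · intros; rfl

/-- Divisibility of the Weil sum by the square root of the field size. -/
lemma dvd_weil (m s N P : ℕ) (hP : Fintype.card F = P ^ 2)
    (hN : (2 ^ m + 1) * N = Fintype.card F - 1) (z : F) :
    (P : ℤ) ∣ ∑ x : F, psi F (z * x + x ^ (N + 2 ^ s)) := by
  classical
  have : CharP F 2 := charP_of_injective_algebraMap (algebraMap (ZMod 2) F).injective 2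
  have hT : ∀ a : F, (P : ℤ) ∣ ∑ y : F, psi F (a * y ^ (2 ^ m + 1)) := by
    intro a
    have := card_dvd_sq m a
    rw [hP] at this
    push_cast at this
    exact (Int.pow_dvd_pow_iff two_ne_zero).1 this
  have hroot : ∀ w : F, ∃ v : F, v ^ 2 ^ s = w := by
    intro w
    have hinj : Function.Injective (iterateFrobenius F 2 s) := (iterateFrobenius F 2 s).injective
    obtain ⟨v, hv⟩ := (Finite.injective_iff_surjective.1 hinj) w
    exact ⟨v, by rwa [iterateFrobenius_def] at hv⟩
  choose v hv using hroot
  set f : F → ℤ := fun x => psi F (z * x + x ^ (N + 2 ^ s)) with hf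
  have hval : ∀ c y : Fˣ, f ((c * y ^ (2 ^ m + 1) : Fˣ) : F) =
      psi F (((z + v ((c : F) ^ N)) * c) * (y : F) ^ (2 ^ m + 1)) := by
    intro c y
    have hy : (y : F) ^ ((2 ^ m + 1) * N) = 1 := by
      rw [hN]; exact FiniteField.pow_card_sub_one_eq_one _ y.ne_zero
    simp only [hf]
    push_cast
    have e1 : ((c : F) * (y : F) ^ (2 ^ m + 1)) ^ (N + 2 ^ s) =
        (v ((c : F) ^ N) * (c * (y : F) ^ (2 ^ m + 1))) ^ 2 ^ s := by
      rw [mul_pow (v _), hv, pow_add, mul_pow _ _ N, ← pow_mul, hy, mul_one]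
    rw [e1, AddChar.map_add_eq_mul, psi_frob_pow, ← AddChar.map_add_eq_mul]
    congr 1; ring
  have hsum : ∑ c : Fˣ, ∑ y : Fˣ, f ((c * y ^ (2 ^ m + 1) : Fˣ) : F) =
      (Fintype.card Fˣ : ℤ) * ∑ u : Fˣ, f u := by
    rw [Finset.sum_comm]
    have : ∀ y : Fˣ, ∑ c : Fˣ, f ((c * y ^ (2 ^ m + 1) : Fˣ) : F) = ∑ u : Fˣ, f u := fun y =>
      Fintype.sum_equiv (Equiv.mulRight (y ^ (2 ^ m + 1))) _ _ (fun c => rfl)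
    simp_rw [this]
    simp
  have hS := sum_units f
  have hf0 : f 0 = 1 := by simp [hf]
  have hcard : (Fintype.card Fˣ : ℤ) = (P : ℤ) ^ 2 - 1 := by
    have h1 : 1 ≤ Fintype.card F := Fintype.card_pos
    rw [Fintype.card_units, Nat.cast_sub h1, hP]; push_cast; rfl
  have hTsum : ∑ c : Fˣ, ∑ y : F, psi F (((z + v ((c : F) ^ N)) * c) * y ^ (2 ^ m + 1)) =
      (Fintype.card Fˣ : ℤ) * ∑ x : F, f x := by
    rw [hS, mul_add, ← hsum, hf0]
    simp_rw [hval]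
    have : ∀ c : Fˣ, ∑ y : F, psi F (((z + v ((c : F) ^ N)) * c) * y ^ (2 ^ m + 1)) =
        1 + ∑ y : Fˣ, psi F (((z + v ((c : F) ^ N)) * c) * (y : F) ^ (2 ^ m + 1)) := by
      intro c
      rw [sum_units]; simp
    simp_rw [this]
    rw [Finset.sum_add_distrib]
    simp
  have hd : (P : ℤ) ∣ (Fintype.card Fˣ : ℤ) * ∑ x : F, f x := by
    rw [← hTsum]
    exact Finset.dvd_sum (fun c _ => hT _)
  rw [hcard] at hd
  have h3 : (P : ℤ) ∣ (P : ℤ) * (P * ∑ x : F, f x) := Dvd.intro _ rfl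
  have h4 := dvd_sub h3 hd
  have h5 : (P : ℤ) * (P * ∑ x : F, f x) - ((P : ℤ) ^ 2 - 1) * ∑ x : F, f x = ∑ x : F, f x := by
    ring
  rwa [h5] at h4

lemma main_aux (d P : ℕ) (hP0 : 0 < P) (hP : Fintype.card F = P ^ 2)
    (hgcd : Nat.Coprime d (Fintype.card F - 1)) (hd0 : d ≠ 0)
    (hdvd : ∀ z : F, (P : ℤ) ∣ ∑ x : F, psi F (z * x + x ^ d)) :
    ∃ z : F, z ≠ 0 ∧ ∑ x : F, psi F (z * x + x ^ d) = 0 := by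
  classical
  by_contra! hcon
  have hpar := parseval (F := F) (fun x => x ^ d)
  have h0 : ∑ x : F, psi F (0 * x + x ^ d) = 0 := by
    simp only [zero_mul, zero_add]
    rw [sum_units, ← psi_sum (F := F), sum_units (fun x => psi F x)]
    congr 1
    · simp [hd0]
    · have hc : (Nat.card Fˣ).Coprime d := by
        rw [Nat.card_eq_fintype_card, Fintype.card_units]; exact hgcd.symm
      exact Fintype.sum_equiv (powCoprime hc) _ _ (fun u => by simp)
  choose t ht using hdvd
  have ht0 : t 0 = 0 := by
    have := ht 0
    rw [h0] at this
    rcases mul_eq_zero.1 this.symm with h | h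
    · exfalso; simp at h; omega
    · exact h
  have hsq : ∑ z : F, (t z) ^ 2 = (P : ℤ) ^ 2 := by
    simp only [ht, mul_pow, ← Finset.mul_sum] at hpar
    rw [hP] at hpar
    have hPne : (P : ℤ) ^ 2 ≠ 0 := by positivity
    apply mul_left_cancel₀ hPne
    rw [hpar]; push_cast; ring
  have hne : ∀ u : Fˣ, t u ≠ 0 := by
    intro u hu
    apply hcon u u.ne_zero
    rw [ht, hu, mul_zero]
  rw [sum_units (fun z => t z ^ 2)] at hsq
  have hone : ∑ u : Fˣ, ((t u) ^ 2 - 1) = 1 := by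
    have h1 : 1 ≤ Fintype.card F := Fintype.card_pos
    rw [Finset.sum_sub_distrib]
    simp only [Finset.sum_const, Finset.card_univ, nsmul_eq_mul, mul_one]
    rw [Fintype.card_units, Nat.cast_sub h1, hP]
    simp only [ht0] at hsq
    push_cast
    linarith
  have hsmall : ∀ u : Fˣ, 0 ≤ (t u) ^ 2 - 1 := by
    intro u
    have := Int.one_le_abs (hne u)
    nlinarith [sq_abs (t u)]
  have hz : ∀ u : Fˣ, (t u) ^ 2 - 1 = 0 := by
    intro u
    have hle : (t u) ^ 2 - 1 ≤ 1 := by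
      refine le_of_le_of_eq ?_ hone
      exact Finset.single_le_sum (f := fun u : Fˣ => (t u) ^ 2 - 1)
        (fun i _ => hsmall i) (Finset.mem_univ u)
    have h1 := Int.one_le_abs (hne u)
    have h2 : |t u| < 2 := by nlinarith [sq_abs (t u)]
    have h3 : |t u| = 1 := by omega
    rw [← sq_abs, h3]; norm_num
  simp [hz] at hone

end aux

/-- Helleseth's conjecture holds for `d = (2^(2lm)-1)/(2^m+1) + 2^s` with `l ≥ 2`
even: there is a nonzero `z` with `S_d(z) = 0`. -/
theorem weil_sum_attains_zero (m l s d : ℕ) (hm : 1 ≤ m) (hl : 2 ≤ l) (hle : Even l)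
    (hs : s ≤ 2 * m - 1) (hd : d = (2 ^ (2 * l * m) - 1) / (2 ^ m + 1) + 2 ^ s)
    (hgcd : Nat.gcd d (2 ^ (2 * l * m) - 1) = 1) :
    ∃ z : GaloisField 2 (2 * l * m), z ≠ 0 ∧ binaryWeilSum (2 * l * m) d z = 0 := by
  have hn : 2 * l * m ≠ 0 := by positivity
  have hcard : Fintype.card (GaloisField 2 (2 * l * m)) = 2 ^ (2 * l * m) := by
    rw [← Nat.card_eq_fintype_card, GaloisField.card 2 _ hn]
  have hdiv : 2 ^ m + 1 ∣ 2 ^ (2 * l * m) - 1 := by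
    have h1 : 2 ^ m + 1 ∣ (2 ^ m) ^ 2 - 1 ^ 2 := by
      rw [Nat.sq_sub_sq]; exact Dvd.intro _ rfl
    have h2 : (2 ^ m) ^ 2 - 1 ∣ ((2 ^ m) ^ 2) ^ l - 1 ^ l := Nat.sub_dvd_pow_sub_pow _ 1 l
    have h3 : ((2 ^ m) ^ 2) ^ l = 2 ^ (2 * l * m) := by
      rw [← pow_mul, ← pow_mul]; congr 1; ring
    rw [h3, one_pow] at h2
    rw [one_pow] at h1
    exact h1.trans h2
  have hP : Fintype.card (GaloisField 2 (2 * l * m)) = (2 ^ (l * m)) ^ 2 := by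
    rw [hcard, ← pow_mul]; congr 1; ring
  refine main_aux (F := GaloisField 2 (2 * l * m)) d (2 ^ (l * m)) (by positivity) hP ?_ ?_ ?_
  · rw [hcard]; exact hgcd
  · rw [hd]; positivity
  · intro z
    rw [hd]
    refine dvd_weil m s _ _ hP ?_ z
    rw [hcard]
    exact Nat.mul_div_cancel' hdiv
end

section
/- Let m ≥ 1, let l ≥ 2 be an even integer, let 0 ≤ s ≤ 2m-1, and set d = (2^{2lm}-1)/(2^m+1) + 2^s; assume gcd(d, 2^{2lm}-1) = 1. Then the set of values { S_d(z) : z ∈ GF(2^{2lm}), z ≠ 0 } has at least four elements (equivalently, the cross correlation between a binary m-sequence of period 2^{2lm}-1 and its d-decimation takes at least four distinct values). -/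
section Helpers
open Finset
set_option linter.unusedSectionVars false

variable {F : Type*} [Field F] [Fintype F] [Algebra (ZMod 2) F]

noncomputable def chi (x : F) : ℤ := (-1 : ℤ) ^ (Algebra.trace (ZMod 2) F x).val

lemma zmod2_sign (a b : ZMod 2) : (-1 : ℤ) ^ (a + b).val = (-1 : ℤ) ^ a.val * (-1 : ℤ) ^ b.val := by
  revert a b; decide

lemma chi_add (x y : F) : chi (x + y) = chi x * chi y := by
  simp only [chi, map_add, zmod2_sign]

lemma chi_zero : chi (0 : F) = 1 := by simp [chi]

lemma chi_mul_self (x : F) : chi x * chi x = 1 := by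
  unfold chi
  rw [← pow_add, ← two_mul, pow_mul]; simp

lemma F_char2 (F : Type*) [Field F] [Algebra (ZMod 2) F] : CharP F 2 :=
  charP_of_injective_algebraMap (algebraMap (ZMod 2) F).injective 2

lemma chi_sq (x : F) : chi (x ^ 2) = chi x := by
  unfold chi
  congr 2
  have := F_char2 F
  apply (algebraMap (ZMod 2) F).injective
  rw [FiniteField.algebraMap_trace_eq_sum_pow, FiniteField.algebraMap_trace_eq_sum_pow]
  simp only [Nat.card_zmod]
  have h1 : ∑ i ∈ range (Module.finrank (ZMod 2) F), (x ^ 2) ^ 2 ^ i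
     = (∑ i ∈ range (Module.finrank (ZMod 2) F), x ^ 2 ^ i) ^ 2 := by
    rw [sum_pow_char 2]
    refine sum_congr rfl fun i _ => ?_
    rw [← pow_mul, ← pow_mul, mul_comm]
  rw [h1]
  have h2 := FiniteField.algebraMap_trace_eq_sum_pow (ZMod 2) F x
  simp only [Nat.card_zmod] at h2
  rw [← h2, ← map_pow]
  congr 1
  generalize (Algebra.trace (ZMod 2) F) x = a
  revert a; decide

lemma chi_pow (x : F) (k : ℕ) : chi (x ^ 2 ^ k) = chi x := by
  induction k with
  | zero => simp
  | succ k ih => rw [pow_succ, pow_mul, chi_sq, ih]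

lemma chi_sum_mul (a : F) (ha : a ≠ 0) : ∑ x, chi (a * x) = 0 := by
  have h := (Algebra.trace_surjective (ZMod 2) F) 1
  obtain ⟨b, hb⟩ := h
  have hb' : chi b = -1 := by simp [chi, hb, ZMod.val_one]
  have h2 : ∑ x, chi (a * x) = ∑ x, chi (a * (x + a⁻¹ * b)) :=
    (Fintype.sum_equiv (Equiv.addRight (a⁻¹ * b)) _ _ (fun x => rfl)).symm
  have h3 : ∀ x, chi (a * (x + a⁻¹ * b)) = - chi (a * x) := by
    intro x
    rw [mul_add, mul_inv_cancel_left₀ ha, chi_add, hb']; ring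
  simp only [h3, sum_neg_distrib] at h2
  linarith

lemma chi_sum_ite [DecidableEq F] (a : F) :
    ∑ x, chi (a * x) = if a = 0 then (Fintype.card F : ℤ) else 0 := by
  split_ifs with h
  · simp [h, chi_zero]
  · exact chi_sum_mul a h

lemma chi_sub (m l : ℕ) (hF : Fintype.card F = (2 ^ m) ^ (2 * l)) (c : F) (hc : c ^ 2 ^ m = c) :
    chi c = 1 := by
  have := F_char2 F
  have hfr : Module.finrank (ZMod 2) F = (l + l) * m := by
    have h := Module.card_eq_pow_finrank (K := ZMod 2) (V := F)
    rw [hF, ZMod.card, ← pow_mul] at h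
    have := Nat.pow_right_injective (le_refl 2) h
    rw [← this]; ring
  have h0 : Algebra.trace (ZMod 2) F c = 0 := by
    apply (algebraMap (ZMod 2) F).injective
    rw [FiniteField.algebraMap_trace_eq_sum_pow, map_zero, hfr, add_mul, sum_range_add]
    simp only [Nat.card_zmod]
    have hk : ∀ k, c ^ 2 ^ (k * m) = c := by
      intro k
      induction k with
      | zero => simp
      | succ k ih => rw [add_mul, pow_add, pow_mul, ih, one_mul, hc]
    have : ∀ i, c ^ 2 ^ (l * m + i) = c ^ 2 ^ i := by
      intro i
      rw [pow_add, pow_mul, hk]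
    simp only [this]
    exact CharTwo.add_self_eq_zero _
  simp [chi, h0]

lemma exists_gen (F : Type*) [Field F] [Fintype F] : ∃ g : F, IsPrimitiveRoot g (Fintype.card F - 1) ∧ ∀ x : F, x ≠ 0 → ∃ k : ℕ, g ^ k = x := by
  obtain ⟨g, hg⟩ := IsCyclic.exists_monoid_generator (α := Fˣ)
  refine ⟨g, ?_, ?_⟩
  · rw [IsPrimitiveRoot.coe_units_iff]
    have : orderOf g = Fintype.card F - 1 := by
      rw [orderOf_eq_card_of_forall_mem_zpowers, Nat.card_units, Nat.card_eq_fintype_card]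
      intro x
      obtain ⟨k, hk⟩ := hg x
      exact ⟨k, by simpa using hk⟩
    rw [← this]; exact IsPrimitiveRoot.orderOf g
  · intro x hx
    obtain ⟨k, hk⟩ := hg (Units.mk0 x hx)
    refine ⟨k, ?_⟩
    have := congrArg Units.val hk
    simpa using this

lemma exists_root {F : Type*} [Field F] [Fintype F] (a b : ℕ) (hab : a * b = Fintype.card F - 1) (u : F) (hu : u ^ a = 1) :
    ∃ c : F, c ^ b = u := by
  have hc : 1 < Fintype.card F := Fintype.one_lt_card
  have ha : 0 < a := Nat.pos_of_ne_zero (by rintro rfl; omega)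
  obtain ⟨g, hg, h⟩ := exists_gen F
  have hu0 : u ≠ 0 := by rintro rfl; rw [zero_pow ha.ne'] at hu; exact zero_ne_one hu
  obtain ⟨k, rfl⟩ := h u hu0
  rw [← pow_mul] at hu
  have := hg.dvd_of_pow_eq_one _ hu
  rw [← hab, mul_comm k] at this
  obtain ⟨j, rfl⟩ := Nat.dvd_of_mul_dvd_mul_left ha this
  exact ⟨g ^ j, by rw [← pow_mul, mul_comm]⟩

lemma card_roots {F : Type*} [Field F] [Fintype F] [DecidableEq F] (a b : ℕ) (hab : a * b = Fintype.card F - 1) :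
    #{x : F | x ^ a = 1} = a := by
  have hc : 1 < Fintype.card F := Fintype.one_lt_card
  have ha : 0 < a := Nat.pos_of_ne_zero (by rintro rfl; omega)
  obtain ⟨g, hg, h⟩ := exists_gen F
  have h1 : IsPrimitiveRoot (g ^ b) a := hg.pow (by omega) (by rw [← hab, mul_comm])
  refine Eq.trans ?_ h1.card_nthRootsFinset
  congr 1
  ext x
  simp [Polynomial.mem_nthRootsFinset ha]

/-- fibers of the power map -/
lemma card_fiber {F : Type*} [Field F] [Fintype F] [DecidableEq F] (a b : ℕ) (hab : a * b = Fintype.card F - 1)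
    (u : F) (hu : u ^ a = 1) : #{x : F | x ^ b = u} = b := by
  have hc : 1 < Fintype.card F := Fintype.one_lt_card
  have ha : 0 < a := Nat.pos_of_ne_zero (by rintro rfl; omega)
  have hb : 0 < b := Nat.pos_of_ne_zero (by rintro rfl; omega)
  obtain ⟨c, rfl⟩ := exists_root a b hab u hu
  have hc0 : c ≠ 0 := by
    rintro rfl; rw [zero_pow hb.ne', zero_pow ha.ne'] at hu; exact zero_ne_one hu
  conv_rhs => rw [← card_roots b a (by rw [mul_comm, hab])]
  symm
  refine card_bij (fun x _ => c * x) ?_ ?_ ?_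
  · intro x hx; simp only [mem_filter, mem_univ, true_and] at hx ⊢; rw [mul_pow, hx, mul_one]
  · intro x _ y _ h; exact mul_left_cancel₀ hc0 h
  · intro y hy
    simp only [mem_filter, mem_univ, true_and] at hy
    refine ⟨c⁻¹ * y, ?_, by rw [mul_inv_cancel_left₀ hc0]⟩
    simp only [mem_filter, mem_univ, true_and]
    rw [mul_pow, hy, ← mul_pow, inv_mul_cancel₀ hc0, one_pow]


structure Setup (F : Type*) [Field F] [Fintype F] (m l q N M : ℕ) : Prop where
  hm : 1 ≤ m
  hl : 2 ≤ l
  hle : Even l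
  hq : q = 2 ^ m
  hF : Fintype.card F = q ^ (2 * l)
  hN : N * (q + 1) = Fintype.card F - 1
  hM : N = (q - 1) * M
  hMl : ∀ x : F, x ^ (q ^ 2) = x → x ^ M = x ^ l

lemma setup_mk (F : Type*) [Field F] [Fintype F] (m l : ℕ) (hm : 1 ≤ m) (hl : 2 ≤ l) (hle : Even l)
    (hF : Fintype.card F = 2 ^ (2 * l * m)) :
    ∃ M, Setup F m l (2 ^ m) ((2 ^ (2 * l * m) - 1) / (2 ^ m + 1)) M := by
  set q := 2 ^ m with hq
  have hq1 : 1 ≤ q := Nat.one_le_two_pow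
  have hQ : 2 ^ (2 * l * m) = q ^ (2 * l) := by rw [hq, ← pow_mul]; congr 1; ring
  have hg : ∀ k, (q - 1) * (∑ i ∈ range k, (q ^ 2) ^ i) * (q + 1) + 1 = q ^ (2 * k) := by
    intro k
    obtain ⟨r, hr⟩ : ∃ r, q = r + 1 := ⟨q - 1, by omega⟩
    rw [hr]
    induction k with
    | zero => simp
    | succ k ih =>
      simp only [Nat.add_sub_cancel] at ih ⊢
      rw [sum_range_succ, mul_add 2 k 1, pow_add, ← ih]
      have e : ((r + 1) ^ 2) ^ k = (r + 1) ^ (2 * k) := by rw [pow_mul]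
      rw [e, ← ih]; ring
  have h1 : (2 ^ (2 * l * m) - 1) / (q + 1) = (q - 1) * (∑ i ∈ range l, (q ^ 2) ^ i) := by
    rw [hQ, ← hg l, Nat.add_sub_cancel, Nat.mul_div_cancel _ (by omega)]
  refine ⟨∑ i ∈ range l, (q ^ 2) ^ i, hm, hl, hle, hq, by rw [hF, hQ], ?_, h1, ?_⟩
  · rw [h1, hF, hQ, ← hg l, Nat.add_sub_cancel]
  · intro x hx
    have hk : ∀ k, x ^ ((q ^ 2) ^ k) = x := by
      intro k
      induction k with
      | zero => simp
      | succ k ih => rw [pow_succ, pow_mul, ih, hx]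
    rw [← prod_pow_eq_pow_sum]
    simp [hk]

noncomputable def T (q : ℕ) (a : F) : ℤ := ∑ y : F, chi (a * y ^ (q + 1))

namespace Setup
variable {m l q N M : ℕ}

lemma q2 (h : Setup F m l q N M) : 2 ≤ q := by
  rw [h.hq]; calc 2 = 2 ^ 1 := rfl
    _ ≤ 2 ^ m := Nat.pow_le_pow_right (by norm_num) h.hm

lemma Npos (h : Setup F m l q N M) : 0 < N := by
  have := h.hN
  have hc : 1 < Fintype.card F := Fintype.one_lt_card
  exact Nat.pos_of_ne_zero (by rintro rfl; omega)

lemma addq (h : Setup F m l q N M) (x y : F) : (x + y) ^ q = x ^ q + y ^ q := by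
  have := F_char2 F
  rw [h.hq]; exact add_pow_char_pow x y 2 m

lemma pow_card (h : Setup F m l q N M) (x : F) (hx : x ≠ 0) : x ^ (N * (q + 1)) = 1 := by
  rw [h.hN]; exact FiniteField.pow_card_sub_one_eq_one x hx

lemma gcdq_sub (h : Setup F m l q N M) (c : F) (hc : c ≠ 0) (hcq : c ^ q = c) : c ^ N = 1 := by
  have h2 := h.q2
  have : c ^ (q - 1) = 1 := by
    have : c ^ (q - 1) * c = c := by rw [← pow_succ, Nat.sub_add_cancel (by omega), hcq]
    exact mul_right_cancel₀ hc (by rw [this, one_mul])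
  rw [h.hM, pow_mul, this, one_pow]

lemma qinj (h : Setup F m l q N M) {x y : F} (hxy : x ^ q = y ^ q) : x = y := by
  have := F_char2 F
  rw [h.hq] at hxy
  exact (iterateFrobenius_inj F 2 m) (by simpa [iterateFrobenius_def] using hxy)

/-- the kernel of the quadratic form -/
lemma inner_sum [DecidableEq F] (h : Setup F m l q N M) (a v : F) :
    ∑ y : F, chi (a * (v ^ q * y + v * y ^ q)) =
      if a ^ q * v ^ (q ^ 2) = a * v then (Fintype.card F : ℤ) else 0 := by
  have := F_char2 F
  have e : ∀ y : F, chi (a * (v ^ q * y + v * y ^ q)) = chi ((a ^ q * v ^ (q ^ 2) + a * v) * y ^ q) := by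
    intro y
    rw [mul_add, chi_add, ← chi_pow (a * (v ^ q * y)) m, ← h.hq, ← chi_add]
    congr 1
    rw [mul_pow, mul_pow, ← pow_mul, sq]; ring
  simp only [e]
  have hb : Function.Bijective (fun y : F => y ^ q) :=
    Finite.injective_iff_bijective.mp (fun x y hxy => h.qinj hxy)
  rw [(Function.Bijective.sum_comp hb (fun y => chi ((a ^ q * v ^ (q ^ 2) + a * v) * y)))]
  rw [chi_sum_ite]
  simp only [CharTwo.add_eq_zero]

lemma T_sq [DecidableEq F] (h : Setup F m l q N M) (a : F) :
    T q a ^ 2 = (Fintype.card F : ℤ) * #{v : F | a ^ q * v ^ (q ^ 2) = a * v} := by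
  have := F_char2 F
  have e1 : T q a ^ 2 = ∑ y : F, ∑ v : F, chi (a * v ^ (q + 1)) * chi (a * (v ^ q * y + v * y ^ q)) := by
    rw [sq]; unfold T
    rw [sum_mul_sum]
    refine sum_congr rfl fun y _ => ?_
    rw [← Equiv.sum_comp (Equiv.addRight y)]
    refine sum_congr rfl fun v _ => ?_
    rw [← chi_add, ← chi_add]
    congr 1
    simp only [Equiv.coe_addRight]
    rw [pow_succ (v + y), h.addq]
    have : a * y ^ (q + 1) + a * y ^ (q + 1) = 0 := CharTwo.add_self_eq_zero _
    linear_combination this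
  rw [e1, sum_comm]
  simp only [← mul_sum, h.inner_sum]
  rw [card_filter, Nat.cast_sum, mul_sum]
  refine sum_congr rfl fun v _ => ?_
  split_ifs with hv
  · have : chi (a * v ^ (q + 1)) = 1 := by
      apply chi_sub m l (by rw [h.hF, h.hq])
      rw [← h.hq, mul_pow]
      calc a ^ q * (v ^ (q + 1)) ^ q = (a ^ q * v ^ (q ^ 2)) * v ^ q := by
            rw [sq]; ring
        _ = a * v ^ (q + 1) := by rw [hv]; ring
    rw [this]; simp
  · simp

lemma T_mod (h : Setup F m l q N M) (a : F) : ((q : ℤ) + 1) ∣ T q a - 1 := by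
  classical
  unfold T
  have hmem : ∀ y ∈ univ.erase (0 : F), y ^ (q + 1) ∈ (({x : F | x ^ N = 1} : Finset F)) := by
    intro y hy
    simp only [mem_filter, mem_univ, true_and]
    rw [← pow_mul, mul_comm]; exact h.pow_card y (by simpa using hy)
  rw [← sum_erase_add _ _ (mem_univ (0 : F))]
  rw [zero_pow (by omega), mul_zero, chi_zero, add_sub_cancel_right]
  rw [← sum_fiberwise_of_maps_to hmem]
  refine dvd_sum fun u hu => ?_
  simp only [mem_filter, mem_univ, true_and] at hu
  have hu0 : u ≠ 0 := by rintro rfl; rw [zero_pow h.Npos.ne'] at hu; exact zero_ne_one hu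
  have : ∑ y ∈ univ.erase (0 : F) with y ^ (q + 1) = u, chi (a * y ^ (q + 1))
      = ∑ y ∈ univ.filter (fun y : F => y ^ (q + 1) = u), chi (a * u) := by
    refine sum_congr ?_ ?_
    · ext y; simp only [mem_filter, mem_erase, mem_univ, and_true, true_and]
      constructor
      · exact fun h => h.2
      · intro hy; refine ⟨?_, hy⟩
        rintro rfl; rw [zero_pow (by omega)] at hy; exact hu0 hy.symm
    · intro y hy; simp only [mem_filter, mem_univ, true_and] at hy; rw [hy]
  rw [this, sum_const, card_fiber N (q + 1) h.hN u hu]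
  simp

lemma q_pow_mod (h : Setup F m l q N M) : ((q : ℤ) + 1) ∣ (q : ℤ) ^ l - 1 := by
  obtain ⟨k, hk⟩ := h.hle
  have h1 : (q : ℤ) ^ l = ((q : ℤ) ^ 2) ^ k := by rw [hk, ← two_mul, pow_mul]
  have h2 := sub_dvd_pow_sub_pow ((q : ℤ) ^ 2) 1 k
  rw [one_pow] at h2
  rw [h1]
  exact Dvd.dvd.trans ⟨(q : ℤ) - 1, by ring⟩ h2

lemma T_eval [DecidableEq F] (h : Setup F m l q N M) (a : F) :
    T q a = (q : ℤ) ^ l - (if a ^ N = 1 then ((q : ℤ) + 1) * (q : ℤ) ^ l else 0)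
      + (if a = 0 then (q : ℤ) ^ (2 * l) - (q : ℤ) ^ l else 0) := by
  have hq2 : (2 : ℤ) ≤ q := by exact_mod_cast h.q2
  by_cases ha : a = 0
  · subst ha
    have : T q (0 : F) = (q : ℤ) ^ (2 * l) := by
      unfold T; simp [chi_zero, h.hF]
    rw [this, zero_pow h.Npos.ne']; simp
  have hT := h.T_sq a
  have hmod := h.T_mod a
  have hqm := h.q_pow_mod
  rw [if_neg ha, add_zero]
  rw [h.hF] at hT
  split_ifs with haN
  · obtain ⟨b, rfl⟩ := exists_root N (q + 1) h.hN a haN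
    have hb : b ≠ 0 := by rintro rfl; simp at ha
    have hcard : #{v : F | (b ^ (q + 1)) ^ q * v ^ (q ^ 2) = b ^ (q + 1) * v} = q ^ 2 := by
      have hq1 : 1 ≤ q ^ 2 := Nat.one_le_pow _ _ (by have := h.q2; omega)
      have hroot : #{x : F | x ^ (q ^ 2) = x} = q ^ 2 := by
        have hdiv : q ^ 2 - 1 ∣ Fintype.card F - 1 := by
          rw [h.hF, pow_mul]; simpa using Nat.sub_dvd_pow_sub_pow (q ^ 2) 1 l
        obtain ⟨b', hb'⟩ := hdiv
        have h1 := card_roots (F := F) (q ^ 2 - 1) b' hb'.symm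
        have : ({x : F | x ^ (q ^ 2) = x} : Finset F) = insert 0 ({x : F | x ^ (q ^ 2 - 1) = 1} : Finset F) := by
          ext x
          simp only [mem_filter, mem_univ, true_and, mem_insert]
          by_cases hx : x = 0
          · subst hx; simp; intro hh; have := h.q2; omega
          · simp only [hx, false_or]
            have : x ^ (q ^ 2) = x ^ (q ^ 2 - 1) * x := by rw [← pow_succ, Nat.sub_add_cancel hq1]
            rw [this]
            constructor
            · intro hh; exact mul_right_cancel₀ hx (by rw [hh, one_mul])
            · intro hh; rw [hh, one_mul]
        rw [this, card_insert_of_notMem, h1, Nat.sub_add_cancel hq1]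
        simp only [mem_filter, mem_univ, true_and]
        have : 2 * 2 ≤ q ^ 2 := by rw [sq]; exact Nat.mul_le_mul h.q2 h.q2
        rw [zero_pow (by omega)]; exact zero_ne_one
      refine Eq.trans ?_ hroot
      refine card_bij (fun v _ => b * v) ?_ ?_ ?_
      · intro v hv
        simp only [mem_filter, mem_univ, true_and] at hv ⊢
        apply mul_left_cancel₀ (pow_ne_zero q hb)
        calc b ^ q * (b * v) ^ (q ^ 2) = (b ^ (q + 1)) ^ q * v ^ (q ^ 2) := by rw [mul_pow, sq]; ring
          _ = _ := by rw [hv]; ring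
      · intro x _ y _ hxy; exact mul_left_cancel₀ hb hxy
      · intro y hy
        simp only [mem_filter, mem_univ, true_and] at hy
        refine ⟨b⁻¹ * y, ?_, by rw [mul_inv_cancel_left₀ hb]⟩
        simp only [mem_filter, mem_univ, true_and]
        have e : (b ^ (q + 1)) ^ q * (b⁻¹ * y) ^ (q ^ 2) = b ^ q * (b * (b⁻¹ * y)) ^ (q ^ 2) := by
          rw [mul_pow b, sq]; ring
        rw [e, mul_inv_cancel_left₀ hb, hy, pow_succ]; field_simp
    rw [hcard] at hT
    have hT2 : T q (b ^ (q + 1)) ^ 2 = ((q : ℤ) ^ l * q) ^ 2 := by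
      rw [hT]; push_cast; ring
    rcases sq_eq_sq_iff_eq_or_eq_neg.mp hT2 with h1 | h1
    · exfalso
      rw [h1] at hmod
      have h3 : ((q : ℤ) + 1) ∣ 2 := by
        have h4 : (2 : ℤ) = ((q : ℤ) ^ l) * (q + 1) - ((q : ℤ) ^ l * q - 1) - ((q:ℤ) ^ l - 1) := by ring
        rw [h4]
        exact dvd_sub (dvd_sub (Dvd.intro_left _ rfl) hmod) hqm
      have := Int.le_of_dvd (by norm_num) h3
      omega
    · rw [h1]; ring
  · have hcard : #{v : F | a ^ q * v ^ (q ^ 2) = a * v} = 1 := by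
      rw [card_eq_one]
      refine ⟨0, ?_⟩
      ext v
      simp only [mem_filter, mem_univ, true_and, mem_singleton]
      constructor
      · intro hv
        by_contra hv0
        apply haN
        have hc : (a * v ^ (q + 1)) ^ q = a * v ^ (q + 1) := by
          calc (a * v ^ (q + 1)) ^ q = (a ^ q * v ^ (q ^ 2)) * v ^ q := by
                rw [sq]; ring
            _ = a * v ^ (q + 1) := by rw [hv]; ring
        have := h.gcdq_sub _ (mul_ne_zero ha (pow_ne_zero _ hv0)) hc
        rw [mul_pow, ← pow_mul, mul_comm (q + 1), h.pow_card v hv0, mul_one] at this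
        exact this
      · rintro rfl
        have := h.q2
        rw [zero_pow (by positivity)]; ring
    rw [hcard] at hT
    have hT2 : T q a ^ 2 = ((q : ℤ) ^ l) ^ 2 := by
      rw [hT]; push_cast; ring
    rcases sq_eq_sq_iff_eq_or_eq_neg.mp hT2 with h1 | h1
    · rw [h1]; ring
    · exfalso
      rw [h1] at hmod
      have h3 : ((q : ℤ) + 1) ∣ 2 := by
        have h4 : (2 : ℤ) = - (- (q : ℤ) ^ l - 1) - ((q:ℤ) ^ l - 1) := by ring
        rw [h4]
        exact dvd_sub ((dvd_neg).mpr hmod) hqm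
      have := Int.le_of_dvd (by norm_num) h3
      omega


lemma card_U [DecidableEq F] (h : Setup F m l q N M) : #{w : F | w ^ (q + 1) = 1} = q + 1 :=
  card_roots (q + 1) N (by rw [mul_comm, h.hN])

/-- the counting function -/
noncomputable def cnt [DecidableEq F] (q N s : ℕ) (z : F) : ℕ :=
  #{w ∈ ({w : F | w ^ (q + 1) = 1} : Finset F) | w ^ (2 ^ s) * (z + w) ^ N = 1}

noncomputable def W (d : ℕ) (z : F) : ℤ := ∑ x : F, chi (z * x + x ^ d)

lemma frob_bij (F : Type*) [Field F] [Fintype F] [Algebra (ZMod 2) F] (s : ℕ) :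
    Function.Bijective (fun y : F => y ^ 2 ^ s) := by
  have := F_char2 F
  refine Finite.injective_iff_bijective.mp (fun x y hxy => ?_)
  exact (iterateFrobenius_inj F 2 s) (by simpa [iterateFrobenius_def] using hxy)

lemma frob_mem_U [DecidableEq F] (q s : ℕ) (w : F) : (w ^ 2 ^ s) ^ (q + 1) = 1 ↔ w ^ (q + 1) = 1 := by
  rw [← pow_mul, mul_comm, pow_mul]
  constructor
  · intro hw
    apply (frob_bij F s).1
    simpa using hw
  · intro hw; rw [hw, one_pow]

lemma sum_units [DecidableEq F] (_h : Setup F m l q N M) (f : F → ℤ) :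
    ((Fintype.card F : ℤ) - 1) * ∑ x ∈ univ.erase (0 : F), f x =
      ∑ c ∈ univ.erase (0 : F), ∑ y ∈ univ.erase (0 : F), f (c * y ^ (q + 1)) := by
  rw [sum_comm]
  have : ∀ y ∈ univ.erase (0 : F), ∑ c ∈ univ.erase (0 : F), f (c * y ^ (q + 1)) = ∑ x ∈ univ.erase (0 : F), f x := by
    intro y hy
    have hb : y ^ (q + 1) ≠ 0 := pow_ne_zero _ (by simpa using hy)
    refine sum_nbij' (fun c => c * y ^ (q + 1)) (fun c => c * (y ^ (q + 1))⁻¹) ?_ ?_ ?_ ?_ ?_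
    · intro c hc; simp only [mem_erase, mem_univ, and_true] at hc ⊢; exact mul_ne_zero hc hb
    · intro c hc; simp only [mem_erase, mem_univ, and_true] at hc ⊢; exact mul_ne_zero hc (inv_ne_zero hb)
    · intro c _; exact mul_inv_cancel_right₀ hb c
    · intro c _; exact inv_mul_cancel_right₀ hb c
    · intro c _; rfl
  rw [sum_congr rfl this, sum_const, card_erase_of_mem (mem_univ _), card_univ, nsmul_eq_mul,
    Nat.cast_sub Fintype.card_pos]
  simp

lemma W_T [DecidableEq F] (h : Setup F m l q N M) (s : ℕ) (z : F) (φ : F → F)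
    (hφ : ∀ u, (φ u) ^ 2 ^ s = u) :
    ((Fintype.card F : ℤ) - 1) * W (N + 2 ^ s) z =
      ∑ c ∈ univ.erase (0 : F), T q (c * (z + φ (c ^ N))) := by
  have hW : W (N + 2 ^ s) z = ∑ x ∈ univ.erase (0 : F), chi (z * x + x ^ (N + 2 ^ s)) + 1 := by
    unfold W
    rw [← sum_erase_add _ _ (mem_univ (0 : F)), zero_pow (by have := h.Npos; intro h0; have := (Nat.add_eq_zero_iff.mp h0).1; omega)]
    simp [chi_zero]
  have hT : ∀ c ∈ univ.erase (0 : F), T q (c * (z + φ (c ^ N))) =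
      ∑ y ∈ univ.erase (0 : F), chi (z * (c * y ^ (q + 1)) + (c * y ^ (q + 1)) ^ (N + 2 ^ s)) + 1 := by
    intro c hc
    unfold T
    rw [← sum_erase_add _ _ (mem_univ (0 : F)), zero_pow (by omega), mul_zero, chi_zero]
    congr 1
    refine sum_congr rfl fun y hy => ?_
    have hy0 : y ≠ 0 := by simpa using hy
    have e : (c * y ^ (q + 1)) ^ (N + 2 ^ s) = (φ (c ^ N) * (c * y ^ (q + 1))) ^ 2 ^ s := by
      rw [pow_add, mul_pow c _ N, ← pow_mul y, mul_comm (q + 1) N, h.pow_card y hy0, mul_one,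
        mul_pow (φ _), hφ]
    rw [e, chi_add, chi_pow, ← chi_add]
    congr 1; ring
  rw [sum_congr rfl hT, sum_add_distrib, ← h.sum_units (fun x => chi (z * x + x ^ (N + 2 ^ s))), hW, sum_const,
    card_erase_of_mem (mem_univ _), card_univ, nsmul_eq_mul,
    Nat.cast_sub Fintype.card_pos]
  push_cast; ring

lemma sum_fib [DecidableEq F] (h : Setup F m l q N M) (f : F → ℤ) :
    ∑ c ∈ univ.erase (0 : F), f (c ^ N) = N * ∑ u ∈ ({w : F | w ^ (q + 1) = 1} : Finset F), f u := by
  have hmem : ∀ y ∈ univ.erase (0 : F), y ^ N ∈ (({x : F | x ^ (q + 1) = 1} : Finset F)) := by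
    intro y hy
    simp only [mem_filter, mem_univ, true_and]
    rw [← pow_mul]; exact h.pow_card y (by simpa using hy)
  rw [← sum_fiberwise_of_maps_to hmem, mul_sum]
  refine sum_congr rfl fun u hu => ?_
  simp only [mem_filter, mem_univ, true_and] at hu
  have hu0 : u ≠ 0 := by rintro rfl; rw [zero_pow (by omega)] at hu; exact zero_ne_one hu
  have : ∑ y ∈ univ.erase (0 : F) with y ^ N = u, f (y ^ N)
      = ∑ y ∈ univ.filter (fun y : F => y ^ N = u), f u := by
    refine sum_congr ?_ ?_
    · ext y; simp only [mem_filter, mem_erase, mem_univ, and_true, true_and]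
      constructor
      · exact fun h => h.2
      · intro hy; refine ⟨?_, hy⟩
        rintro rfl; rw [zero_pow h.Npos.ne'] at hy; exact hu0 hy.symm
    · intro y hy; simp only [mem_filter, mem_univ, true_and] at hy; rw [hy]
  rw [this, sum_const, card_fiber (q + 1) N (by rw [mul_comm, h.hN]) u hu]
  simp

lemma W_formula [DecidableEq F] (h : Setup F m l q N M) (s : ℕ) (z : F) :
    ((q : ℤ) + 1) * W (N + 2 ^ s) z = ((q : ℤ) + 1) * ((q : ℤ) ^ l * (1 - cnt q N s z)) +
      if z ^ (q + 1) = 1 then (q : ℤ) ^ (2 * l) - (q : ℤ) ^ l else 0 := by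
  have := F_char2 F
  let E : F ≃ F := Equiv.ofBijective _ (frob_bij F s)
  have hE : ∀ w, E w = w ^ 2 ^ s := fun w => rfl
  have hφ : ∀ u, (E.symm u) ^ 2 ^ s = u := by intro u; rw [← hE]; simp
  have h1 := h.W_T s z E.symm hφ
  let f : F → ℤ := fun u => (q : ℤ) ^ l - (if u * (z + E.symm u) ^ N = 1 then ((q : ℤ) + 1) * (q : ℤ) ^ l else 0)
      + (if z = E.symm u then (q : ℤ) ^ (2 * l) - (q : ℤ) ^ l else 0)
  have h2 : ∀ c ∈ univ.erase (0 : F), T q (c * (z + E.symm (c ^ N))) = f (c ^ N) := by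
    intro c hc
    have hc0 : c ≠ 0 := by simpa using hc
    rw [h.T_eval]
    simp only [f, mul_pow, mul_eq_zero, hc0, false_or, CharTwo.add_eq_zero]
  rw [sum_congr rfl h2, h.sum_fib] at h1
  have h3 : ∑ u ∈ ({w : F | w ^ (q + 1) = 1} : Finset F), f u =
      ∑ w ∈ ({w : F | w ^ (q + 1) = 1} : Finset F), f (E w) := by
    symm
    refine sum_equiv E ?_ (fun _ _ => rfl)
    intro w
    simp only [mem_filter, mem_univ, true_and, hE]
    exact (frob_mem_U q s w).symm
  have hN : ((Fintype.card F : ℤ) - 1) = N * (q + 1) := by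
    have := h.hN
    have hc : 0 < Fintype.card F := Fintype.card_pos
    rw [← Nat.cast_one, ← Nat.cast_sub (by omega), ← this]; push_cast; ring
  rw [hN, mul_assoc] at h1
  have hNp : (N : ℤ) ≠ 0 := by exact_mod_cast h.Npos.ne'
  rw [mul_left_cancel₀ hNp h1, h3]
  simp only [f, Equiv.symm_apply_apply, sum_add_distrib, sum_sub_distrib]
  rw [sum_const, h.card_U, sum_ite_eq, ← sum_filter, sum_const]
  simp only [hE, mem_filter, mem_univ, true_and, nsmul_eq_mul]
  unfold cnt
  push_cast; ring

lemma exists_R (h : Setup F m l q N M) : ∃ R : ℕ, R * (q + 1) + 1 = q ^ l ∧ q ≤ R + 1 ∧ 1 ≤ R ∧ R ≠ q := by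
  have hq := h.q2
  have h1 : ((q + 1 : ℕ) : ℤ) ∣ ((q ^ l - 1 : ℕ) : ℤ) := by
    rw [Nat.cast_sub (Nat.one_le_pow _ _ (by omega))]
    simpa using h.q_pow_mod
  obtain ⟨R, hR⟩ := Int.natCast_dvd_natCast.mp h1
  have hp : 1 ≤ q ^ l := Nat.one_le_pow _ _ (by omega)
  have hR' : R * (q + 1) + 1 = q ^ l := by rw [mul_comm, ← hR]; omega
  have h4 : q ^ 2 ≤ q ^ l := Nat.pow_le_pow_right (by omega) h.hl
  have h5 : q ≤ R + 1 := by
    by_contra hh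
    have : R + 2 ≤ q := by omega
    nlinarith
  refine ⟨R, hR', h5, by omega, ?_⟩
  rintro rfl
  have h6 : R ∣ R ^ l := dvd_pow_self _ (by have := h.hl; omega)
  rw [← hR'] at h6
  have := (Nat.dvd_add_right (Dvd.intro _ rfl)).mp h6
  have := Nat.le_of_dvd one_pos this
  omega

lemma W_formula' [DecidableEq F] (h : Setup F m l q N M) (s : ℕ) (R : ℕ) (hR : R * (q + 1) + 1 = q ^ l) (z : F) :
    W (N + 2 ^ s) z = (q : ℤ) ^ l * (1 - cnt q N s z + if z ^ (q + 1) = 1 then (R : ℤ) else 0) := by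
  have h1 := h.W_formula s z
  have hq : ((q : ℤ) + 1) ≠ 0 := by positivity
  apply mul_left_cancel₀ hq
  rw [h1]
  have : (q : ℤ) ^ l = R * (q + 1) + 1 := by exact_mod_cast hR.symm
  have h2 : (q : ℤ) ^ (2 * l) = (R * (q + 1) + 1) ^ 2 := by rw [← this, ← pow_mul, mul_comm]
  rw [h2, this]
  split_ifs <;> ring

/-- moments -/
lemma W_sum (d : ℕ) (hd : d ≠ 0) : ∑ z : F, W d z = (Fintype.card F : ℤ) := by
  classical
  unfold W
  rw [sum_comm]
  have : ∀ x : F, ∑ z : F, chi (z * x + x ^ d) = if x = 0 then (Fintype.card F : ℤ) else 0 := by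
    intro x
    simp only [chi_add, ← sum_mul]
    simp only [mul_comm _ x]
    rw [chi_sum_ite]
    split_ifs with hx
    · subst hx; rw [zero_pow hd, chi_zero, mul_one]
    · simp
  simp [this]

lemma W_sq_sum (d : ℕ) : ∑ z : F, W d z ^ 2 = (Fintype.card F : ℤ) ^ 2 := by
  classical
  have := F_char2 F
  have e : ∀ z : F, W d z ^ 2 = ∑ x : F, ∑ y : F, (chi ((x + y) * z) * chi (x ^ d + y ^ d)) := by
    intro z
    unfold W
    rw [sq, sum_mul_sum]
    refine sum_congr rfl fun x _ => sum_congr rfl fun y _ => ?_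
    rw [← chi_add, ← chi_add]; congr 1; ring
  simp only [e]
  rw [sum_comm]
  have : ∀ x : F, ∑ z : F, ∑ y : F, (chi ((x + y) * z) * chi (x ^ d + y ^ d)) = (Fintype.card F : ℤ) := by
    intro x
    rw [sum_comm]
    simp only [← sum_mul, chi_sum_ite, CharTwo.add_eq_zero]
    simp only [ite_mul, zero_mul, sum_ite_eq, mem_univ, if_true, CharTwo.add_self_eq_zero, chi_zero, mul_one]
  simp only [this, sum_const, card_univ, nsmul_eq_mul]
  ring

lemma pow_inj (d : ℕ) (hd : d ≠ 0) (hg : Nat.gcd d (Fintype.card F - 1) = 1) : Function.Injective (fun x : F => x ^ d) := by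
  intro x y hxy
  simp only at hxy
  by_cases hy : y = 0
  · subst hy; rw [zero_pow hd] at hxy; exact pow_eq_zero_iff hd |>.mp hxy
  have h1 : (x / y) ^ d = 1 := by rw [div_pow, hxy, div_self (pow_ne_zero _ hy)]
  have hx : x / y ≠ 0 := by
    intro h0; rw [h0, zero_pow hd] at h1; exact zero_ne_one h1
  have h2 : (x / y) ^ (Fintype.card F - 1) = 1 := FiniteField.pow_card_sub_one_eq_one _ hx
  have h3 := orderOf_dvd_of_pow_eq_one h1
  have h4 := orderOf_dvd_of_pow_eq_one h2
  have h5 := Nat.dvd_gcd h3 h4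
  rw [hg, Nat.dvd_one, orderOf_eq_one_iff] at h5
  exact (div_eq_one_iff_eq hy).mp h5

lemma W_zero (d : ℕ) (hd : d ≠ 0) (hg : Nat.gcd d (Fintype.card F - 1) = 1) : W d (0 : F) = 0 := by
  unfold W
  simp only [zero_mul, zero_add]
  rw [Function.Bijective.sum_comp (Finite.injective_iff_bijective.mp (pow_inj d hd hg)) (fun x : F => chi x)]
  simpa using chi_sum_mul (1 : F) one_ne_zero


/-- for `x ≠ 0` with `x^(q^2) = x`, the element `x^N` is simple -/
lemma pow_N_sub (h : Setup F m l q N M) (x y : F) (hx : x ≠ 0) (hxq : x ^ (q ^ 2) = x)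
    (hy : x ^ q * y = x) : x ^ N * y ^ l = 1 := by
  have h2 := h.q2
  have h1 : (x ^ (q - 1)) * y = 1 := by
    apply mul_right_cancel₀ hx
    have : x ^ (q - 1) * x = x ^ q := by rw [← pow_succ, Nat.sub_add_cancel (by omega)]
    calc x ^ (q - 1) * y * x = (x ^ (q - 1) * x) * y := by ring
      _ = 1 * x := by rw [this, hy, one_mul]
  rw [h.hM, pow_mul, h.hMl, ← mul_pow, h1, one_pow]
  rw [← pow_mul, mul_comm, pow_mul, hxq]

lemma U_q2 (w : F) (hw : w ^ (q + 1) = 1) : w ^ (q ^ 2) = w := by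
  have hw0 : w ≠ 0 := by rintro rfl; rw [zero_pow (by omega)] at hw; exact zero_ne_one hw
  have : w ^ q * w = 1 := by rw [← pow_succ, hw]
  have h2 : (w ^ q) ^ q * w ^ q = 1 := by rw [← mul_pow, this, one_pow]
  rw [sq, pow_mul]
  apply mul_right_cancel₀ (pow_ne_zero q hw0)
  rw [h2, mul_comm, this]

lemma U_cond (h : Setup F m l q N M) (s : ℕ) (z w : F) (hz : z ^ (q + 1) = 1) (hw : w ^ (q + 1) = 1) :
    w ^ 2 ^ s * (z + w) ^ N = 1 ↔ (w ^ 2 ^ s = (z * w) ^ l ∧ w ≠ z) := by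
  have := F_char2 F
  by_cases hzw : w = z
  · subst hzw
    rw [CharTwo.add_self_eq_zero, zero_pow h.Npos.ne']; simp
  have hx : z + w ≠ 0 := by
    rw [Ne, CharTwo.add_eq_zero]; exact fun hh => hzw hh.symm
  have hz0 : z ≠ 0 := by rintro rfl; rw [zero_pow (by omega)] at hz; exact zero_ne_one hz
  have hw0 : w ≠ 0 := by rintro rfl; rw [zero_pow (by omega)] at hw; exact zero_ne_one hw
  have h1 : (z + w) ^ (q ^ 2) = z + w := by
    rw [sq, pow_mul, h.addq, h.addq, ← pow_mul, ← pow_mul, ← sq, U_q2 z hz, U_q2 w hw]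
  have h2 : (z + w) ^ q * (z * w) = z + w := by
    rw [h.addq]
    rw [pow_succ] at hz hw
    linear_combination w * hz + z * hw
  have h3 := h.pow_N_sub (z + w) (z * w) hx h1 h2
  have hp : (z * w) ^ l ≠ 0 := pow_ne_zero _ (mul_ne_zero hz0 hw0)
  constructor
  · intro hh
    refine ⟨?_, hzw⟩
    apply mul_right_cancel₀ (pow_ne_zero N hx)
    rw [hh, mul_comm, h3]
  · rintro ⟨hh, -⟩
    rw [hh, mul_comm, h3]

lemma U_diag (h : Setup F m l q N M) (s : ℕ) (hg : Nat.gcd (N + 2 ^ s) (Fintype.card F - 1) = 1) (z : F)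
    (hz : z ^ (q + 1) = 1) (hh : z ^ 2 ^ s = (z * z) ^ l) : z = 1 := by
  have hz0 : z ≠ 0 := by rintro rfl; rw [zero_pow (by omega)] at hz; exact zero_ne_one hz
  have h3 := h.pow_N_sub z (z * z) hz0 (U_q2 z hz) (by rw [← mul_assoc, ← pow_succ, hz, one_mul])
  rw [← hh, ← pow_add] at h3
  have hd : N + 2 ^ s ≠ 0 := by have := h.Npos; positivity
  apply pow_inj (F := F) (N + 2 ^ s) hd hg
  simpa using h3

noncomputable def UU [DecidableEq F] (q : ℕ) : Finset F := {w : F | w ^ (q + 1) = 1}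

lemma mem_UU [DecidableEq F] (w : F) : w ∈ UU q ↔ w ^ (q + 1) = 1 := by simp [UU]

noncomputable def DD [DecidableEq F] (q l s : ℕ) (z : F) : ℕ :=
  #{w ∈ (UU q : Finset F) | w ^ 2 ^ s = (z * w) ^ l}

lemma cnt_DD [DecidableEq F] (h : Setup F m l q N M) (s : ℕ)
    (hg : Nat.gcd (N + 2 ^ s) (Fintype.card F - 1) = 1) (z : F) (hz : z ∈ UU q) :
    cnt q N s z + (if z = 1 then 1 else 0) = DD q l s z := by
  have hz' := (mem_UU z).mp hz
  have e : cnt q N s z = #({w ∈ (UU q : Finset F) | w ^ 2 ^ s = (z * w) ^ l}.erase z) := by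
    unfold cnt UU
    congr 1
    ext w
    simp only [mem_filter, mem_univ, true_and, mem_erase]
    constructor
    · rintro ⟨h1, h2⟩
      have := (h.U_cond s z w hz' h1).mp h2
      exact ⟨this.2, h1, this.1⟩
    · rintro ⟨h1, h2, h3⟩
      exact ⟨h2, (h.U_cond s z w hz' h2).mpr ⟨h3, h1⟩⟩
  rw [e]
  unfold DD
  split_ifs with h1
  · apply card_erase_add_one
    subst h1
    simp [hz]
  · rw [erase_eq_of_notMem, add_zero]
    intro hh
    rw [mem_filter] at hh
    exact h1 (h.U_diag s hg z hz' hh.2)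

lemma cnt_le [DecidableEq F] (h : Setup F m l q N M) (s : ℕ) (z : F) (hz : z ∈ UU q) : cnt q N s z ≤ q := by
  have hz' := (mem_UU z).mp hz
  have : cnt q N s z ≤ #((UU q : Finset F).erase z) := by
    unfold cnt
    apply card_le_card
    intro w hw
    simp only [mem_filter, mem_univ, true_and] at hw
    have := (h.U_cond s z w hz' hw.1).mp hw.2
    rw [mem_erase, mem_UU]
    exact ⟨this.2, hw.1⟩
  have h2 : #(UU q : Finset F) = q + 1 := h.card_U
  rw [card_erase_of_mem hz, h2] at this
  simpa using this

lemma U_mul [DecidableEq F] {a b : F} (ha : a ∈ UU q) (hb : b ∈ UU q) : a * b ∈ UU q := by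
  rw [mem_UU] at *; rw [mul_pow, ha, hb, one_mul]

lemma U_inv [DecidableEq F] {a : F} (ha : a ∈ UU q) : a⁻¹ ∈ UU q := by
  rw [mem_UU] at *; rw [inv_pow, ha, inv_one]

lemma U_ne [DecidableEq F] {a : F} (ha : a ∈ UU q) : a ≠ 0 := by
  rw [mem_UU] at ha; rintro rfl; rw [zero_pow (by omega)] at ha; exact zero_ne_one ha

lemma U_one [DecidableEq F] : (1 : F) ∈ UU q := by simp [mem_UU]

lemma DD_sum [DecidableEq F] (h : Setup F m l q N M) (s : ℕ) :
    ∑ z ∈ (UU q : Finset F), DD q l s z = q + 1 := by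
  have h2 : #(UU q : Finset F) = q + 1 := h.card_U
  unfold DD
  simp only [card_filter]
  rw [sum_comm]
  have : ∀ w ∈ (UU q : Finset F), ∑ z ∈ (UU q : Finset F), (if w ^ 2 ^ s = (z * w) ^ l then 1 else 0)
      = ∑ t ∈ (UU q : Finset F), (if w ^ 2 ^ s = t ^ l then 1 else 0) := by
    intro w hw
    refine sum_nbij' (fun z => z * w) (fun t => t * w⁻¹) ?_ ?_ ?_ ?_ ?_
    · intro z hz; exact U_mul hz hw
    · intro z hz; exact U_mul hz (U_inv hw)
    · intro z _; exact mul_inv_cancel_right₀ (U_ne hw) z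
    · intro z _; exact inv_mul_cancel_right₀ (U_ne hw) z
    · intro z _; rfl
  rw [sum_congr rfl this, sum_comm]
  have : ∀ t ∈ (UU q : Finset F), ∑ w ∈ (UU q : Finset F), (if w ^ 2 ^ s = t ^ l then 1 else 0) = 1 := by
    intro t ht
    obtain ⟨w0, hw0⟩ := (frob_bij F s).2 (t ^ l)
    simp only at hw0
    have hmem : w0 ∈ (UU q : Finset F) := by
      rw [mem_UU, ← frob_mem_U q s, hw0, ← pow_mul, mul_comm, pow_mul, (mem_UU t).mp ht, one_pow]
    rw [← card_filter, card_eq_one]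
    refine ⟨w0, ?_⟩
    ext w
    simp only [mem_filter, mem_singleton]
    constructor
    · rintro ⟨_, hw⟩; rw [← hw0] at hw; exact (frob_bij F s).1 hw
    · rintro rfl; exact ⟨hmem, hw0⟩
  rw [sum_congr rfl this]
  simp [h2]

lemma two_vals [DecidableEq F] (h : Setup F m l q N M) (s : ℕ) (hs : s ≤ 2 * m - 1)
    (hg : Nat.gcd (N + 2 ^ s) (Fintype.card F - 1) = 1)
    (R : ℕ) (hR : R * (q + 1) + 1 = q ^ l) (hR1 : q ≤ R + 1) (hR2 : 1 ≤ R) (hR3 : R ≠ q) :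
    ∃ z1 ∈ (UU q : Finset F), ∃ z2 ∈ (UU q : Finset F), cnt q N s z1 ≠ cnt q N s z2 ∧
      cnt q N s z1 ≠ R ∧ cnt q N s z2 ≠ R := by
  have hq2 := h.q2
  have hU : #(UU q : Finset F) = q + 1 := h.card_U
  have hsum := h.DD_sum s
  have hc1 := h.cnt_DD s hg 1 U_one
  rw [if_pos rfl] at hc1
  have hle1 : DD q l s (1 : F) ≤ q + 1 := by rw [← hU]; exact card_filter_le _ _
  by_cases hD : DD q l s (1 : F) = 1
  · -- trivial kernel
    have hle : ∀ z ∈ (UU q : Finset F), DD q l s z ≤ 1 := by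
      intro z hz
      unfold DD
      rw [card_le_one]
      intro a ha b hb
      rw [mem_filter] at ha hb
      have hb0 := U_ne hb.1
      have hk : a * b⁻¹ ∈ ({w ∈ (UU q : Finset F) | w ^ 2 ^ s = (1 * w) ^ l}) := by
        rw [mem_filter]
        refine ⟨U_mul ha.1 (U_inv hb.1), ?_⟩
        rw [one_mul, mul_pow, mul_pow, inv_pow, inv_pow, ha.2, hb.2, mul_pow, mul_pow]
        have := U_ne hz
        field_simp
      have h1 : (1 : F) ∈ ({w ∈ (UU q : Finset F) | w ^ 2 ^ s = (1 * w) ^ l}) := by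
        rw [mem_filter]; exact ⟨U_one, by simp⟩
      have := card_le_one.mp (le_of_eq hD) _ hk _ h1
      exact (mul_inv_eq_one₀ hb0).mp this
    have heq : ∀ z ∈ (UU q : Finset F), DD q l s z = 1 := by
      apply (sum_eq_sum_iff_of_le hle).mp
      rw [hsum]; simp [hU]
    obtain ⟨z, hz, hz1⟩ := exists_mem_ne (s := (UU q : Finset F)) (by omega) 1
    have hcz := h.cnt_DD s hg z hz
    rw [if_neg hz1, heq z hz] at hcz
    have hR1' : R ≠ 1 := by
      rintro rfl
      have hq : q = 2 := by omega
      have hm1 : m = 1 := by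
        have := h.hq
        rw [hq] at this
        have : 2 ^ 1 = 2 ^ m := by simpa using this
        exact (Nat.pow_right_injective (le_refl 2) this).symm
      subst hq
      have hl2 : l = 2 := by
        have : 2 ^ 2 = 2 ^ l := by rw [← hR]; norm_num
        exact (Nat.pow_right_injective (le_refl 2) this).symm
      have hNN := h.hN
      have hF := h.hF
      rw [hl2] at hF
      rw [hF] at hNN hg
      have hN5 : N = 5 := by norm_num at hNN; omega
      subst hN5 hm1 hl2
      have : s = 0 ∨ s = 1 := by omega
      rcases this with rfl | rfl
      · norm_num at hg
      · have : DD 2 2 1 (1 : F) = 3 := by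
          unfold DD
          rw [filter_true_of_mem, hU]
          intro w _; simp
        omega
    exact ⟨1, U_one, z, hz, by omega, by omega, by omega⟩
  · have hD2 : 2 ≤ DD q l s (1 : F) := by omega
    have hz : ∃ z ∈ (UU q : Finset F), DD q l s z < 1 := by
      by_contra! hcon
      have : ∑ z ∈ (UU q : Finset F), 1 < ∑ z ∈ (UU q : Finset F), DD q l s z :=
        sum_lt_sum hcon ⟨1, U_one, by omega⟩
      rw [hsum] at this
      simp [hU] at this
    obtain ⟨z, hz, hz0⟩ := hz
    have hcz := h.cnt_DD s hg z hz
    refine ⟨1, U_one, z, hz, by omega, ?_, by omega⟩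
    intro hcR
    have hDq : DD q l s (1 : F) = q := by omega
    set K := ({w ∈ (UU q : Finset F) | w ^ 2 ^ s = (1 * w) ^ l}) with hK
    have hKc : #K = q := hDq
    have hsub : K ⊆ UU q := filter_subset _ _
    have hc : #((UU q : Finset F) \ K) = 1 := by
      rw [card_sdiff_of_subset hsub, hU, hKc]; omega
    obtain ⟨k, hk, hk1⟩ := exists_mem_ne (s := K) (by omega) 1
    obtain ⟨w, hw⟩ := card_eq_one.mp hc
    have hwm : w ∈ (UU q : Finset F) \ K := by rw [hw]; simp
    rw [mem_sdiff] at hwm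
    have hk' := (mem_filter.mp hk)
    have hwk : w * k ∈ (UU q : Finset F) \ K := by
      rw [mem_sdiff]
      refine ⟨U_mul hwm.1 hk'.1, fun hh => hwm.2 ?_⟩
      have hh' := (mem_filter.mp hh)
      rw [hK, mem_filter]
      refine ⟨hwm.1, ?_⟩
      have e1 := hh'.2
      have e2 := hk'.2
      rw [one_mul] at e1 e2 ⊢
      rw [mul_pow, mul_pow, e2] at e1
      exact mul_right_cancel₀ (pow_ne_zero l (U_ne hk'.1)) e1
    rw [hw, mem_singleton] at hwk
    exact hk1 (mul_left_cancel₀ (U_ne hwm.1) (by rw [hwk, mul_one]))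

lemma main (h : Setup F m l q N M) (s : ℕ) (hs : s ≤ 2 * m - 1)
    (hg : Nat.gcd (N + 2 ^ s) (Fintype.card F - 1) = 1) :
    4 ≤ Set.ncard {v : ℤ | ∃ z : F, z ≠ 0 ∧ W (N + 2 ^ s) z = v} := by
  classical
  obtain ⟨R, hR, hR1, hR2, hR3⟩ := h.exists_R
  obtain ⟨z1, hz1, z2, hz2, h12, h1R, h2R⟩ := h.two_vals s hs hg R hR hR1 hR2 hR3
  have hd : N + 2 ^ s ≠ 0 := by have := h.Npos; positivity
  have hf := h.W_formula' s R hR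
  have hU : #(UU q : Finset F) = q + 1 := h.card_U
  have hqp : (0 : ℤ) < (q : ℤ) ^ l := by have := h.q2; positivity
  have hRz : (q : ℤ) ^ l = R * (q + 1) + 1 := by exact_mod_cast hR.symm
  have hfU : ∀ z ∈ (UU q : Finset F), W (N + 2 ^ s) z = (q : ℤ) ^ l * (1 - cnt q N s z + R) := by
    intro z hz; rw [hf, if_pos ((mem_UU z).mp hz)]
  have hfN : ∀ z, z ∉ (UU q : Finset F) → W (N + 2 ^ s) z = (q : ℤ) ^ l * (1 - cnt q N s z) := by
    intro z hz; rw [hf, if_neg (fun hh => hz ((mem_UU z).mpr hh)), add_zero]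
  have hQ : (Fintype.card F : ℤ) = (q : ℤ) ^ l * (q : ℤ) ^ l := by
    rw [h.hF]; push_cast; ring
  have hcs : ∑ z ∈ (UU q : Finset F), (cnt q N s z : ℤ) = q := by
    have h1 := h.DD_sum s
    rw [← sum_congr rfl (h.cnt_DD s hg), sum_add_distrib, sum_ite_eq', if_pos U_one] at h1
    have h2 : ∑ z ∈ (UU q : Finset F), cnt q N s z = q := by omega
    exact_mod_cast h2
  have hsU : ∑ z ∈ (UU q : Finset F), W (N + 2 ^ s) z = (Fintype.card F : ℤ) := by
    rw [sum_congr rfl hfU, ← mul_sum, sum_add_distrib, sum_sub_distrib, hcs]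
    simp only [sum_const, hU, nsmul_eq_mul]
    rw [hQ]; congr 1; rw [hRz]; push_cast; ring
  have hsN : ∑ z ∈ (UU q : Finset F)ᶜ, W (N + 2 ^ s) z = 0 := by
    have := sum_add_sum_compl (UU q : Finset F) (W (N + 2 ^ s))
    rw [hsU, W_sum _ hd] at this
    linarith
  have hqU : ∑ z ∈ (UU q : Finset F), W (N + 2 ^ s) z ^ 2 ≤ ((q : ℤ) ^ l * (1 + R)) * (Fintype.card F : ℤ) := by
    rw [← hsU, mul_sum]
    refine sum_le_sum fun z hz => ?_
    have hc := h.cnt_le s z hz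
    have h0 : (0 : ℤ) ≤ W (N + 2 ^ s) z := by
      rw [hfU z hz]; apply mul_nonneg hqp.le; omega
    have h1 : W (N + 2 ^ s) z ≤ (q : ℤ) ^ l * (1 + R) := by
      rw [hfU z hz]; apply mul_le_mul_of_nonneg_left _ hqp.le; omega
    rw [sq]; exact mul_le_mul_of_nonneg_right h1 h0
  have hlt : ((q : ℤ) ^ l * (1 + R)) * (Fintype.card F : ℤ) < (Fintype.card F : ℤ) ^ 2 := by
    rw [sq]
    apply mul_lt_mul_of_pos_right _ (by exact_mod_cast Fintype.card_pos)
    rw [hQ]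
    apply mul_lt_mul_of_pos_left _ hqp
    rw [hRz]
    have h1 : (2 : ℤ) ≤ q := by exact_mod_cast h.q2
    have h2 : (1 : ℤ) ≤ R := by exact_mod_cast hR2
    nlinarith
  have hex : ∃ z ∈ (UU q : Finset F)ᶜ, W (N + 2 ^ s) z ≠ 0 := by
    by_contra! hcon
    have := sum_add_sum_compl (UU q : Finset F) (fun z => W (N + 2 ^ s) z ^ 2)
    rw [W_sq_sum, sum_eq_zero (s := (UU q : Finset F)ᶜ) (fun z hz => by rw [hcon z hz]; ring)] at this
    linarith
  obtain ⟨z3, hz3, hp⟩ := exists_pos_of_sum_zero_of_exists_nonzero _ hsN hex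
  obtain ⟨z4, hz4, hn⟩ := exists_pos_of_sum_zero_of_exists_nonzero (fun z => - W (N + 2 ^ s) z)
    (by rw [sum_neg_distrib, hsN, neg_zero]) (by simpa using hex)
  have hW0 : W (N + 2 ^ s) (0 : F) = 0 := W_zero _ hd hg
  have hz30 : z3 ≠ 0 := by rintro rfl; rw [hW0] at hp; exact lt_irrefl _ hp
  have hz40 : z4 ≠ 0 := by rintro rfl; rw [hW0] at hn; simp at hn
  have hW3 : W (N + 2 ^ s) z3 = (q : ℤ) ^ l * 1 := by
    have e := hfN z3 (by simpa using hz3)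
    rw [e] at hp ⊢
    have := (pos_iff_pos_of_mul_pos hp).mp hqp
    congr 1; omega
  have hW4 : W (N + 2 ^ s) z4 < 0 := by linarith
  have hinj : ∀ a b : ℤ, (q : ℤ) ^ l * a = (q : ℤ) ^ l * b → a = b :=
    fun a b hab => mul_left_cancel₀ hqp.ne' hab
  have hnn : ∀ z ∈ (UU q : Finset F), (0 : ℤ) ≤ W (N + 2 ^ s) z := by
    intro z hz
    have hc := h.cnt_le s z hz
    rw [hfU z hz]; apply mul_nonneg hqp.le; omega
  have d12 : W (N + 2 ^ s) z1 ≠ W (N + 2 ^ s) z2 := by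
    rw [hfU z1 hz1, hfU z2 hz2]; intro hh; have := hinj _ _ hh; omega
  have d13 : W (N + 2 ^ s) z1 ≠ W (N + 2 ^ s) z3 := by
    rw [hfU z1 hz1, hW3]; intro hh; have := hinj _ _ hh; omega
  have d23 : W (N + 2 ^ s) z2 ≠ W (N + 2 ^ s) z3 := by
    rw [hfU z2 hz2, hW3]; intro hh; have := hinj _ _ hh; omega
  have n1 := hnn z1 hz1
  have n2 := hnn z2 hz2
  have hcard : #({W (N + 2 ^ s) z1, W (N + 2 ^ s) z2, W (N + 2 ^ s) z3, W (N + 2 ^ s) z4} : Finset ℤ) = 4 := by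
    have d14 : W (N + 2 ^ s) z1 ≠ W (N + 2 ^ s) z4 := by omega
    have d24 : W (N + 2 ^ s) z2 ≠ W (N + 2 ^ s) z4 := by omega
    have d34 : W (N + 2 ^ s) z3 ≠ W (N + 2 ^ s) z4 := by omega
    rw [card_insert_of_notMem (by simp [d12, d13, d14]), card_insert_of_notMem (by simp [d23, d24]),
      card_insert_of_notMem (by simp [d34]), card_singleton]
  rw [← hcard, ← Set.ncard_coe_finset]
  apply Set.ncard_le_ncard
  · intro v hv
    simp only [coe_insert, coe_singleton, Set.mem_insert_iff, Set.mem_singleton_iff] at hv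
    rcases hv with rfl | rfl | rfl | rfl
    · exact ⟨z1, U_ne hz1, rfl⟩
    · exact ⟨z2, U_ne hz2, rfl⟩
    · exact ⟨z3, hz30, rfl⟩
    · exact ⟨z4, hz40, rfl⟩
  · apply (Set.finite_range (fun z : F => W (N + 2 ^ s) z)).subset
    rintro v ⟨z, _, rfl⟩
    exact ⟨z, rfl⟩

end Setup
end Helpers


/-- For `d = (2^(2lm)-1)/(2^m+1) + 2^s` with `l ≥ 2` even and
`gcd(d, 2^(2lm)-1) = 1`, the Weil sum `S_d` takes at least four distinct values
on the nonzero elements of `GF(2^(2lm))`. -/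
theorem weil_sum_at_least_four_values (m l s d : ℕ) (hm : 1 ≤ m) (hl : 2 ≤ l)
    (hle : Even l) (hs : s ≤ 2 * m - 1)
    (hd : d = (2 ^ (2 * l * m) - 1) / (2 ^ m + 1) + 2 ^ s)
    (hgcd : Nat.gcd d (2 ^ (2 * l * m) - 1) = 1) :
    4 ≤ Set.ncard {v : ℤ | ∃ z : GaloisField 2 (2 * l * m),
      z ≠ 0 ∧ binaryWeilSum (2 * l * m) d z = v} := by
  have hn : 2 * l * m ≠ 0 := by positivity
  have hF : Fintype.card (GaloisField 2 (2 * l * m)) = 2 ^ (2 * l * m) := by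
    rw [← Nat.card_eq_fintype_card]; exact GaloisField.card 2 _ hn
  obtain ⟨M, h⟩ := setup_mk (GaloisField 2 (2 * l * m)) m l hm hl hle hF
  subst hd
  exact h.main s hs (by rw [hF]; exact hgcd)
end
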